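/- Let n ≥ 2 and let V be an irreducible Harish-Chandra 𝔏_{S,n}(B)-module with non-uniformly bounded weight spaces. Then V can be regarded as an irreducible module for 𝔏(B) = (W_n ⋉ A_n) ⊗ B or for W_n ⊗ B; regarded as such, V is a single point evaluation module, and up to a change of variables (twisting by an automorphism Φ_A of 𝔏_{S,n} coming from A ∈ GL_n(ℤ)) V ≅ L_𝔏(K, β, Z) or V ≅ L_{W_n}(K, β, Z) for a highest weight datum (K, β, Z). -/

import Mathlib

open scoped TensorProduct

noncomputable section

namespace LoopWitt

/-- The standard pairing `(u | m)` between `ℂⁿ` and `ℤⁿ`. -/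
def pairC {n : ℕ} (u : Fin n → ℂ) (m : Fin n → ℤ) : ℂ := ∑ i, u i * (m i : ℂ)

/-- The standard pairing on `ℂⁿ`. -/
def pairCC {n : ℕ} (u lam : Fin n → ℂ) : ℂ := ∑ i, u i * lam i

/-- `ℤⁿ = K ⊕ ℤβ`. -/
def IsDirectSumDecomp {n : ℕ} (K : AddSubgroup (Fin n → ℤ)) (β : Fin n → ℤ) : Prop :=
  (∀ m : Fin n → ℤ, ∃ a ∈ K, ∃ d : ℤ, m = a + d • β) ∧ ∀ d : ℤ, d • β ∈ K → d = 0

/-- `r` lies in the positive part `K + ℕ₊ β` of `ℤⁿ`. -/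
def posDeg {n : ℕ} (K : AddSubgroup (Fin n → ℤ)) (β : Fin n → ℤ) (r : Fin n → ℤ) : Prop :=
  ∃ a ∈ K, ∃ d : ℤ, 1 ≤ d ∧ r = a + d • β

/-- A representation of the loop Witt algebra `Wₙ ⊗ B`, given by operators
`D u r b` (for `D(u,r) ⊗ b`, where `D(u,r) = Σ uᵢ tʳ dᵢ`), bilinear in `u` and `b`,
subject to the Witt bracket relations. -/
structure WittRep (n : ℕ) (B : Type*) [CommRing B] [Algebra ℂ B]
    (V : Type*) [AddCommGroup V] [Module ℂ V] where
  D : (Fin n → ℂ) → (Fin n → ℤ) → B → Module.End ℂ V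
  D_add_u : ∀ u u' r b, D (u + u') r b = D u r b + D u' r b
  D_smul_u : ∀ (c : ℂ) u r b, D (c • u) r b = c • D u r b
  D_add_b : ∀ u r b b', D u r (b + b') = D u r b + D u r b'
  D_smul_b : ∀ (c : ℂ) u r b, D u r (c • b) = c • D u r b
  comm_DD : ∀ u r b v s b',
    ⁅D u r b, D v s b'⁆ = D (pairC u s • v - pairC v r • u) (r + s) (b * b')

namespace WittRep

variable {n : ℕ} {B : Type*} [CommRing B] [Algebra ℂ B]
  {V : Type*} [AddCommGroup V] [Module ℂ V]

/-- The weight space of weight `lam` with respect to the Cartan subalgebra `H = ⊕ ℂ dᵢ`. -/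
def weightSpace (ρ : WittRep n B V) (lam : Fin n → ℂ) : Submodule ℂ V where
  carrier := {x | ∀ u, ρ.D u 0 1 x = pairCC u lam • x}
  add_mem' := by
    intro a b ha hb u
    rw [map_add, ha u, hb u, smul_add]
  zero_mem' := by intro u; simp
  smul_mem' := by
    intro c a ha u
    rw [map_smul, ha u, smul_comm]

/-- A weight module: the sum of the weight spaces is everything. -/
def IsWeightModule (ρ : WittRep n B V) : Prop :=
  (⨆ lam : Fin n → ℂ, ρ.weightSpace lam) = ⊤

/-- Uniformly bounded weight spaces. -/
def UniformlyBounded (ρ : WittRep n B V) : Prop :=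
  ∃ N : ℕ, ∀ lam, Module.rank ℂ ↥(ρ.weightSpace lam) ≤ (N : Cardinal)

/-- A Harish-Chandra module: a weight module with finite dimensional weight spaces. -/
def HarishChandra (ρ : WittRep n B V) : Prop :=
  ρ.IsWeightModule ∧ ∀ lam, FiniteDimensional ℂ ↥(ρ.weightSpace lam)

/-- A submodule invariant under all the operators. -/
def Invariant (ρ : WittRep n B V) (U : Submodule ℂ V) : Prop :=
  ∀ u r b, ∀ x ∈ U, ρ.D u r b x ∈ U

/-- Irreducibility. -/
def IsIrreducible (ρ : WittRep n B V) : Prop :=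
  (∃ x : V, x ≠ 0) ∧ ∀ U : Submodule ℂ V, ρ.Invariant U → U = ⊥ ∨ U = ⊤

/-- A single point evaluation module. -/
def IsSinglePointEval (ρ : WittRep n B V) : Prop :=
  ∃ η : B →ₐ[ℂ] ℂ, ∀ u r b, ρ.D u r b = η b • ρ.D u r 1

/-- Nontriviality of the action. -/
def IsNontrivial (ρ : WittRep n B V) : Prop := ∃ u r b x, ρ.D u r b x ≠ 0

/-- `z` is a highest weight vector generating the module, with respect to the
triangular decomposition determined by `ℤⁿ = K ⊕ ℤβ`. -/
def IsHWVector (ρ : WittRep n B V) (K : AddSubgroup (Fin n → ℤ)) (β : Fin n → ℤ)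
    (z : V) : Prop :=
  z ≠ 0 ∧ (∃ lam, z ∈ ρ.weightSpace lam) ∧
  (∀ u r b, posDeg K β r → ρ.D u r b z = 0) ∧
  ∀ U : Submodule ℂ V, ρ.Invariant U → z ∈ U → U = ⊤

/-- A highest weight module. -/
def IsHighestWeight (ρ : WittRep n B V) : Prop :=
  ∃ (K : AddSubgroup (Fin n → ℤ)) (β : Fin n → ℤ),
    IsDirectSumDecomp K β ∧ ∃ z, ρ.IsHWVector K β z

end WittRep

/-- A representation of the loop extended Witt algebra `𝔏_{S,n}(B) = (Wₙ ⋉ (S ⊗ Aₙ)) ⊗ B`,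
given by operators `D u r b` (for `D(u,r) ⊗ b`) and `E s m b` (for `s ⊗ tᵐ ⊗ b`),
suitably multilinear, subject to the bracket relations of `𝔏_{S,n}(B)`. -/
structure ExtWittRep (n : ℕ) (S : Type*) [AddCommGroup S] [Module ℂ S]
    (B : Type*) [CommRing B] [Algebra ℂ B]
    (V : Type*) [AddCommGroup V] [Module ℂ V] where
  D : (Fin n → ℂ) → (Fin n → ℤ) → B → Module.End ℂ V
  E : S → (Fin n → ℤ) → B → Module.End ℂ V
  D_add_u : ∀ u u' r b, D (u + u') r b = D u r b + D u' r b
  D_smul_u : ∀ (c : ℂ) u r b, D (c • u) r b = c • D u r b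
  D_add_b : ∀ u r b b', D u r (b + b') = D u r b + D u r b'
  D_smul_b : ∀ (c : ℂ) u r b, D u r (c • b) = c • D u r b
  E_add_s : ∀ s s' m b, E (s + s') m b = E s m b + E s' m b
  E_smul_s : ∀ (c : ℂ) s m b, E (c • s) m b = c • E s m b
  E_add_b : ∀ s m b b', E s m (b + b') = E s m b + E s m b'
  E_smul_b : ∀ (c : ℂ) s m b, E s m (c • b) = c • E s m b
  comm_DD : ∀ u r b v s b',
    ⁅D u r b, D v s b'⁆ = D (pairC u s • v - pairC v r • u) (r + s) (b * b')
  comm_DE : ∀ u r b s m b', ⁅D u r b, E s m b'⁆ = pairC u m • E s (m + r) (b * b')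
  comm_EE : ∀ s m b s' m' b', ⁅E s m b, E s' m' b'⁆ = 0

namespace ExtWittRep

variable {n : ℕ} {S : Type*} [AddCommGroup S] [Module ℂ S]
  {B : Type*} [CommRing B] [Algebra ℂ B]
  {V : Type*} [AddCommGroup V] [Module ℂ V]

/-- The weight space of the weight given by `lam` on `H` and the linear functional `c`
on `S ≅ S ⊗ t⁰ (⊗ 1)`, with respect to the Cartan subalgebra `H ⊕ (S ⊗ t⁰) (⊗ 1)`. -/
def weightSpace (ρ : ExtWittRep n S B V) (lam : Fin n → ℂ) (c : S →ₗ[ℂ] ℂ) :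
    Submodule ℂ V where
  carrier := {x | (∀ u, ρ.D u 0 1 x = pairCC u lam • x) ∧ ∀ s, ρ.E s 0 1 x = c s • x}
  add_mem' := by
    intro a b ha hb
    refine ⟨fun u => ?_, fun s => ?_⟩
    · rw [map_add, ha.1 u, hb.1 u, smul_add]
    · rw [map_add, ha.2 s, hb.2 s, smul_add]
  zero_mem' := by exact ⟨fun u => by simp, fun s => by simp⟩
  smul_mem' := by
    intro t a ha
    refine ⟨fun u => ?_, fun s => ?_⟩
    · rw [map_smul, ha.1 u, smul_comm]
    · rw [map_smul, ha.2 s, smul_comm]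

/-- A weight module: the weight spaces span. -/
def IsWeightModule (ρ : ExtWittRep n S B V) : Prop :=
  (⨆ p : (Fin n → ℂ) × (S →ₗ[ℂ] ℂ), ρ.weightSpace p.1 p.2) = ⊤

/-- Uniformly bounded weight spaces. -/
def UniformlyBounded (ρ : ExtWittRep n S B V) : Prop :=
  ∃ N : ℕ, ∀ lam c, Module.rank ℂ ↥(ρ.weightSpace lam c) ≤ (N : Cardinal)

/-- Harish-Chandra: a weight module with finite dimensional weight spaces. -/
def HarishChandra (ρ : ExtWittRep n S B V) : Prop :=
  ρ.IsWeightModule ∧ ∀ lam c, FiniteDimensional ℂ ↥(ρ.weightSpace lam c)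

/-- Invariant submodule. -/
def Invariant (ρ : ExtWittRep n S B V) (U : Submodule ℂ V) : Prop :=
  (∀ u r b, ∀ x ∈ U, ρ.D u r b x ∈ U) ∧ (∀ s m b, ∀ x ∈ U, ρ.E s m b x ∈ U)

/-- Irreducibility. -/
def IsIrreducible (ρ : ExtWittRep n S B V) : Prop :=
  (∃ x : V, x ≠ 0) ∧ ∀ U : Submodule ℂ V, ρ.Invariant U → U = ⊥ ∨ U = ⊤

/-- A single point evaluation module. -/
def IsSinglePointEval (ρ : ExtWittRep n S B V) : Prop :=
  ∃ η : B →ₐ[ℂ] ℂ, (∀ u r b, ρ.D u r b = η b • ρ.D u r 1) ∧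
    ∀ s m b, ρ.E s m b = η b • ρ.E s m 1

/-- Single point generalised evaluation module: the action factors through
`𝔤 ⊗ B/𝔪ᵏ` for some maximal ideal `𝔪` and some `k`. -/
def IsGenEval (ρ : ExtWittRep n S B V) : Prop :=
  ∃ 𝔪 : Ideal B, 𝔪.IsMaximal ∧ ∃ k : ℕ, ∀ b ∈ 𝔪 ^ k,
    (∀ u r, ρ.D u r b = 0) ∧ ∀ s m, ρ.E s m b = 0

/-- Nontriviality of the action. -/
def IsNontrivial (ρ : ExtWittRep n S B V) : Prop :=
  (∃ u r b x, ρ.D u r b x ≠ 0) ∨ ∃ s m b x, ρ.E s m b x ≠ 0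

/-- The submodule of vectors on which the whole Lie algebra acts trivially. -/
def trivVectors (ρ : ExtWittRep n S B V) : Submodule ℂ V where
  carrier := {x | (∀ u r b, ρ.D u r b x = 0) ∧ ∀ s m b, ρ.E s m b x = 0}
  add_mem' := by
    intro a b ha hb
    exact ⟨fun u r c => by rw [map_add, ha.1 u r c, hb.1 u r c, add_zero],
      fun s m c => by rw [map_add, ha.2 s m c, hb.2 s m c, add_zero]⟩
  zero_mem' := ⟨fun u r c => by simp, fun s m c => by simp⟩
  smul_mem' := by
    intro t a ha
    exact ⟨fun u r c => by rw [map_smul, ha.1 u r c, smul_zero],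
      fun s m c => by rw [map_smul, ha.2 s m c, smul_zero]⟩

/-- Highest weight vector for the triangular decomposition determined by `ℤⁿ = K ⊕ ℤβ`,
generating the whole module. -/
def IsHWVector (ρ : ExtWittRep n S B V) (K : AddSubgroup (Fin n → ℤ)) (β : Fin n → ℤ)
    (z : V) : Prop :=
  z ≠ 0 ∧ (∃ lam c, z ∈ ρ.weightSpace lam c) ∧
  (∀ u r b, posDeg K β r → ρ.D u r b z = 0) ∧
  (∀ s m b, posDeg K β m → ρ.E s m b z = 0) ∧
  ∀ U : Submodule ℂ V, ρ.Invariant U → z ∈ U → U = ⊤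

/-- Highest weight module. -/
def IsHighestWeight (ρ : ExtWittRep n S B V) : Prop :=
  ∃ (K : AddSubgroup (Fin n → ℤ)) (β : Fin n → ℤ),
    IsDirectSumDecomp K β ∧ ∃ z, ρ.IsHWVector K β z

/-- Invariance under the degree-`K` part `(𝔏_{S,n}(B))_K`. -/
def InvariantK (ρ : ExtWittRep n S B V) (K : AddSubgroup (Fin n → ℤ))
    (U : Submodule ℂ V) : Prop :=
  (∀ u, ∀ r ∈ K, ∀ b, ∀ x ∈ U, ρ.D u r b x ∈ U) ∧
    ∀ s, ∀ m ∈ K, ∀ b, ∀ x ∈ U, ρ.E s m b x ∈ U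

/-- The highest weight space: the `(𝔏_{S,n}(B))_K`-submodule generated by `z`. -/
def hwSpace (ρ : ExtWittRep n S B V) (K : AddSubgroup (Fin n → ℤ)) (z : V) :
    Submodule ℂ V :=
  sInf {U : Submodule ℂ V | z ∈ U ∧ ρ.InvariantK K U}

end ExtWittRep

end LoopWitt

open LoopWitt

/-!
Large weight multiplicities force, by counting dimensions, a nonzero vector killed in finitely many
degrees generating `ℤⁿ`, hence a direction `k` such that every vector is killed in the degrees
`j • k + s` with `j` large. The directions with this property are the positive elements of a total
preorder on `ℤⁿ`. It has a least positive element, since otherwise long weight strings would force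
all directions to be parallel; so it is given by a homomorphism `deg : ℤⁿ → ℤ`, and `V` is a
highest weight module for `deg`.

On the top level, the vanishing of an operator can be tested on finitely many operators, by pairing
it with operators of opposite degree. Hence the ideal of the coefficients in `B` acting by zero has
finite codimension, and ideals of coefficients acting by commuting nilpotent operators act by zero.
The quotient of `B` is therefore reduced and has only trivial idempotents, so it is `ℂ`; likewise
the elements of `S` of weight zero act by zero. Irreducibility carries both facts from the top level
to `V`.
-/

namespace LoopWitt

open Module Filter

section NaturalNumbers

lemma exists_last_of_eventually_not {Q : ℕ → Prop} (h : ∀ᶠ i in atTop, ¬ Q i) {p : ℕ} (hp : Q p) :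
    ∃ m ≥ p, Q m ∧ ∀ i > m, ¬ Q i := by
  obtain ⟨N, hN⟩ := eventually_atTop.1 h
  have hbdd : BddAbove {i | Q i} := ⟨N, fun i hi => not_lt.1 fun h => hN i h.le hi⟩
  exact ⟨_, le_csSup hbdd hp, Nat.sSup_mem ⟨p, hp⟩ hbdd,
    fun i hi h => (le_csSup hbdd h).not_gt hi⟩

lemma eventually_of_add_of_succ {Q : ℕ → Prop} (hadd : ∀ i j, i ≠ j → Q i → Q j → Q (i + j))
    {a : ℕ} (ha : 1 ≤ a) (h₀ : Q a) (h₁ : Q (a + 1)) : ∀ᶠ i in atTop, Q i := by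
  have interval : ∀ i t : ℕ, 1 ≤ t → t ≤ i + 1 → Q ((i + 2) * a + t) := by
    intro i
    induction i with
    | zero =>
      intro t ht ht'
      obtain rfl : t = 1 := by omega
      convert hadd a (a + 1) (by omega) h₀ h₁ using 1
      ring
    | succ i ih =>
      intro t ht ht'
      have hmul : (i + 2) * a = (i + 1) * a + a := by ring
      have hia : a ≤ (i + 1) * a := Nat.le_mul_of_pos_left a (by omega)
      by_cases h : t ≤ i + 1
      · convert hadd _ a (by omega) (ih t ht h) h₀ using 1
        ring
      · obtain rfl : t = i + 2 := by omega
        convert hadd _ (a + 1) (by omega) (ih (i + 1) (by omega) le_rfl) h₁ using 1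
        ring
  filter_upwards [eventually_ge_atTop ((a + 1) * a + 1)] with j hj
  have hquot : a + 1 ≤ (j - 1) / a := (Nat.le_div_iff_mul_le ha).2 (by omega)
  have hmod := Nat.mod_lt (j - 1) ha
  have hdiv := Nat.div_add_mod' (j - 1) a
  convert interval ((j - 1) / a - 2) ((j - 1) % a + 1) (by omega) (by omega) using 1
  rw [Nat.sub_add_cancel (by omega)]
  omega

end NaturalNumbers

section LinearAlgebra

variable {ι K V W : Type*} [Field K] [AddCommGroup V] [Module K V] [AddCommGroup W] [Module K W]

lemma linearIndependent_of_triangular [Finite ι] [LinearOrder ι]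
    (y : ι → V) (T : ι → V →ₗ[K] W) (hdiag : ∀ l, T l (y l) ≠ 0)
    (hlt : ∀ i l, i < l → T l (y i) = 0) : LinearIndependent K y := by
  classical
  have := Fintype.ofFinite ι
  rw [Fintype.linearIndependent_iff]
  intro c hc
  by_contra! h
  obtain ⟨i₀, hi₀⟩ := h
  obtain ⟨l, hl, hmax⟩ := (Finset.univ.filter fun i => c i ≠ 0).exists_maximal ⟨i₀, by simpa⟩
  have hT : T l (∑ i, c i • y i) = c l • T l (y l) := by
    rw [map_sum, Finset.sum_eq_single l, map_smul]
    · intro i _ hil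
      rw [map_smul]
      rcases hil.lt_or_gt with hil | hli
      · rw [hlt i l hil, smul_zero]
      · have hci : c i = 0 := by
          by_contra hci
          exact (hmax (by simpa using hci) hli.le).not_gt hli
        rw [hci, zero_smul]
    · simp
  rw [hc, map_zero, eq_comm, smul_eq_zero] at hT
  exact hT.elim (Finset.mem_filter.1 hl).2 (hdiag l)

lemma card_le_finrank_of_triangular [Fintype ι] [LinearOrder ι]
    (U : Submodule K V) [FiniteDimensional K U] (y : ι → V) (hy : ∀ i, y i ∈ U)
    (T : ι → V →ₗ[K] W) (hdiag : ∀ l, T l (y l) ≠ 0) (hlt : ∀ i l, i < l → T l (y i) = 0) :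
    Fintype.card ι ≤ finrank K U := by
  have hli : LinearIndependent K (fun i => (⟨y i, hy i⟩ : U)) :=
    .of_comp U.subtype (linearIndependent_of_triangular y T hdiag hlt)
  exact hli.fintype_card_le_finrank

lemma exists_ne_zero_forall_map_eq_zero [Fintype ι]
    (U : Submodule K V) [FiniteDimensional K U]
    (U' : ι → Submodule K W) [∀ i, FiniteDimensional K (U' i)] (f : ι → V →ₗ[K] W)
    (hf : ∀ i, ∀ v ∈ U, f i v ∈ U' i) (hlt : ∑ i, finrank K (U' i) < finrank K U) :
    ∃ v ∈ U, v ≠ 0 ∧ ∀ i, f i v = 0 := by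
  let F : U →ₗ[K] (∀ i, U' i) := LinearMap.pi fun i => (f i).restrict (hf i)
  have hker : LinearMap.ker F ≠ ⊥ := LinearMap.ker_ne_bot_of_finrank_lt (by
    rwa [Module.finrank_pi_fintype])
  obtain ⟨v, hv, hv0⟩ := Submodule.exists_mem_ne_zero_of_ne_bot hker
  refine ⟨v, v.2, by simpa using hv0, fun i => ?_⟩
  simpa [F, Subtype.ext_iff] using congrFun (LinearMap.mem_ker.1 hv) i

lemma exists_finset_separating (U : Submodule K V) [FiniteDimensional K U] (f : ι → V →ₗ[K] W)
    (hf : ∀ v ∈ U, (∀ i, f i v = 0) → v = 0) :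
    ∃ T : Finset ι, ∀ v ∈ U, (∀ i ∈ T, f i v = 0) → v = 0 := by
  classical
  let g : Finset ι → Submodule K U := fun T => ⨅ i ∈ T, LinearMap.ker (f i ∘ₗ U.subtype)
  have hmem : ∀ T (v : U), v ∈ g T ↔ ∀ i ∈ T, f i v = 0 := fun T v => by
    simp [g, Submodule.mem_iInf]
  obtain ⟨_, ⟨T, rfl⟩, hmin⟩ := IsArtinian.set_has_minimal (Set.range g) ⟨_, ∅, rfl⟩
  refine ⟨T, fun v hv hT => hf v hv fun i => ?_⟩
  have hle : g (insert i T) ≤ g T := biInf_mono fun j hj => Finset.mem_insert_of_mem hj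
  have hv' : (⟨v, hv⟩ : U) ∈ g (insert i T) :=
    hle.eq_of_not_lt (hmin _ ⟨_, rfl⟩) ▸ (hmem T ⟨v, hv⟩).2 hT
  exact (hmem _ _).1 hv' i (Finset.mem_insert_self _ _)

lemma aeval_comp_eq_comp_aeval {h : Module.End K V} {h' : Module.End K W} {D : W →ₗ[K] V}
    (H : h ∘ₗ D = D ∘ₗ h') (p : Polynomial K) :
    Polynomial.aeval h p ∘ₗ D = D ∘ₗ Polynomial.aeval h' p := by
  induction p using Polynomial.induction_on' with
  | add p q hp hq => simp [LinearMap.add_comp, LinearMap.comp_add, hp, hq]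
  | monomial m a =>
    simp only [Polynomial.aeval_monomial, Algebra.algebraMap_eq_smul_one, smul_one_mul,
      LinearMap.smul_comp, LinearMap.comp_smul, Module.End.commute_pow_left_of_commute H]

lemma exists_finset_eq_zero_of_shift [IsAlgClosed K] {h : Module.End K V} (hh : IsAlgebraic K h) :
    ∃ Z : Finset K, ∀ c ∉ Z, ∀ D : Module.End K V, h * D = D * (h + c • 1) → D = 0 := by
  classical
  obtain ⟨p, hp, hhp⟩ := hh
  refine ⟨(p.roots.toFinset ×ˢ p.roots.toFinset).image fun a => a.1 - a.2, fun c hc D hD => ?_⟩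
  let q := p.comp (Polynomial.X + Polynomial.C c)
  have hcoprime : IsCoprime p q := by
    rw [Polynomial.isCoprime_iff_aeval_ne_zero_of_isAlgClosed K K]
    intro a
    by_contra! ha
    simp only [q, Polynomial.coe_aeval_eq_eval, Polynomial.eval_comp, Polynomial.eval_add,
      Polynomial.eval_X, Polynomial.eval_C] at ha
    exact hc (Finset.mem_image.2 ⟨(a + c, a), by simp [hp, ha], by simp⟩)
  have hq : D * Polynomial.aeval h q = 0 := by
    have h₁ := aeval_comp_eq_comp_aeval (D := D) hD p
    rw [hhp, LinearMap.zero_comp] at h₁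
    simp [q, Polynomial.aeval_comp, Algebra.algebraMap_eq_smul_one, Module.End.mul_eq_comp, ← h₁]
  obtain ⟨a, b, hab⟩ := hcoprime
  calc D = D * Polynomial.aeval h (q * b + a * p) := by
        rw [mul_comm q, add_comm, hab, map_one, mul_one]
    _ = 0 := by rw [map_add, map_mul, map_mul, hhp, mul_zero, add_zero, ← mul_assoc, hq, zero_mul]

lemma le_genEigenspace_of_finrank_le {f : Module.End K V} {μ : K} {U : Submodule K V}
    [FiniteDimensional K U] (hU : ∀ v ∈ U, f v ∈ U) (hμ : U ≤ f.maxGenEigenspace μ) {N : ℕ}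
    (hN : finrank K U ≤ N) : U ≤ f.genEigenspace μ N := fun v hv => by
  have hmem : (⟨v, hv⟩ : U) ∈ Module.End.genEigenspace (f.restrict hU) μ ⊤ := by
    rw [Module.End.genEigenspace_restrict]
    exact hμ hv
  have hmem' := Module.End.genEigenspace_le_genEigenspace_finrank (f.restrict hU) μ ⊤ hmem
  rw [Module.End.genEigenspace_restrict] at hmem'
  exact (f.genEigenspace μ).monotone (by exact_mod_cast hN) hmem'

end LinearAlgebra

section HeisenbergRelations

variable {K V : Type*} [Field K] [AddCommGroup V] [Module K V] {J T : ℤ → Module.End K V} {v : V}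

lemma raise_lower_lower (hJJ : ∀ i j, Commute (J i) (J j))
    (hTJ : ∀ i j w, T i (J j w) = J j (T i w) + (j : K) • J (i + j) w)
    (hJv : ∀ i, 1 ≤ i → J i v = 0) (hTv : ∀ i, 1 ≤ i → T i v = 0) {b c i : ℤ} (hi : 1 ≤ i)
    (hb : b < i) : T i (J (-b) (J (-c) v)) = (-c : K) • J (-b) (J (i - c) v) := by
  have hkill : J (i + -b) (J (-c) v) = 0 := by
    rw [← Module.End.mul_apply, hJJ, Module.End.mul_apply, hJv _ (by omega), map_zero]
  rw [hTJ, hTJ i (-c) v, hTv i hi, hkill, map_zero, zero_add, smul_zero, add_zero, map_smul,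
    sub_eq_add_neg, Int.cast_neg]

lemma le_finrank_of_heisenberg [CharZero K] (hJJ : ∀ i j, Commute (J i) (J j))
    (hTJ : ∀ i j w, T i (J j w) = J j (T i w) + (j : K) • J (i + j) w)
    (hJv : ∀ i, 1 ≤ i → J i v = 0) (hTv : ∀ i, 1 ≤ i → T i v = 0) {c : K} (hc : c ≠ 0)
    (hJ0 : J 0 v = c • v) (hv : v ≠ 0) {U : Submodule K V} [FiniteDimensional K U] {p : ℤ}
    (hU : ∀ i, J (-i) (J (-(p - i)) v) ∈ U) {M : ℕ} (hM : 2 * M < p) : M ≤ finrank K U := by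
  let d : Fin M → ℤ := fun i => M - i
  have hd : ∀ i, 1 ≤ d i ∧ d i ≤ M := fun i => by
    have := i.2
    simp only [d]
    omega
  have hraise : ∀ i l, T (p - d l) (J (-d i) (J (-(p - d i)) v)) =
      (-((p - d i : ℤ) : K)) • J (-d i) (J (d i - d l) v) := fun i l => by
    have := hd i
    have := hd l
    rw [raise_lower_lower hJJ hTJ hJv hTv (by omega) (by omega)]
    congr 4
    ring
  have hcard := card_le_finrank_of_triangular U (fun i => J (-d i) (J (-(p - d i)) v))
    (fun i => hU (d i)) (fun l => T (d l) ∘ₗ T (p - d l))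
    (fun l => by
      have := hd l
      rw [LinearMap.comp_apply, hraise, sub_self, hJ0, map_smul, map_smul, map_smul, hTJ,
        hTv _ (by omega), map_zero, zero_add, add_neg_cancel, hJ0, smul_smul, smul_smul, smul_smul]
      have hp : ((p - d l : ℤ) : K) ≠ 0 := Int.cast_ne_zero.2 (by omega)
      have hdl : ((-d l : ℤ) : K) ≠ 0 := Int.cast_ne_zero.2 (by omega)
      exact smul_ne_zero (by simp only [ne_eq, mul_eq_zero, neg_eq_zero, hp, hdl, hc, or_self,
        not_false_eq_true]) hv)
    (fun i l hil => by
      have hlt : d l < d i := by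
        simp only [d]
        omega
      rw [LinearMap.comp_apply, hraise, hJv _ (by omega), map_zero, smul_zero, map_zero])
  simpa using hcard

end HeisenbergRelations

section CommutativeAlgebra

lemma exists_finset_forall_mem_span_pow (R A : Type*) [CommSemiring R] [CommSemiring A]
    [Algebra R A] [Algebra.FiniteType R A] :
    ∃ s : Finset A, 1 ≤ Submodule.span R (s : Set A) ∧
      ∀ a : A, ∃ t : ℕ, a ∈ Submodule.span R (s : Set A) ^ t := by
  classical
  obtain ⟨s, hs⟩ := (Algebra.FiniteType.out : (⊤ : Subalgebra R A).FG)
  have hone : (1 : Submodule R A) ≤ Submodule.span R ((insert 1 s : Finset A) : Set A) :=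
    Submodule.one_le.2 (Submodule.subset_span (by simp))
  refine ⟨insert 1 s, hone, fun a => ?_⟩
  have ha : a ∈ Algebra.adjoin R (s : Set A) := hs ▸ Algebra.mem_top
  induction ha using Algebra.adjoin_induction with
  | mem x hx => exact ⟨1, by rw [pow_one]; exact Submodule.subset_span (by simp_all)⟩
  | algebraMap c => exact ⟨0, by rw [pow_zero]; exact Submodule.algebraMap_mem c⟩
  | add x y _ _ hx hy =>
    obtain ⟨t, ht⟩ := hx
    obtain ⟨u, hu⟩ := hy
    exact ⟨max t u, add_mem (pow_le_pow_right' hone (le_max_left _ _) ht)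
      (pow_le_pow_right' hone (le_max_right _ _) hu)⟩
  | mul x y _ _ hx hy =>
    obtain ⟨t, ht⟩ := hx
    obtain ⟨u, hu⟩ := hy
    exact ⟨t + u, by rw [pow_add]; exact Submodule.mul_mem_mul ht hu⟩

lemma exists_algHom_injective_of_isReduced (K : Type*) {A : Type*} [Field K] [IsAlgClosed K]
    [CommRing A] [Algebra K A] [Nontrivial A] [FiniteDimensional K A] [IsReduced A]
    (hidem : ∀ e : A, IsIdempotentElem e → e = 0 ∨ e = 1) :
    ∃ η : A →ₐ[K] K, Function.Injective η := by
  have : IsArtinianRing A := IsArtinianRing.of_finite K A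
  have : IsSemisimpleRing A := IsArtinianRing.isSemisimpleRing_of_isReduced A
  have hunit : ∀ a : A, a = 0 ∨ IsUnit a := by
    intro a
    obtain ⟨e, he, hspan⟩ := IsSemisimpleRing.ideal_eq_span_idempotent (Ideal.span {a})
    rcases hidem e he with rfl | rfl
    · exact .inl (by simpa using hspan)
    · exact .inr (by simpa using hspan)
  have : NoZeroDivisors A := ⟨fun {a b} hab =>
    (hunit a).imp_right fun ha => ha.mul_right_eq_zero.1 hab⟩
  have : IsDomain A := NoZeroDivisors.to_isDomain A
  let e : K ≃ₐ[K] A := AlgEquiv.ofBijective (Algebra.ofId K A)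
    IsAlgClosed.algebraMap_bijective_of_isIntegral
  exact ⟨e.symm, e.symm.injective⟩

end CommutativeAlgebra

section Nilpotent

lemma isNilpotent_smul_iff {K R : Type*} [Field K] [Ring R] [Algebra K R] {c : K} (hc : c ≠ 0)
    {x : R} : IsNilpotent (c • x) ↔ IsNilpotent x :=
  ⟨fun h => by simpa [smul_smul, hc] using h.smul c⁻¹, fun h => h.smul c⟩

lemma mul_pow_succ_of_bracket {R : Type*} [Ring R] {o x d : R} (hxd : Commute x d)
    (hox : o * x = x * o + d) (a : ℕ) :
    o * x ^ (a + 1) = x ^ (a + 1) * o + (a + 1 : ℕ) • (x ^ a * d) := by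
  induction a with
  | zero => simpa using hox
  | succ a ih =>
    calc o * x ^ (a + 1 + 1) = x ^ (a + 1) * (o * x) + (a + 1) • (x ^ a * (d * x)) := by
          rw [pow_succ x (a + 1), ← mul_assoc, ih, add_mul, mul_assoc, smul_mul_assoc, mul_assoc]
      _ = x ^ (a + 1 + 1) * o + (x ^ (a + 1) * d + (a + 1) • (x ^ (a + 1) * d)) := by
          rw [hox, ← hxd.eq, mul_add, ← mul_assoc, ← mul_assoc, ← pow_succ, ← pow_succ, add_assoc]
      _ = x ^ (a + 1 + 1) * o + (a + 1 + 1) • (x ^ (a + 1) * d) := by rw [succ_nsmul' _ (a + 1)]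

lemma pow_mul_pow_eq_zero_of_bracket {R : Type*} [Ring R] [IsAddTorsionFree R] {o x d d' : R}
    (hxd : Commute x d) (hdd' : Commute d d') (hox : o * x = x * o + d)
    (hod : o * d = d * o + d') {a l : ℕ} (h : x ^ (a + 1) * d ^ (l + 1) = 0) :
    x ^ a * d ^ (l + 3) = 0 := by
  have hbracket : o * (x ^ (a + 1) * d ^ (l + 1)) = x ^ (a + 1) * d ^ (l + 1) * o +
      (a + 1) • (x ^ a * d ^ (l + 2)) + (l + 1) • (x ^ (a + 1) * d ^ l * d') := by
    rw [← mul_assoc, mul_pow_succ_of_bracket hxd hox, add_mul, mul_assoc _ o,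
      mul_pow_succ_of_bracket hdd' hod, mul_add, smul_mul_assoc, mul_smul_comm, mul_assoc _ d,
      ← pow_succ', ← mul_assoc, ← mul_assoc]
    abel
  have hlast : d * (x ^ (a + 1) * d ^ l * d') = 0 := by
    rw [← mul_assoc, ← mul_assoc, ← (hxd.pow_left (a + 1)).eq, mul_assoc _ d, ← pow_succ', h,
      zero_mul]
  have hmid : d * (x ^ a * d ^ (l + 2)) = x ^ a * d ^ (l + 3) := by
    rw [← mul_assoc, ← (hxd.pow_left a).eq, mul_assoc, ← pow_succ']
  rw [h, mul_zero, zero_mul, zero_add] at hbracket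
  replace hbracket := congrArg (d * ·) hbracket
  simp only [mul_zero, mul_add, mul_smul_comm, hlast, hmid, smul_zero, add_zero] at hbracket
  exact (nsmul_eq_zero_iff_right a.succ_ne_zero).1 hbracket.symm

lemma isNilpotent_of_bracket {R : Type*} [Ring R] [IsAddTorsionFree R] {o x d d' : R}
    (hxd : Commute x d) (hdd' : Commute d d') (hox : o * x = x * o + d)
    (hod : o * d = d * o + d') (hx : IsNilpotent x) : IsNilpotent d := by
  have descend : ∀ a l, x ^ a * d ^ (l + 1) = 0 → IsNilpotent d := by
    intro a
    induction a with
    | zero => exact fun l h => ⟨l + 1, by simpa using h⟩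
    | succ a ih =>
      exact fun l h => ih (l + 2) (pow_mul_pow_eq_zero_of_bracket hxd hdd' hox hod h)
  obtain ⟨a, ha⟩ := hx
  exact descend a 0 (by rw [ha, zero_mul])

lemma zero_mem_of_forall_exists_nilpotent_apply_mem {K V : Type*} [CommRing K] [AddCommGroup V]
    [Module K V] {F : Set (Module.End K V)} (hF : F.Finite)
    (hcomm : ∀ f ∈ F, ∀ g ∈ F, f * g = g * f) (hnil : ∀ f ∈ F, IsNilpotent f) {Q : Set V}
    (hQne : Q.Nonempty) (hQ : ∀ z ∈ Q, ∃ f ∈ F, f z ∈ Q) : (0 : V) ∈ Q := by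
  obtain ⟨z, hz⟩ := hQne
  let R := Algebra.adjoin K F
  have hR : IsMulCommutative R := Algebra.isMulCommutative_adjoin K hcomm
  let : CommRing R := { (inferInstance : Ring R) with mul_comm := hR.is_comm.comm }
  let F' : Set R := Subtype.val ⁻¹' F
  have hspan : IsNilpotent (Ideal.span F') := by
    rw [Ideal.FG.isNilpotent_iff_le_nilradical
      ⟨(hF.preimage Subtype.val_injective.injOn).toFinset, by simp [F']⟩, Ideal.span_le]
    intro f hf
    obtain ⟨m, hm⟩ := hnil f.1 hf
    exact ⟨m, Subtype.ext hm⟩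
  have chain : ∀ m : ℕ, ∃ j ∈ Ideal.span F' ^ m, j.1 z ∈ Q := by
    intro m
    induction m with
    | zero => exact ⟨1, by simp, by simpa using hz⟩
    | succ m ih =>
      obtain ⟨j, hj, hjQ⟩ := ih
      obtain ⟨f, hf, hfQ⟩ := hQ _ hjQ
      refine ⟨⟨f, Algebra.subset_adjoin hf⟩ * j, ?_, by simpa using hfQ⟩
      rw [pow_succ']
      exact Ideal.mul_mem_mul (Ideal.subset_span hf) hj
  obtain ⟨m, hm⟩ := hspan
  obtain ⟨j, hj, hjQ⟩ := chain m
  obtain rfl : j = 0 := by simpa [hm] using hj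
  simpa using hjQ

end Nilpotent

section TorsionFree

variable {G : Type*} [AddCommGroup G] [IsAddTorsionFree G]

lemma eventually_nsmul_ne {a : G} (ha : a ≠ 0) (s : G) :
    ∀ᶠ j : ℕ in atTop, j • a ≠ s := by
  have hinj : Function.Injective fun j : ℕ => j • a :=
    injective_nsmul_iff_not_isOfFinAddOrder.2 (not_isOfFinAddOrder_of_isAddTorsionFree ha)
  rw [← Nat.cofinite_eq_atTop]
  exact hinj.tendsto_cofinite.eventually (Set.finite_singleton s).compl_mem_cofinite

lemma exists_notMem_zmultiples_ne_sub (hG : ¬ IsAddCyclic G) {k : G}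
    (hk : k ≠ 0) (t : G) : ∃ e ∉ AddSubgroup.zmultiples k, e ≠ t - e := by
  obtain ⟨e, he⟩ : ∃ e, e ∉ AddSubgroup.zmultiples k := by
    by_contra! h
    exact hG ⟨k, h⟩
  by_cases hte : e = t - e
  · refine ⟨e + k, fun h => he ?_, fun h => hk ?_⟩
    · exact (AddSubgroup.add_mem_cancel_right _ (AddSubgroup.mem_zmultiples k)).1 h
    · have h2 : 2 • k = 0 := by
        rw [eq_sub_iff_add_eq] at h hte
        rw [← sub_eq_zero.2 (h.trans hte.symm)]
        abel
      exact (nsmul_eq_zero_iff_right two_ne_zero).1 h2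
  · exact ⟨e, he, hte⟩

end TorsionFree

section DistinctSums

-- By `hθ` a partial sum is `θ`-larger than any further summand, hence distinct from it.
lemma sum_map_of_add_of_ne {H ι : Type*} [AddCommGroup H] {Q : ℕ → H → Prop}
    (hadd : ∀ {s t g h}, g ≠ h → Q s g → Q t h → Q (s + t) (g + h)) {a : ι → H}
    (ha : ∀ f, Q 1 (a f)) {θ : H →+ ℤ} (hθ : ∀ f f' f'', θ (a f) < θ (a f') + θ (a f''))
    {f₀ f₁ : ι} (hne : a f₀ ≠ a f₁) (s : Multiset ι) :
    Q (s.card + 2) ((s.map a).sum + (a f₀ + a f₁)) := by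
  have hpos : ∀ f, 0 < θ (a f) := fun f => by linarith [hθ f f f]
  have hsum : ∀ s : Multiset ι, 0 ≤ θ (s.map a).sum := fun s => by
    rw [map_multiset_sum, Multiset.map_map]
    refine Multiset.sum_nonneg fun _ h => ?_
    obtain ⟨f, -, rfl⟩ := Multiset.mem_map.1 h
    exact (hpos f).le
  induction s using Multiset.induction_on with
  | empty => simpa using hadd hne (ha f₀) (ha f₁)
  | cons f s ih =>
    have hf : a f ≠ (s.map a).sum + (a f₀ + a f₁) := fun h => by
      have := congrArg θ h
      rw [map_add, map_add] at this
      linarith [hsum s, hθ f f₀ f₁]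
    convert hadd hf (ha f) ih using 1
    · rw [Multiset.card_cons]; ring
    · rw [Multiset.map_cons, Multiset.sum_cons, add_assoc]

lemma sum_map_sum_replicate {H ι : Type*} [AddCommMonoid H] (F : Finset ι) (c : ι → ℕ)
    (a : ι → H) :
    ((∑ f ∈ F, Multiset.replicate (c f) f).map a).sum = ∑ f ∈ F, c f • a f := by
  classical
  induction F using Finset.induction_on with
  | empty => simp
  | insert f F hf ih => simp [Finset.sum_insert hf, ih]

end DistinctSums

section Degree

variable {G : Type*} [AddCommGroup G] {Pos : G → Prop} {β : G}

lemma exists_zsmul_not_pos (hadd : ∀ {k l}, Pos k → Pos l → Pos (k + l)) (hzero : ¬ Pos 0)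
    (hzsmul : ∀ d : ℤ, 1 ≤ d → Pos (d • β)) (hmin : ∀ k, Pos k → ¬ Pos (β - k))
    (harch : ∀ s, ∃ m : ℕ, Pos (m • β - s)) (k : G) :
    ∃ d : ℤ, ¬ Pos (k - d • β) ∧ ¬ Pos (d • β - k) := by
  obtain ⟨m, hm⟩ := harch k
  obtain ⟨m', hm'⟩ := harch (-k)
  have hbdd : ∀ d : ℤ, ¬ Pos (d • β - k) → d ≤ m := by
    intro d hd
    by_contra! h
    have hsum : d • β - k = m • β - k + (d - m) • β := by module
    exact hd (hsum ▸ hadd hm (hzsmul _ (by omega)))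
  have hne : ¬ Pos ((-m' : ℤ) • β - k) := fun h => hzero (by
    convert hadd h hm' using 1
    module)
  obtain ⟨d, hd, hmax⟩ := Int.exists_greatest_of_bdd ⟨m, hbdd⟩ ⟨-m', hne⟩
  refine ⟨d, fun h => ?_, hd⟩
  have hsub : (d + 1) • β - k = β - (k - d • β) := by module
  have := hmax (d + 1) (hsub ▸ hmin _ h)
  omega

lemma pos_zsmul (hadd : ∀ {k l}, Pos k → Pos l → Pos (k + l)) (hβ : Pos β) {d : ℤ} (hd : 1 ≤ d) :
    Pos (d • β) := by
  induction d, hd using Int.leInduction with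
  | base => simpa using hβ
  | succ d _ ih => simpa [add_smul] using hadd ih hβ

lemma le_of_not_pos_sub_zsmul (hnadd : ∀ {k l}, ¬ Pos k → ¬ Pos l → ¬ Pos (k + l))
    (hzsmul : ∀ d : ℤ, 1 ≤ d → Pos (d • β)) {k : G} {d e : ℤ} (hd : ¬ Pos (k - d • β))
    (he : ¬ Pos (e • β - k)) : e ≤ d := by
  by_contra! hlt
  have hsum : k - d • β + (e • β - k) = (e - d) • β := by module
  exact hnadd hd he (hsum ▸ hzsmul (e - d) (by omega))

lemma exists_degree_of_isLeast_pos (hadd : ∀ {k l}, Pos k → Pos l → Pos (k + l))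
    (hnadd : ∀ {k l}, ¬ Pos k → ¬ Pos l → ¬ Pos (k + l)) (hzero : ¬ Pos 0)
    (hβ : Pos β) (hmin : ∀ k, Pos k → ¬ Pos (β - k)) (harch : ∀ s, ∃ m : ℕ, Pos (m • β - s)) :
    ∃ deg : G →+ ℤ, deg β = 1 ∧ ∀ k, 1 ≤ deg k → Pos k := by
  have hzsmul : ∀ d : ℤ, 1 ≤ d → Pos (d • β) := fun d hd => pos_zsmul hadd hβ hd
  choose dg hdg hdg' using exists_zsmul_not_pos hadd hzero hzsmul hmin harch
  have huniq : ∀ (k : G) (d : ℤ), ¬ Pos (k - d • β) → ¬ Pos (d • β - k) → dg k = d :=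
    fun k d h h' => le_antisymm (le_of_not_pos_sub_zsmul hnadd hzsmul h (hdg' k))
      (le_of_not_pos_sub_zsmul hnadd hzsmul (hdg k) h')
  let deg : G →+ ℤ := AddMonoidHom.mk' dg fun k l => huniq _ _
    (by convert hnadd (hdg k) (hdg l) using 2; module)
    (by convert hnadd (hdg' k) (hdg' l) using 2; module)
  refine ⟨deg, huniq β 1 (by simpa) (by simpa), fun k hk => ?_⟩
  by_contra h
  refine hnadd h (hdg' k) ?_
  rw [add_sub_cancel]
  exact hzsmul (dg k) hk

end Degree

section LoopAlgebra

variable {G P B V : Type*} [AddCommGroup G] [AddCommGroup P] [Module ℂ P]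
  [CommRing B] [Algebra ℂ B] [AddCommGroup V] [Module ℂ V]

/-- A `V`-valued representation of the loop algebra spanned by elements `r ⊗ p ⊗ b` with `r ∈ G`,
`p ∈ P`, `b ∈ B` and bracket
`[r ⊗ p ⊗ b, m ⊗ q ⊗ b'] = (r + m) ⊗ (pg m p • q - pg r q • p) ⊗ (b * b')`.
For `G = ℤⁿ`, `P = ℂⁿ × S` this is `(Wₙ ⋉ (S ⊗ Aₙ)) ⊗ B`, with `D(u, r)` and `s ⊗ tʳ` treated
uniformly; allowing an abstract `G` makes the arguments independent of a choice of coordinates. -/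
structure LoopRep (pg : G →+ (P →ₗ[ℂ] ℂ)) (B V : Type*) [CommRing B] [Algebra ℂ B]
    [AddCommGroup V] [Module ℂ V] where
  op : G → P →ₗ[ℂ] B →ₗ[ℂ] Module.End ℂ V
  op_op : ∀ r m p q b b' v, op r p b (op m q b' v) =
    op m q b' (op r p b v) + op (r + m) (pg m p • q - pg r q • p) (b * b') v

namespace LoopRep

variable {pg : G →+ (P →ₗ[ℂ] ℂ)} {L : LoopRep pg B V} {χ : P →ₗ[ℂ] ℂ}

section Basic

variable (L)

/-- Submodules stable under the loop algebra. -/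
def Invariant (U : Submodule ℂ V) : Prop := ∀ r p b, ∀ v ∈ U, L.op r p b v ∈ U

/-- The weight space of a character `ψ` of the Cartan subalgebra `0 ⊗ P ⊗ 1`. -/
def weightSpace (ψ : P →ₗ[ℂ] ℂ) : Submodule ℂ V := ⨅ p, (L.op 0 p 1).eigenspace (ψ p)

/-- An irreducible weight module with finite dimensional weight spaces, with weights in the coset
`χ + pg G`, without nonzero vectors annihilated by the whole loop algebra. -/
structure IsIrredHC (χ : P →ₗ[ℂ] ℂ) : Prop where
  pairing_injective : Function.Injective pg
  eq_bot_or_eq_top : ∀ U : Submodule ℂ V, L.Invariant U → U = ⊥ ∨ U = ⊤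
  finiteDimensional_weightSpace : ∀ ψ, FiniteDimensional ℂ (L.weightSpace ψ)
  iSup_weightSpace : ⨆ x, L.weightSpace (χ + pg x) = ⊤
  eq_zero_of_forall_op_eq_zero : ∀ v, (∀ r p b, L.op r p b v = 0) → v = 0
  nontrivial : Nontrivial V

/-- All operators of degree `r` kill `v`. -/
def Kills (r : G) (v : V) : Prop := ∀ p b, L.op r p b v = 0

/-- All operators of degree `r` with coefficient `1 ∈ B` kill `v`. -/
def KillsOne (r : G) (v : V) : Prop := ∀ p, L.op r p 1 v = 0

variable {L}

lemma mem_weightSpace {ψ : P →ₗ[ℂ] ℂ} {v : V} :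
    v ∈ L.weightSpace ψ ↔ ∀ p, L.op 0 p 1 v = ψ p • v := by
  simp [weightSpace, Submodule.mem_iInf]

lemma op_mem_weightSpace {ψ : P →ₗ[ℂ] ℂ} {v : V} (hv : v ∈ L.weightSpace ψ) (r : G) (p : P)
    (b : B) : L.op r p b v ∈ L.weightSpace (ψ + pg r) := by
  refine mem_weightSpace.2 fun q => ?_
  rw [L.op_op, mem_weightSpace.1 hv q]
  simp [add_smul]

lemma op_mem_weightSpace_of_eq {x : G} {v : V} (hv : v ∈ L.weightSpace (χ + pg x)) {r : G} (p : P)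
    (b : B) {y : G} (h : y = x + r) : L.op r p b v ∈ L.weightSpace (χ + pg y) := by
  rw [h, map_add, ← add_assoc]
  exact op_mem_weightSpace hv r p b

variable (L) in
lemma iSupIndep_weightSpace : iSupIndep L.weightSpace := by
  have h := Module.End.independent_iInf_maxGenEigenspace_of_forall_mapsTo
    (fun p : P => L.op 0 p 1) (fun i j φ => Module.End.mapsTo_maxGenEigenspace_of_comm (by
      ext v
      simpa using L.op_op 0 0 j i 1 1 v) φ)
  exact (h.comp DFunLike.coe_injective).mono fun ψ =>
    iInf_mono fun p => Module.End.eigenspace_le_maxGenEigenspace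

lemma Kills.killsOne {r : G} {v : V} (h : L.Kills r v) : L.KillsOne r v := fun p => h p 1

lemma op_add_mul_eq_zero_of_ne (hpg : Function.Injective pg) {r m : G} (hrm : r ≠ m) {b b' : B}
    {v : V} (hr : ∀ p, L.op r p b v = 0) (hm : ∀ p, L.op m p b' v = 0) (p : P) :
    L.op (r + m) p (b * b') v = 0 := by
  have diag : ∀ q, pg (m - r) q ≠ 0 → L.op (r + m) q (b * b') v = 0 := by
    intro q hq
    have h := L.op_op r m q q b b' v
    rw [hr, hm, map_zero, map_zero, zero_add, ← sub_smul, ← LinearMap.sub_apply, ← map_sub,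
      map_smul, LinearMap.smul_apply, LinearMap.smul_apply] at h
    exact (smul_eq_zero.1 h.symm).resolve_left hq
  by_cases hp : pg (m - r) p = 0
  · have hpg0 : pg (m - r) ≠ 0 := (map_ne_zero_iff pg hpg).2 (sub_ne_zero.2 hrm.symm)
    obtain ⟨q, hq⟩ := DFunLike.ne_iff.1 hpg0
    have h := diag (p + q) (by rwa [map_add, hp, zero_add])
    rwa [map_add, LinearMap.add_apply, LinearMap.add_apply, diag q hq, add_zero] at h
  · exact diag p hp

lemma Kills.add (hpg : Function.Injective pg) {r m : G} (hrm : r ≠ m) {v : V} (hr : L.Kills r v)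
    (hm : L.KillsOne m v) : L.Kills (r + m) v := fun p b => by
  simpa using op_add_mul_eq_zero_of_ne hpg hrm (hr · b) hm p

lemma KillsOne.add (hpg : Function.Injective pg) {r m : G} (hrm : r ≠ m) {v : V}
    (hr : L.KillsOne r v) (hm : L.KillsOne m v) : L.KillsOne (r + m) v := fun p => by
  simpa using op_add_mul_eq_zero_of_ne hpg hrm hr hm p

namespace IsIrredHC

lemma isAddTorsionFree (hL : L.IsIrredHC χ) : IsAddTorsionFree G :=
  have : IsAddTorsionFree (P →ₗ[ℂ] ℂ) := IsAddTorsionFree.of_isTorsionFree ℂ _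
  hL.pairing_injective.isAddTorsionFree pg

lemma eq_top_of_mem (hL : L.IsIrredHC χ) {U : Submodule ℂ V} (hU : L.Invariant U) {v : V}
    (hv : v ∈ U) (h0 : v ≠ 0) : U = ⊤ :=
  (hL.eq_bot_or_eq_top U hU).resolve_left fun h => h0 (by simpa [h] using hv)

lemma eq_top_of_forall_weightSpace_le (hL : L.IsIrredHC χ) {U : Submodule ℂ V}
    (h : ∀ x, L.weightSpace (χ + pg x) ≤ U) : U = ⊤ :=
  top_unique (hL.iSup_weightSpace ▸ iSup_le h)

end IsIrredHC

end Basic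

section KilledDirections

variable (L) in
/-- The vectors `v` such that, for every `s`, all operators of degree `j • k + s` with `j` large
enough kill `v`. -/
def eventuallyKilled (k : G) : Submodule ℂ V where
  carrier := {v | ∀ s, ∀ᶠ j : ℕ in atTop, L.Kills (j • k + s) v}
  add_mem' := fun ha hb s => by
    filter_upwards [ha s, hb s] with j hja hjb p b
    rw [map_add, hja, hjb, add_zero]
  zero_mem' := fun _ => .of_forall fun _ _ _ => map_zero _
  smul_mem' := fun c a ha s => by
    filter_upwards [ha s] with j hj p b
    rw [map_smul, hj, smul_zero]

variable (L) in
/-- Every vector is eventually killed in direction `k`. -/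
def EventuallyKills (k : G) : Prop := ∀ v, v ∈ L.eventuallyKilled k

variable (L) in
/-- Some nonzero vector is killed by the operators with coefficient `1` and degree a large
multiple of `l`. -/
def WeaklyKills (l : G) : Prop := ∃ v : V, v ≠ 0 ∧ ∀ᶠ j : ℕ in atTop, L.KillsOne (j • l) v

lemma invariant_eventuallyKilled (k : G) : L.Invariant (L.eventuallyKilled k) := by
  intro r p b v hv s
  filter_upwards [hv s, hv (s + r)] with j hs hsr q c
  rw [L.op_op, hs, add_assoc, hsr, map_zero, add_zero]

lemma EventuallyKills.eventually_kills_nsmul {k : G} (hk : L.EventuallyKills k) (v : V) :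
    ∀ᶠ j : ℕ in atTop, L.Kills (j • k) v := by
  simpa using hk v 0

lemma EventuallyKills.nsmul {k : G} (h : L.EventuallyKills k) {m : ℕ} (hm : 1 ≤ m) :
    L.EventuallyKills (m • k) := by
  intro v s
  filter_upwards [(tendsto_id.atTop_mul_const' hm).eventually (h v s)] with j hj
  rwa [smul_smul]

lemma EventuallyKills.of_nsmul {k : G} {m : ℕ} (hm : 1 ≤ m) (h : L.EventuallyKills (m • k)) :
    L.EventuallyKills k := by
  intro v s
  have hres : ∀ᶠ i : ℕ in atTop, ∀ t ∈ Finset.range m, L.Kills (i • m • k + (t • k + s)) v :=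
    (Finset.eventually_all _).2 fun t _ => h v (t • k + s)
  have hdiv := Nat.tendsto_div_const_atTop (Nat.one_le_iff_ne_zero.1 hm)
  filter_upwards [hdiv.eventually hres] with j hj
  have hjm := hj (j % m) (Finset.mem_range.2 (Nat.mod_lt j hm))
  rwa [smul_smul, ← add_assoc, ← add_smul, Nat.div_add_mod'] at hjm

lemma kills_of_kills_neg (hpg : Function.Injective pg) {k s : G} {v : V}
    (hv : v ∈ L.eventuallyKilled k) (hkill : L.Kills (-k) v) (hs : s ∉ AddSubgroup.zmultiples k) :
    L.Kills s v := by
  have descend : ∀ j : ℕ, L.Kills (j • k + s) v → L.Kills s v := by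
    intro j
    induction j with
    | zero => simp
    | succ j ih =>
      intro h
      have hne : (j + 1) • k + s ≠ -k := fun h => hs <| AddSubgroup.mem_zmultiples_iff.2
        ⟨-(j + 2 : ℕ), by rw [← eq_sub_iff_add_eq'] at h; rw [h]; push_cast; module⟩
      have hadd : (j + 1) • k + s + -k = j • k + s := by module
      exact ih (hadd ▸ h.add hpg hne hkill.killsOne)
  obtain ⟨N, hN⟩ := (hv s).exists
  exact descend N hN

namespace IsIrredHC

lemma eventuallyKills_of_mem (hL : L.IsIrredHC χ) {k : G} {v : V} (h0 : v ≠ 0)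
    (hv : v ∈ L.eventuallyKilled k) : L.EventuallyKills k := fun w => by
  rw [hL.eq_top_of_mem (invariant_eventuallyKilled k) hv h0]
  trivial

lemma weaklyKills (hL : L.IsIrredHC χ) {k : G} (h : L.EventuallyKills k) : L.WeaklyKills k := by
  have := hL.nontrivial
  obtain ⟨v, hv⟩ := exists_ne (0 : V)
  exact ⟨v, hv, (h.eventually_kills_nsmul v).mono fun _ hj => hj.killsOne⟩

lemma eventuallyKills_add_nsmul (hL : L.IsIrredHC χ) {k l : G} (hk : L.EventuallyKills k)
    (hl : L.WeaklyKills l) {q : ℕ} (hq : 1 ≤ q) : L.EventuallyKills (k + q • l) := by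
  have := hL.isAddTorsionFree
  by_cases hkl : k = q • l
  · simpa [← hkl, two_nsmul] using hk.nsmul one_le_two
  obtain ⟨v, hv, hkill⟩ := hl
  refine hL.eventuallyKills_of_mem hv fun s => ?_
  filter_upwards [(tendsto_id.atTop_mul_const' hq).eventually hkill, hk v s,
    eventually_nsmul_ne (sub_ne_zero.2 hkl) (-s)] with j hjl hjk hne
  have hne' : j • k + s ≠ (id j * q) • l := fun h => hne (by
    rw [smul_sub, smul_smul, ← sub_eq_zero, ← sub_eq_zero.2 h, id]
    abel)
  have hadd : j • (k + q • l) + s = j • k + s + (id j * q) • l := by rw [id]; module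
  exact hadd ▸ hjk.add hL.pairing_injective hne' hjl

lemma eventuallyKills_add (hL : L.IsIrredHC χ) {k l : G} (hk : L.EventuallyKills k)
    (hl : L.EventuallyKills l) : L.EventuallyKills (k + l) := by
  simpa using hL.eventuallyKills_add_nsmul hk (hL.weaklyKills hl) le_rfl

lemma not_eventuallyKills_zero (hL : L.IsIrredHC χ) : ¬ L.EventuallyKills 0 := by
  intro h
  have := hL.nontrivial
  obtain ⟨v, hv⟩ := exists_ne (0 : V)
  refine hv (hL.eq_zero_of_forall_op_eq_zero v fun r p b => ?_)
  obtain ⟨N, hN⟩ := (h v r).exists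
  simpa using hN p b

lemma ne_zero_of_eventuallyKills (hL : L.IsIrredHC χ) {k : G} (h : L.EventuallyKills k) :
    k ≠ 0 := by
  rintro rfl
  exact hL.not_eventuallyKills_zero h

lemma not_kills_neg (hL : L.IsIrredHC χ) (hG : ¬ IsAddCyclic G) {k : G}
    (hk : L.EventuallyKills k) {v : V} (hv : v ≠ 0) : ¬ L.Kills (-k) v := by
  intro hkill
  have := hL.isAddTorsionFree
  have hpg := hL.pairing_injective
  refine hv (hL.eq_zero_of_forall_op_eq_zero v fun s => ?_)
  change L.Kills s v
  by_cases hs : s ∈ AddSubgroup.zmultiples k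
  · obtain ⟨e, he, hne⟩ :=
      exists_notMem_zmultiples_ne_sub hG (hL.ne_zero_of_eventuallyKills hk) s
    have he' : s - e ∉ AddSubgroup.zmultiples k := fun h =>
      he (by simpa using sub_mem hs h)
    simpa using (kills_of_kills_neg hpg (hk v) hkill he).add hpg hne
      (kills_of_kills_neg hpg (hk v) hkill he').killsOne
  · exact kills_of_kills_neg hpg (hk v) hkill hs

lemma weightSpace_ne_bot_of_eq_sub (hL : L.IsIrredHC χ) (hG : ¬ IsAddCyclic G) {k x y : G}
    (hk : L.EventuallyKills k) (hx : L.weightSpace (χ + pg x) ≠ ⊥) (hy : y = x - k) :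
    L.weightSpace (χ + pg y) ≠ ⊥ := by
  obtain ⟨v, hv, hv0⟩ := Submodule.exists_mem_ne_zero_of_ne_bot hx
  have hkill := hL.not_kills_neg hG hk hv0
  simp only [Kills, not_forall] at hkill
  obtain ⟨p, b, h⟩ := hkill
  rw [sub_eq_add_neg] at hy
  exact (Submodule.ne_bot_iff _).2 ⟨_, op_mem_weightSpace_of_eq hv p b hy, h⟩

end IsIrredHC

end KilledDirections

section WeightBounds

lemma eventually_character_ne_zero (x : G) {k : G} {u : P} (hu : pg k u ≠ 0) :
    ∀ᶠ j : ℕ in atTop, (χ + pg (x + j • k)) u ≠ 0 := by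
  have hinj : Function.Injective fun j : ℕ => (χ + pg (x + j • k)) u := fun i j hij => by
    simpa [hu] using hij
  rw [← Nat.cofinite_eq_atTop]
  exact hinj.tendsto_cofinite.eventually (Set.finite_singleton 0).compl_mem_cofinite

lemma exists_forall_kills_nsmul {k x : G} (hk : L.EventuallyKills k) {j : ℕ} (hj : 1 ≤ j)
    (hbot : L.weightSpace (χ + pg (x + j • k)) ≠ ⊥) :
    ∃ j' ≥ j, ∃ w ∈ L.weightSpace (χ + pg (x + j' • k)), w ≠ 0 ∧
      ∀ i ≥ j', L.Kills (i • k) w := by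
  obtain ⟨w, hw, hw0⟩ := Submodule.exists_mem_ne_zero_of_ne_bot hbot
  by_cases hall : ∀ i : ℕ, L.Kills (i • k) w
  · exact ⟨j, le_rfl, w, hw, hw0, fun i _ => hall i⟩
  obtain ⟨i, hi⟩ := not_forall.1 hall
  obtain ⟨a, -, ha, hmax⟩ := exists_last_of_eventually_not (Q := fun i => ¬ L.Kills (i • k) w)
    ((hk.eventually_kills_nsmul w).mono fun _ => not_not.2) hi
  simp only [Kills, not_forall] at ha
  obtain ⟨p, b, hpb⟩ := ha
  refine ⟨j + a, by omega, L.op (a • k) p b w, op_mem_weightSpace_of_eq hw p b (by module), hpb,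
    fun i hi q b' => ?_⟩
  rw [L.op_op, not_not.1 (hmax i (by omega)), ← add_smul,
    not_not.1 (hmax (i + a) (by omega)), map_zero, add_zero]

lemma card_le_finrank_of_forall_kills {ι : Type*} [Fintype ι] [LinearOrder ι] {x k : G}
    [FiniteDimensional ℂ (L.weightSpace (χ + pg x))] {u : P} (hu : pg k u ≠ 0) {f : ι → ℕ}
    (hf : ∀ i, 1 ≤ f i) (hlt : ∀ i l, i < l → 2 * f i ≤ f l)
    (hfu : ∀ i, (χ + pg (x + f i • k)) u ≠ 0) {w : ι → V} (hw0 : ∀ i, w i ≠ 0)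
    (hw : ∀ i, w i ∈ L.weightSpace (χ + pg (x + f i • k)))
    (hkill : ∀ i, ∀ j ≥ f i, L.Kills (j • k) (w i)) :
    Fintype.card ι ≤ finrank ℂ (L.weightSpace (χ + pg x)) := by
  refine card_le_finrank_of_triangular _ (fun i => L.op (-(f i • k)) u 1 (w i))
    (fun i => op_mem_weightSpace_of_eq (hw i) _ _ (by abel)) (fun l => L.op (f l • k) u 1)
    (fun l => ?_) (fun i l hil => ?_)
  · have hpair : pg (-(f l • k)) u - pg (f l • k) u ≠ 0 := by
      have : (f l : ℂ) ≠ 0 := Nat.cast_ne_zero.2 (Nat.one_le_iff_ne_zero.1 (hf l))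
      rw [map_neg, map_nsmul, LinearMap.neg_apply, LinearMap.smul_apply, nsmul_eq_mul]
      intro h
      exact mul_ne_zero this hu (by linear_combination (-1 / 2) * h)
    rw [L.op_op, hkill l _ le_rfl, add_neg_cancel, map_zero, zero_add, ← sub_smul, map_smul,
      LinearMap.smul_apply, LinearMap.smul_apply, mul_one, mem_weightSpace.1 (hw l) u]
    exact smul_ne_zero hpair (smul_ne_zero (hfu l) (hw0 l))
  · have hil' := hlt i l hil
    obtain ⟨d, hd⟩ := Nat.exists_eq_add_of_le hil'
    have hsum : f l • k + -(f i • k) = (f i + d) • k := by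
      rw [hd]
      module
    rw [L.op_op, hkill i _ (by omega), hsum, hkill i _ (by omega), map_zero, add_zero]

namespace IsIrredHC

lemma eventually_weightSpace_eq_bot (hL : L.IsIrredHC χ) {k : G} (hk : L.EventuallyKills k)
    (x : G) : ∀ᶠ j : ℕ in atTop, L.weightSpace (χ + pg (x + j • k)) = ⊥ := by
  by_contra! hcon
  have hpgk : pg k ≠ 0 :=
    (map_ne_zero_iff pg hL.pairing_injective).2 (hL.ne_zero_of_eventuallyKills hk)
  obtain ⟨u, hu⟩ := DFunLike.ne_iff.1 hpgk
  obtain ⟨N, hN⟩ := eventually_atTop.1 (eventually_character_ne_zero (χ := χ) x hu)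
  let Deep : ℕ → Prop := fun j => 1 ≤ j ∧ (χ + pg (x + j • k)) u ≠ 0 ∧
    ∃ w ∈ L.weightSpace (χ + pg (x + j • k)), w ≠ 0 ∧ ∀ i ≥ j, L.Kills (i • k) w
  have hdeep : ∀ J, ∃ j ≥ J, Deep j := by
    intro J
    obtain ⟨j, hj, hbot⟩ := frequently_atTop.1 hcon (J + N + 1)
    obtain ⟨j', hj', hw⟩ := exists_forall_kills_nsmul hk (by omega) hbot
    exact ⟨j', by omega, by omega, hN j' (by omega), hw⟩
  obtain ⟨f, hf, hlt⟩ := exists_seq_of_forall_finset_exists Deep (fun i j => 2 * i ≤ j)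
    fun s _ => by
      obtain ⟨j, hj, hD⟩ := hdeep (s.sup (2 * ·))
      exact ⟨j, hD, fun i hi => (Finset.le_sup (f := (2 * ·)) hi).trans hj⟩
  choose hf1 hfu w hw hw0 hkill using hf
  have := hL.finiteDimensional_weightSpace (χ + pg x)
  have hcard := card_le_finrank_of_forall_kills
    (ι := Fin (finrank ℂ (L.weightSpace (χ + pg x)) + 1)) hu (fun i => hf1 i)
    (fun i l hil => hlt i l hil) (fun i => hfu i) (fun i => hw0 i) (fun i => hw i)
    (fun i => hkill i)
  simp at hcard

lemma le_finrank_weightSpace (hL : L.IsIrredHC χ) {r y : G} (hr : r ≠ 0) {p : ℕ} {v : V}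
    (hv : v ∈ L.weightSpace (χ + pg (y + p • r))) (hv0 : v ≠ 0)
    (hkill : ∀ i : ℕ, 1 ≤ i → L.KillsOne (i • r) v) {u : P} (hu : pg r u = 0)
    (hc : (χ + pg y) u ≠ 0) {M : ℕ} (hM : 2 * M < p) :
    M ≤ finrank ℂ (L.weightSpace (χ + pg y)) := by
  obtain ⟨e, he⟩ : ∃ e, pg r e = 1 := by
    obtain ⟨e, he⟩ := DFunLike.ne_iff.1 ((map_ne_zero_iff pg hL.pairing_injective).2 hr)
    exact ⟨(pg r e)⁻¹ • e, by simpa using inv_mul_cancel₀ he⟩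
  have hkill' : ∀ i : ℤ, 1 ≤ i → L.KillsOne (i • r) v := fun i hi => by
    lift i to ℕ using by omega
    simpa using hkill i (by omega)
  have := hL.finiteDimensional_weightSpace (χ + pg y)
  refine le_finrank_of_heisenberg (K := ℂ) (J := fun j => L.op (j • r) u 1)
    (T := fun j => L.op (j • r) e 1) (p := p) (fun i j => LinearMap.ext fun w => ?_)
    (fun i j w => ?_) (fun i hi => hkill' i hi u) (fun i hi => hkill' i hi e) hc ?_ hv0
    (fun i => op_mem_weightSpace_of_eq (op_mem_weightSpace_of_eq hv _ _ rfl) _ _ ?_)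
    (by exact_mod_cast hM)
  · rw [Module.End.mul_apply, L.op_op]
    simp [hu]
  · rw [L.op_op, ← add_smul]
    simp [hu, he]
  · rw [zero_smul, mem_weightSpace.1 hv u]
    simp [hu]
  · module

end IsIrredHC

end WeightBounds

section PositiveCone

/-- `k` is a rational multiple of `r` in `ℚ ⊗ G`. -/
def IsRatMultiple (k r : G) : Prop := ∃ a b : ℤ, a ≠ 0 ∧ a • k = b • r

lemma IsRatMultiple.of_zsmul {c : ℤ} {k r : G} (hc : c ≠ 0) (h : IsRatMultiple (c • k) r) :
    IsRatMultiple k r := by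
  obtain ⟨a, b, ha, hab⟩ := h
  exact ⟨a * c, b, mul_ne_zero ha hc, by rw [mul_smul, hab]⟩

lemma IsRatMultiple.of_common {e f s : G} (he : IsRatMultiple e s) (hf : IsRatMultiple f s)
    (he0 : ¬ IsRatMultiple e 0) : IsRatMultiple f e := by
  obtain ⟨a, b, ha, hab⟩ := he
  obtain ⟨c, d, hc, hcd⟩ := hf
  have hb : b ≠ 0 := by
    rintro rfl
    exact he0 ⟨a, 0, ha, by rw [hab, zero_smul, zero_smul]⟩
  exact ⟨b * c, d * a, mul_ne_zero hb hc, by rw [mul_smul, hcd, mul_smul, hab, smul_comm]⟩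

variable (pg) in
/-- The degrees have rank at least two, and the pairing detects rational proportionality. -/
structure RankCondition : Prop where
  exists_not_isRatMultiple : ∀ k : G, ∃ e, ¬ IsRatMultiple e k
  isRatMultiple_of_ker_le : ∀ r s : G, (∀ u, pg r u = 0 → pg s u = 0) → IsRatMultiple s r

namespace RankCondition

lemma not_isAddCyclic (hR : RankCondition pg) : ¬ IsAddCyclic G := by
  rintro ⟨g, hg⟩
  obtain ⟨e, he⟩ := hR.exists_not_isRatMultiple g
  obtain ⟨b, rfl⟩ := hg e
  exact he ⟨1, b, one_ne_zero, one_smul ℤ _⟩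

lemma isRatMultiple_sub (hR : RankCondition pg) {r x y : G}
    (hx : ∀ u, pg r u = 0 → (χ + pg x) u = 0) (hy : ∀ u, pg r u = 0 → (χ + pg y) u = 0) :
    IsRatMultiple (y - x) r := by
  refine hR.isRatMultiple_of_ker_le r _ fun u hu => ?_
  have hxu := hx u hu
  have hyu := hy u hu
  simp only [LinearMap.add_apply, map_sub, LinearMap.sub_apply] at hxu hyu ⊢
  linear_combination hyu - hxu

end RankCondition

lemma op_eq_zero_of_basis {ι : Type*} (bs : Basis ι ℂ P) {r : G} {b : B} {v : V}
    (h : ∀ i, L.op r (bs i) b v = 0) (p : P) : L.op r p b v = 0 :=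
  LinearMap.congr_fun
    (bs.ext (f₁ := (LinearMap.applyₗ v) ∘ₗ (L.op r).flip b) (f₂ := 0) h) p

lemma frequently_weightSpace_ne_bot {l x : G} (hl : ¬ L.WeaklyKills l)
    (hx : L.weightSpace (χ + pg x) ≠ ⊥) :
    ∃ᶠ j : ℕ in atTop, L.weightSpace (χ + pg (x + j • l)) ≠ ⊥ := by
  obtain ⟨v, hv, hv0⟩ := Submodule.exists_mem_ne_zero_of_ne_bot hx
  have hfreq : ∃ᶠ j : ℕ in atTop, ¬ L.KillsOne (j • l) v := fun h =>
    hl ⟨v, hv0, h.mono fun _ => not_not.1⟩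
  refine hfreq.mono fun j hj => ?_
  obtain ⟨p, hp⟩ := not_forall.1 hj
  exact (Submodule.ne_bot_iff _).2 ⟨_, op_mem_weightSpace_of_eq hv p 1 rfl, hp⟩

namespace IsIrredHC

lemma exists_weightSpace_ne_bot (hL : L.IsIrredHC χ) : ∃ x, L.weightSpace (χ + pg x) ≠ ⊥ := by
  by_contra! h
  have := hL.nontrivial
  exact bot_ne_top ((iSup_eq_bot.2 h).symm.trans hL.iSup_weightSpace)

lemma le_finrank_of_weightSpace_ne_bot (hL : L.IsIrredHC χ) {r y : G} (hr : L.EventuallyKills r)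
    {p : ℕ} (hp : L.weightSpace (χ + pg (y + p • r)) ≠ ⊥) {u : P} (hu : pg r u = 0)
    (hc : (χ + pg y) u ≠ 0) {M : ℕ} (hM : 2 * M < p) :
    M ≤ finrank ℂ (L.weightSpace (χ + pg y)) := by
  obtain ⟨m, hpm, hm, hmax⟩ := exists_last_of_eventually_not
    (Q := fun i => L.weightSpace (χ + pg (y + i • r)) ≠ ⊥)
    ((hL.eventually_weightSpace_eq_bot hr y).mono fun _ => not_not.2) hp
  obtain ⟨v, hv, hv0⟩ := Submodule.exists_mem_ne_zero_of_ne_bot hm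
  refine hL.le_finrank_weightSpace (hL.ne_zero_of_eventuallyKills hr) hv hv0 (fun i hi q => ?_)
    hu hc (hM.trans_le hpm)
  have hmem := op_mem_weightSpace_of_eq hv (r := i • r) q (1 : B) (y := y + (m + i) • r)
    (by module)
  rwa [not_not.1 (hmax _ (by omega)), Submodule.mem_bot] at hmem

lemma isRatMultiple_sub (hL : L.IsIrredHC χ) (hR : RankCondition pg) {r x y : G}
    (hr : L.EventuallyKills r) {p q : ℕ}
    (hxp : 2 * (finrank ℂ (L.weightSpace (χ + pg x)) + 1) < p)
    (hyq : 2 * (finrank ℂ (L.weightSpace (χ + pg y)) + 1) < q)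
    (hx : L.weightSpace (χ + pg (x + p • r)) ≠ ⊥) (hy : L.weightSpace (χ + pg (y + q • r)) ≠ ⊥) :
    IsRatMultiple (y - x) r := by
  refine hR.isRatMultiple_sub (χ := χ) (fun u hu => ?_) (fun u hu => ?_) <;> by_contra hc
  · exact (hL.le_finrank_of_weightSpace_ne_bot hr hx hu hc hxp).not_gt (Nat.lt_succ_self _)
  · exact (hL.le_finrank_of_weightSpace_ne_bot hr hy hu hc hyq).not_gt (Nat.lt_succ_self _)

lemma weaklyKills_of_killsOne (hL : L.IsIrredHC χ) {l : G} (hl : l ≠ 0) {v : V} (hv : v ≠ 0)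
    {a : ℕ} (ha : 1 ≤ a) (h₀ : L.KillsOne (a • l) v) (h₁ : L.KillsOne ((a + 1) • l) v) :
    L.WeaklyKills l := by
  have := hL.isAddTorsionFree
  refine ⟨v, hv, eventually_of_add_of_succ (Q := fun j => L.KillsOne (j • l) v)
    (fun i j hij hi hj => ?_) ha h₀ h₁⟩
  rw [add_smul]
  refine hi.add hL.pairing_injective (fun h => hij ?_) hj
  exact injective_nsmul_iff_not_isOfFinAddOrder.2
    (not_isOfFinAddOrder_of_isAddTorsionFree hl) h

lemma exists_finrank_weightSpace_le [FiniteDimensional ℂ P] (hL : L.IsIrredHC χ) {k : G}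
    (hk0 : k ≠ 0) (hk : ¬ L.WeaklyKills (-k)) (x : G) :
    ∃ M, ∀ j : ℕ, finrank ℂ (L.weightSpace (χ + pg (x + j • k))) ≤ M := by
  have := hL.finiteDimensional_weightSpace
  let bs := Module.finBasis ℂ P
  let dim : ℕ → ℕ := fun i => finrank ℂ (L.weightSpace (χ + pg (x + i • k)))
  refine ⟨∑ i : Fin (finrank ℂ P) × Fin 2, dim i.2 + ∑ i : Fin 2, dim i, fun j => ?_⟩
  by_contra! hlt
  obtain ⟨a, rfl⟩ : ∃ a, j = a + 2 := by
    refine Nat.exists_eq_add_of_le' (not_lt.1 fun hj => ?_)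
    have := Finset.single_le_sum (f := fun i : Fin 2 => dim i) (fun _ _ => Nat.zero_le _)
      (Finset.mem_univ ⟨j, hj⟩)
    exact hlt.not_ge (this.trans (Nat.le_add_left _ _))
  obtain ⟨v, -, hv0, hvk⟩ := exists_ne_zero_forall_map_eq_zero
    (L.weightSpace (χ + pg (x + (a + 2) • k)))
    (fun i : Fin (finrank ℂ P) × Fin 2 => L.weightSpace (χ + pg (x + (i.2 : ℕ) • k)))
    (fun i => L.op ((a + 2 - i.2 : ℕ) • -k) (bs i.1) 1)
    (fun i v hv => op_mem_weightSpace_of_eq hv _ _ (by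
      rw [smul_neg, ← sub_eq_add_neg, eq_sub_iff_add_eq, add_assoc, ← add_smul,
        Nat.add_sub_cancel' (by omega)]))
    ((Nat.le_add_right _ _).trans_lt hlt)
  exact hk (hL.weaklyKills_of_killsOne (neg_ne_zero.2 hk0) hv0 (a := a + 1) (by omega)
    (op_eq_zero_of_basis bs fun i => hvk (i, 1)) (op_eq_zero_of_basis bs fun i => hvk (i, 0)))

lemma eventuallyKills_or_neg_of_isRatMultiple (hL : L.IsIrredHC χ) {r k : G}
    (hr : L.EventuallyKills r) (hk : k ≠ 0) (h : IsRatMultiple k r) :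
    L.EventuallyKills k ∨ L.EventuallyKills (-k) := by
  have := hL.isAddTorsionFree
  obtain ⟨a, b, ha, hab⟩ := h
  have hb : b ≠ 0 := by
    rintro rfl
    rw [zero_smul] at hab
    exact (smul_ne_zero ha hk) hab
  have of_nsmul : ∀ {m n : ℕ} {k' : G}, m ≠ 0 → n ≠ 0 → m • k' = n • r → L.EventuallyKills k' :=
    fun hm hn h => .of_nsmul (Nat.one_le_iff_ne_zero.2 hm)
      (h ▸ hr.nsmul (Nat.one_le_iff_ne_zero.2 hn))
  obtain ⟨m, rfl | rfl⟩ := a.eq_nat_or_neg <;> obtain ⟨n, rfl | rfl⟩ := b.eq_nat_or_neg <;>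
    simp only [neg_smul, natCast_zsmul, ← smul_neg (_ : ℕ) k] at hab
  · exact .inl (of_nsmul (by simpa using ha) (by simpa using hb) hab)
  · exact .inr (of_nsmul (by simpa using ha) (by simpa using hb) (by rw [smul_neg, hab, neg_neg]))
  · exact .inr (of_nsmul (by simpa using ha) (by simpa using hb) hab)
  · exact .inl (of_nsmul (by simpa using ha) (by simpa using hb) (by simpa using hab))

lemma isRatMultiple_of_frequently (hL : L.IsIrredHC χ) (hR : RankCondition pg) {r k x : G}
    (hr : L.EventuallyKills r) {M : ℕ}
    (hM : ∀ j : ℕ, finrank ℂ (L.weightSpace (χ + pg (x + j • k))) ≤ M) {q : ℕ} (hq : q ≠ 0)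
    (hfreq : ∃ᶠ j : ℕ in atTop, L.weightSpace (χ + pg (x + j • (q • k + r))) ≠ ⊥) :
    IsRatMultiple k r := by
  obtain ⟨i, hi, hxi⟩ := frequently_atTop.1 hfreq (2 * (M + 1) + 1)
  obtain ⟨j, hj, hxj⟩ := frequently_atTop.1 hfreq (i + 1)
  have hsplit : ∀ j : ℕ, x + j • (q • k + r) = x + (j * q) • k + j • r := fun j => by module
  rw [hsplit] at hxi hxj
  have hrat := hL.isRatMultiple_sub hR hr ((by have := hM (i * q); omega))
    ((by have := hM (j * q); omega)) hxi hxj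
  refine .of_zsmul (c := ((j : ℤ) - i) * q) ?_ ?_
  · exact mul_ne_zero (by omega) (by exact_mod_cast hq)
  · convert hrat using 1
    module

lemma weaklyKills_nsmul_add [FiniteDimensional ℂ P] (hL : L.IsIrredHC χ) (hR : RankCondition pg)
    {r k : G} (hr : L.EventuallyKills r) (hk : ¬ L.WeaklyKills (-k)) (q : ℕ) :
    L.WeaklyKills (q • k + r) := by
  rcases eq_or_ne q 0 with rfl | hq
  · simpa using hL.weaklyKills hr
  rcases eq_or_ne k 0 with rfl | hk0
  · simpa using hL.weaklyKills hr
  by_contra hcon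
  obtain ⟨x, hx⟩ := hL.exists_weightSpace_ne_bot
  obtain ⟨M, hM⟩ := hL.exists_finrank_weightSpace_le hk0 hk x
  obtain h | h := hL.eventuallyKills_or_neg_of_isRatMultiple hr hk0
    (hL.isRatMultiple_of_frequently hR hr hM hq (frequently_weightSpace_ne_bot hcon hx))
  · exact hcon (hL.weaklyKills (hL.eventuallyKills_add
      (h.nsmul (Nat.one_le_iff_ne_zero.2 hq)) hr))
  · exact hk (hL.weaklyKills h)

-- This dichotomy makes the eventually killed directions the positive cone of a total preorder.
lemma eventuallyKills_dichotomy [FiniteDimensional ℂ P] (hL : L.IsIrredHC χ)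
    (hR : RankCondition pg) {r : G} (hr : L.EventuallyKills r) (k : G) :
    (∀ q : ℕ, L.EventuallyKills (2 • r + q • k)) ∨
      ∀ q : ℕ, L.EventuallyKills (2 • r + q • (-k)) := by
  by_cases hk : L.WeaklyKills (-k)
  · refine .inr fun q => ?_
    rcases Nat.eq_zero_or_pos q with rfl | hq
    · simpa using hr.nsmul one_le_two
    · exact hL.eventuallyKills_add_nsmul (hr.nsmul one_le_two) hk hq
  · refine .inl fun q => ?_
    have hsplit : 2 • r + q • k = r + 1 • (q • k + r) := by module
    rw [hsplit]
    exact hL.eventuallyKills_add_nsmul hr (hL.weaklyKills_nsmul_add hR hr hk q) le_rfl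

lemma not_forall_eventuallyKills_sub (hL : L.IsIrredHC χ) (hR : RankCondition pg) {k : G}
    (hk : L.EventuallyKills k) (s : G) : ¬ ∀ m : ℕ, L.EventuallyKills (s - m • k) := by
  intro h
  obtain ⟨x, hx⟩ := hL.exists_weightSpace_ne_bot
  obtain ⟨J, hJ⟩ := (hL.eventually_weightSpace_eq_bot hk (x - s)).exists
  exact hL.weightSpace_ne_bot_of_eq_sub hR.not_isAddCyclic (h J) hx (by abel) hJ

lemma eventuallyKills_sub_nsmul [FiniteDimensional ℂ P] (hL : L.IsIrredHC χ)
    (hR : RankCondition pg) {r k : G} (hr : L.EventuallyKills r) (hk : ¬ L.EventuallyKills k)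
    (q : ℕ) : L.EventuallyKills (2 • r - q • k) := by
  by_contra hq
  obtain ⟨m, hm⟩ : ∃ m : ℕ, ¬ ∀ q : ℕ, L.EventuallyKills (2 • r + q • (4 • r - m • k)) := by
    by_contra! hall
    refine hq (.of_nsmul (m := 3) (by norm_num) ?_)
    convert hall (3 * q) 1 using 1
    module
  have hneg := (hL.eventuallyKills_dichotomy hR hr _).resolve_left hm 1
  have hmk : L.EventuallyKills (m • k) := by
    convert hL.eventuallyKills_add hneg (hr.nsmul one_le_two) using 1
    module
  rcases Nat.eq_zero_or_pos m with rfl | hm0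
  · exact hL.not_eventuallyKills_zero (by simpa using hmk)
  · exact hk (.of_nsmul hm0 hmk)

lemma not_eventuallyKills_add [FiniteDimensional ℂ P] (hL : L.IsIrredHC χ)
    (hR : RankCondition pg) {r : G} (hr : L.EventuallyKills r) {k l : G}
    (hk : ¬ L.EventuallyKills k) (hl : ¬ L.EventuallyKills l) : ¬ L.EventuallyKills (k + l) := by
  intro hkl
  refine hL.not_forall_eventuallyKills_sub hR hkl (2 • r) fun m => ?_
  refine .of_nsmul (m := 2) (by norm_num) ?_
  convert hL.eventuallyKills_add (hL.eventuallyKills_sub_nsmul hR hr hk (2 * m))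
    (hL.eventuallyKills_sub_nsmul hR hr hl (2 * m)) using 1
  module

lemma exists_eventuallyKills_nsmul_sub [FiniteDimensional ℂ P] (hL : L.IsIrredHC χ)
    (hR : RankCondition pg) {k : G} (hk : L.EventuallyKills k) (s : G) :
    ∃ m : ℕ, L.EventuallyKills (m • k - s) := by
  by_contra! h
  refine hL.not_forall_eventuallyKills_sub hR hk (k + s) fun m => ?_
  by_contra h'
  exact hL.not_eventuallyKills_add hR hk h' (h m) (by convert hk using 1; abel)

lemma exists_not_eventuallyKills_two_pow_nsmul_sub [FiniteDimensional ℂ P] (hL : L.IsIrredHC χ)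
    (hR : RankCondition pg)
    (hmin : ∀ β, L.EventuallyKills β → ∃ k, L.EventuallyKills k ∧ L.EventuallyKills (β - k))
    {r : G} (hr : L.EventuallyKills r) (t : ℕ) :
    ∃ s, L.EventuallyKills s ∧ ¬ L.EventuallyKills (2 ^ t • s - r) := by
  have halve : ∀ β, L.EventuallyKills β → ∃ s, L.EventuallyKills s ∧
      ¬ L.EventuallyKills (2 • s - β) := by
    intro β hβ
    obtain ⟨k, hk, hk'⟩ := hmin β hβ
    by_contra! h
    refine hL.not_eventuallyKills_zero ?_
    convert hL.eventuallyKills_add (h k hk) (h _ hk') using 1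
    module
  induction t with
  | zero => exact ⟨r, hr, by simpa using hL.not_eventuallyKills_zero⟩
  | succ t ih =>
    obtain ⟨s, hs, hsr⟩ := ih
    obtain ⟨s', hs', hss'⟩ := halve s hs
    refine ⟨s', hs', fun h => ?_⟩
    refine hL.not_eventuallyKills_add hR hr
      (fun h => hss' (.of_nsmul (m := 2 ^ t) Nat.one_le_two_pow h)) hsr ?_
    convert h using 1
    module

lemma exists_forall_weightSpace_ne_bot [FiniteDimensional ℂ P] (hL : L.IsIrredHC χ)
    (hR : RankCondition pg) {r : G} (hr : L.EventuallyKills r) (F : Finset G) :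
    ∃ y, ∀ s ∈ F, L.weightSpace (χ + pg (y + s)) ≠ ⊥ := by
  choose m hm using hL.exists_eventuallyKills_nsmul_sub hR hr
  obtain ⟨x, hx⟩ := hL.exists_weightSpace_ne_bot
  refine ⟨x - (F.sup m + 1) • r, fun s hs => ?_⟩
  obtain ⟨d, hd⟩ := Nat.exists_eq_add_of_le (Finset.le_sup (f := m) hs)
  refine hL.weightSpace_ne_bot_of_eq_sub hR.not_isAddCyclic
    (hL.eventuallyKills_add (hm s) (hr.nsmul (Nat.le_add_left 1 d))) hx ?_
  rw [hd]
  module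

-- Without a minimal killed direction some `s` has `2 ^ t • s` below `r` for `t` huge. Then the
-- `s`-strings through `y`, `y + e` and `y + f` are so long that `e` and `f` are both parallel
-- to `s`, whatever `e` and `f` are.
lemma exists_minimal_eventuallyKills [FiniteDimensional ℂ P] (hL : L.IsIrredHC χ)
    (hR : RankCondition pg) {r : G} (hr : L.EventuallyKills r) :
    ∃ β, L.EventuallyKills β ∧ ∀ k, L.EventuallyKills k → ¬ L.EventuallyKills (β - k) := by
  classical
  by_contra! hmin
  obtain ⟨e, he⟩ := hR.exists_not_isRatMultiple 0
  obtain ⟨f, hf⟩ := hR.exists_not_isRatMultiple e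
  obtain ⟨y, hy⟩ := hL.exists_forall_weightSpace_ne_bot hR hr {r, e + r, f + r}
  have hy' : ∀ t ∈ ({0, e, f} : Finset G), L.weightSpace (χ + pg (y + (t + r))) ≠ ⊥ := by
    simpa using hy
  obtain ⟨M, hM⟩ : ∃ M, ∀ t ∈ ({0, e, f} : Finset G),
      finrank ℂ (L.weightSpace (χ + pg (y + t))) ≤ M :=
    ⟨_, fun _ => Finset.le_sup (f := fun t => finrank ℂ (L.weightSpace (χ + pg (y + t))))⟩
  obtain ⟨p, t, hp, hpt⟩ : ∃ p t, 2 * (M + 1) < p ∧ 2 ^ t = p + 1 := by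
    have : 2 * (M + 1) + 1 < 2 ^ (2 * (M + 1) + 1) := Nat.lt_two_pow_self
    exact ⟨2 ^ (2 * (M + 1) + 1) - 1, 2 * (M + 1) + 1, by omega, by omega⟩
  obtain ⟨s, hs, hsr⟩ := hL.exists_not_eventuallyKills_two_pow_nsmul_sub hR hmin hr t
  have hrs : L.EventuallyKills (r - p • s) := by
    by_contra h
    refine hL.not_eventuallyKills_add hR hr h hsr ?_
    convert hs using 1
    rw [hpt]
    module
  have hstring : ∀ t ∈ ({0, e, f} : Finset G),
      L.weightSpace (χ + pg (y + t + p • s)) ≠ ⊥ := fun t ht =>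
    hL.weightSpace_ne_bot_of_eq_sub hR.not_isAddCyclic hrs (hy' t ht) (by abel)
  have hparallel : ∀ t ∈ ({0, e, f} : Finset G), IsRatMultiple t s := fun t ht => by
    simpa using hL.isRatMultiple_sub hR hs
      (((Nat.mul_le_mul_left 2 (Nat.succ_le_succ (hM 0 (by simp))))).trans_lt hp)
      ((Nat.mul_le_mul_left 2 (Nat.succ_le_succ (hM t ht))).trans_lt hp)
      (hstring 0 (by simp)) (hstring t ht)
  exact hf ((hparallel e (by simp)).of_common (hparallel f (by simp)) he)

theorem exists_degree_le [FiniteDimensional ℂ P] (hL : L.IsIrredHC χ) (hR : RankCondition pg)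
    {r : G} (hr : L.EventuallyKills r) :
    ∃ (deg : G →+ ℤ) (β x₀ : G), deg β = 1 ∧ L.weightSpace (χ + pg x₀) ≠ ⊥ ∧
      ∀ x, L.weightSpace (χ + pg x) ≠ ⊥ → deg x ≤ deg x₀ := by
  obtain ⟨β, hβ, hmin⟩ := hL.exists_minimal_eventuallyKills hR hr
  obtain ⟨deg, hdegβ, hpos⟩ := exists_degree_of_isLeast_pos (Pos := L.EventuallyKills)
    (fun hk hl => hL.eventuallyKills_add hk hl)
    (fun hk hl => hL.not_eventuallyKills_add hR hβ hk hl) hL.not_eventuallyKills_zero hβ hmin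
    (hL.exists_eventuallyKills_nsmul_sub hR hβ)
  obtain ⟨x, hx⟩ := hL.exists_weightSpace_ne_bot
  obtain ⟨J, hJ⟩ := (hL.eventually_weightSpace_eq_bot hβ x).exists
  have hbound : ∀ y, L.weightSpace (χ + pg y) ≠ ⊥ → deg y ≤ deg x + J := by
    intro y hy
    by_contra! h
    refine hL.weightSpace_ne_bot_of_eq_sub hR.not_isAddCyclic (hpos (y - (x + J • β)) ?_) hy
      (by abel) hJ
    simp only [map_sub, map_add, map_nsmul, hdegβ, nsmul_eq_mul, mul_one]
    omega
  obtain ⟨d, ⟨x₀, hx₀, rfl⟩, hmax⟩ := Int.exists_greatest_of_bdd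
    (P := fun d => ∃ y, L.weightSpace (χ + pg y) ≠ ⊥ ∧ deg y = d)
    ⟨_, by rintro _ ⟨y, hy, rfl⟩; exact hbound y hy⟩ ⟨deg x, x, hx, rfl⟩
  exact ⟨deg, β, x₀, hdegβ, hx₀, fun y hy => hmax _ ⟨y, hy, rfl⟩⟩

end IsIrredHC

end PositiveCone

section UnboundedMultiplicities

variable (L) in
/-- All operators of degree `r` with coefficients in `U` kill `v`. -/
def KillsOn (U : Submodule ℂ B) (r : G) (v : V) : Prop := ∀ b ∈ U, ∀ p, L.op r p b v = 0

lemma KillsOn.add (hpg : Function.Injective pg) {r m : G} (hrm : r ≠ m) {U U' : Submodule ℂ B}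
    {v : V} (hr : L.KillsOn U r v) (hm : L.KillsOn U' m v) : L.KillsOn (U * U') (r + m) v := by
  intro b hb p
  induction hb using Submodule.mul_induction_on' with
  | mem_mul_mem x hx y hy => exact op_add_mul_eq_zero_of_ne hpg hrm (hr x hx) (hm y hy) p
  | add x _ y _ hx hy => rw [map_add, LinearMap.add_apply, hx, hy, add_zero]

lemma killsOn_span_of_basis {ι : Type*} (bs : Basis ι ℂ P) {s : Set B} {r : G} {v : V}
    (h : ∀ b ∈ s, ∀ i, L.op r (bs i) b v = 0) : L.KillsOn (Submodule.span ℂ s) r v :=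
  fun _ hb p => (Submodule.span_le (p := LinearMap.ker ((LinearMap.applyₗ v) ∘ₗ L.op r p))).2
    (fun b hb => op_eq_zero_of_basis bs (h b hb) p) hb

namespace IsIrredHC

lemma kills_of_forall_killsOne (hL : L.IsIrredHC χ) {r : G} (hr : r ≠ 0) {ψ : P →ₗ[ℂ] ℂ}
    (h : ∀ w ∈ L.weightSpace ψ, L.KillsOne r w) {w : V} (hw : w ∈ L.weightSpace ψ) :
    L.Kills r w := by
  obtain ⟨q, hq⟩ := DFunLike.ne_iff.1 ((map_ne_zero_iff pg hL.pairing_injective).2 hr)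
  intro p b
  have hqw : L.op 0 q b w ∈ L.weightSpace ψ := by
    simpa using op_mem_weightSpace hw 0 q b
  have hbr := L.op_op 0 r q p b 1 w
  rw [h _ hqw p, h _ hw p, map_zero, zero_add, map_zero, LinearMap.zero_apply, zero_smul,
    sub_zero, zero_add, mul_one, map_smul, LinearMap.smul_apply, LinearMap.smul_apply] at hbr
  exact (smul_eq_zero.1 hbr.symm).resolve_left hq

lemma eventuallyKills_of_forall_eventually (hL : L.IsIrredHC χ) {k : G} (hk : k ≠ 0)
    (h : ∀ v s b, ∀ᶠ j : ℕ in atTop, ∀ p, L.op (j • k + s) p b v = 0) : L.EventuallyKills k := by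
  have := hL.isAddTorsionFree
  have hle : ∀ x, L.weightSpace (χ + pg x) ≤ L.eventuallyKilled k := by
    intro x w hw s
    have := hL.finiteDimensional_weightSpace (χ + pg x)
    obtain ⟨t, ht⟩ := (Submodule.fg_iff_finiteDimensional (L.weightSpace (χ + pg x))).2 this
    filter_upwards [(Finset.eventually_all t).2 fun v _ => h v s 1, eventually_nsmul_ne hk (-s)]
      with j hj hne
    refine hL.kills_of_forall_killsOne (fun h0 => hne (eq_neg_of_add_eq_zero_left h0))
      (fun y hy p => ?_) hw
    exact (ht ▸ Submodule.span_le (p := LinearMap.ker (L.op (j • k + s) p 1))).2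
      (fun v hv => hj v hv p) hy
  intro v
  rw [hL.eq_top_of_forall_weightSpace_le hle]
  trivial

end IsIrredHC

variable (L) in
/-- The vectors killed by all operators of degree `j • k + s` and coefficient `b`, for `j` large
enough depending on `s` and `b`. -/
def pointwiseEventuallyKilled (k : G) : Submodule ℂ V where
  carrier := {v | ∀ s b, ∀ᶠ j : ℕ in atTop, ∀ p, L.op (j • k + s) p b v = 0}
  add_mem' := fun ha hb s b => by
    filter_upwards [ha s b, hb s b] with j hja hjb p
    rw [map_add, hja, hjb, add_zero]
  zero_mem' := fun _ _ => .of_forall fun _ _ => map_zero _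
  smul_mem' := fun c a ha s b => by
    filter_upwards [ha s b] with j hj p
    rw [map_smul, hj, smul_zero]

lemma invariant_pointwiseEventuallyKilled (k : G) :
    L.Invariant (L.pointwiseEventuallyKilled k) := by
  intro r q b' v hv s b
  filter_upwards [hv s b, hv (s + r) (b * b')] with j hj hj' p
  rw [L.op_op, hj, add_assoc, hj', map_zero, zero_add]

lemma IsIrredHC.eventuallyKills_of_mem_pointwise (hL : L.IsIrredHC χ) {k : G} (hk : k ≠ 0) {v : V}
    (h0 : v ≠ 0) (hv : v ∈ L.pointwiseEventuallyKilled k) : L.EventuallyKills k := by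
  have htop := hL.eq_top_of_mem (invariant_pointwiseEventuallyKilled k) hv h0
  refine hL.eventuallyKills_of_forall_eventually hk fun w => ?_
  change w ∈ L.pointwiseEventuallyKilled k
  rw [htop]
  trivial

lemma IsIrredHC.exists_forall_killsOn [FiniteDimensional ℂ P] (hL : L.IsIrredHC χ) {ι : Type*}
    [Finite ι] (y : ι → G) (s : Finset B) :
    ∃ M, ∀ m, M < finrank ℂ (L.weightSpace (χ + pg m)) →
      ∃ v ≠ 0, ∀ i, L.KillsOn (Submodule.span ℂ s) (y i - m) v := by
  have := Fintype.ofFinite ι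
  have := hL.finiteDimensional_weightSpace
  let bs := Module.finBasis ℂ P
  refine ⟨∑ i : ι × Fin (finrank ℂ P) × s, finrank ℂ (L.weightSpace (χ + pg (y i.1))),
    fun m hm => ?_⟩
  obtain ⟨v, -, hv0, hv⟩ := exists_ne_zero_forall_map_eq_zero (L.weightSpace (χ + pg m))
    (fun i : ι × Fin (finrank ℂ P) × s => L.weightSpace (χ + pg (y i.1)))
    (fun i => L.op (y i.1 - m) (bs i.2.1) (i.2.2 : B))
    (fun i v hv => op_mem_weightSpace_of_eq hv _ _ (by abel)) hm
  exact ⟨v, hv0, fun i => killsOn_span_of_basis bs fun b hb j => hv (i, j, ⟨b, hb⟩)⟩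

/-- The vertices of the standard simplex in `ℤ^ι`. -/
def simplexVertex {ι : Type*} [DecidableEq ι] (f : Option ι) : ι → ℤ :=
  f.elim 0 fun i => Pi.single i 1

section Simplex

variable {ι : Type*} [DecidableEq ι]

lemma exists_addMonoidHom_simplexVertex_sub_lt {m : ι → ℤ} {i₀ : ι} (hm : 4 ≤ |m i₀|) :
    ∃ θ : (ι → ℤ) →+ ℤ, ∀ f f' f'' : Option ι,
      θ (simplexVertex f - m) < θ (simplexVertex f' - m) + θ (simplexVertex f'' - m) := by
  obtain ⟨ε, hε, hεm⟩ : ∃ ε : ℤ, |ε| = 1 ∧ ε * m i₀ = - |m i₀| := by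
    rcases abs_cases (m i₀) with h | h
    · exact ⟨-1, by simp, by omega⟩
    · exact ⟨1, by simp, by omega⟩
  have hvertex : ∀ f : Option ι, |ε * simplexVertex f i₀| ≤ 1 := by
    intro f
    rw [abs_mul, hε, one_mul]
    rcases f with _ | i
    · simp [simplexVertex]
    · rcases eq_or_ne i₀ i with rfl | h <;> simp [simplexVertex, *]
  refine ⟨ε • Pi.evalAddMonoidHom (fun _ => ℤ) i₀, fun f f' f'' => ?_⟩
  have hf := abs_le.1 (hvertex f)
  have hf' := abs_le.1 (hvertex f')
  have hf'' := abs_le.1 (hvertex f'')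
  simp only [AddMonoidHom.smul_apply, Pi.evalAddMonoidHom_apply, Pi.sub_apply, smul_eq_mul,
    mul_sub, hεm]
  omega

lemma exists_sum_zsmul_simplexVertex_sub_eq [Fintype ι] (m z : ι → ℤ) :
    ∃ w : Option ι → ℤ, ∑ f, w f • (simplexVertex f - m) = z := by
  refine ⟨fun f => f.elim (-∑ i, z i) z, ?_⟩
  simp only [Fintype.sum_option, simplexVertex, Option.elim, smul_sub, Finset.sum_sub_distrib,
    ← Finset.sum_smul]
  have hz : ∑ i, z i • (Pi.single i 1 : ι → ℤ) = z := by
    ext i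
    simp [Finset.sum_apply, Pi.single_apply]
  rw [hz]
  module

lemma eventually_exists_multiset_sum_eq [Fintype ι] (m z : ι → ℤ) (t : ℕ) :
    ∀ᶠ j : ℕ in atTop, ∃ σ : Multiset (Option ι), t ≤ σ.card ∧
      (σ.map fun f => simplexVertex f - m).sum = j • ∑ f, (simplexVertex f - m) + z := by
  obtain ⟨w, hw⟩ := exists_sum_zsmul_simplexVertex_sub_eq m z
  filter_upwards [eventually_all.2 fun f => eventually_ge_atTop (t + (w f).natAbs)] with j hj
  have hc : ∀ f, t ≤ (j + w f).toNat ∧ ((j + w f).toNat : ℤ) = j + w f := fun f => by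
    have := hj f
    omega
  refine ⟨∑ f, Multiset.replicate (j + w f).toNat f, ?_, ?_⟩
  · simp only [Multiset.card_sum, Multiset.card_replicate]
    exact (hc none).1.trans (Finset.single_le_sum (f := fun f => (j + w f).toNat)
      (fun _ _ => Nat.zero_le _) (Finset.mem_univ none))
  · have hterm : ∀ f, (j + w f).toNat • (simplexVertex f - m) =
        j • (simplexVertex f - m) + w f • (simplexVertex f - m) := fun f => by
      rw [← natCast_zsmul, (hc f).2, add_smul, natCast_zsmul]
    simp only [sum_map_sum_replicate, hterm, Finset.sum_add_distrib, ← Finset.smul_sum, hw]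

end Simplex

lemma exists_lt_and_le_abs {ι : Type*} [Finite ι] {D : (ι → ℤ) → ℕ} (hD : ∀ M, ∃ x, M < D x)
    (M : ℕ) (c : ℤ) : ∃ m, M < D m ∧ ∃ i, c ≤ |m i| := by
  obtain ⟨N, hN⟩ := ((Set.Finite.pi' fun _ : ι => Set.finite_Icc (-c) c).image D).bddAbove
  obtain ⟨m, hm⟩ := hD (M + N)
  refine ⟨m, by omega, ?_⟩
  by_contra! h
  have := hN (Set.mem_image_of_mem D fun i => abs_le.1 (h i).le)
  omega

-- At a weight `χ + pg m` of large multiplicity some vector `v` is killed in all the degrees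
-- `simplexVertex f - m`. These generate `ℤ^ι`, so sums of them reach every degree
-- `j • k + z`, where `k` is their sum and `j` is large.
theorem IsIrredHC.exists_eventuallyKills {ι : Type*} [Finite ι]
    {pg : (ι → ℤ) →+ (P →ₗ[ℂ] ℂ)} {L : LoopRep pg B V} [FiniteDimensional ℂ P]
    [Algebra.FiniteType ℂ B] (hL : L.IsIrredHC χ)
    (hub : ∀ M : ℕ, ∃ x, M < finrank ℂ (L.weightSpace (χ + pg x))) :
    ∃ k, L.EventuallyKills k := by
  classical
  have := Fintype.ofFinite ι
  obtain ⟨s, hs1, hs⟩ := exists_finset_forall_mem_span_pow ℂ B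
  obtain ⟨M, hM⟩ := hL.exists_forall_killsOn (simplexVertex : Option ι → ι → ℤ) s
  obtain ⟨m, hm, i₀, hi₀⟩ := exists_lt_and_le_abs hub M 4
  obtain ⟨v, hv0, hv⟩ := hM m hm
  obtain ⟨θ, hθ⟩ := exists_addMonoidHom_simplexVertex_sub_lt hi₀
  let a : Option ι → ι → ℤ := fun f => simplexVertex f - m
  have hne : a none ≠ a (some i₀) := fun h => by
    have hi := congrFun (sub_left_injective h) i₀
    simp [simplexVertex] at hi
  have hkills := sum_map_of_add_of_ne
    (Q := fun t g => L.KillsOn (Submodule.span ℂ (s : Set B) ^ t) g v)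
    (fun hgh hg hh => pow_add (Submodule.span ℂ (s : Set B)) _ _ ▸
      hg.add hL.pairing_injective hgh hh)
    (fun f => (pow_one (Submodule.span ℂ (s : Set B))).symm ▸ hv f) hθ hne
  refine ⟨∑ f, a f, hL.eventuallyKills_of_mem_pointwise (fun h0 => ?_) hv0 fun z b => ?_⟩
  · have hpos : 0 < ∑ f, θ (a f) :=
      Finset.sum_pos (fun f _ => by linarith [hθ f f f]) Finset.univ_nonempty
    rw [← map_sum, h0, map_zero] at hpos
    exact hpos.false
  · obtain ⟨t, ht⟩ := hs b
    filter_upwards [eventually_exists_multiset_sum_eq m (z - (a none + a (some i₀))) t]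
      with j ⟨σ, hσ, hsum⟩ p
    have hdeg : (σ.map a).sum + (a none + a (some i₀)) = j • ∑ f, a f + z := by
      rw [hsum, add_assoc, sub_add_cancel]
    exact hdeg ▸ hkills σ b (pow_le_pow_right' hs1 (hσ.trans (Nat.le_add_right _ _)) ht) p

end UnboundedMultiplicities

section BracketStable

/-- A set `C` of parameters `(p, b)` such that the span of the `r ⊗ p ⊗ b` with `(p, b) ∈ C` is an
ideal of the loop algebra. -/
def BracketStable (pg : G →+ (P →ₗ[ℂ] ℂ)) (C : Set (P × B)) : Prop :=
  ∀ ⦃q b'⦄, (q, b') ∈ C → ∀ m m' p b, (pg m p • q - pg m' q • p, b * b') ∈ C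

lemma op_commutator (m k : G) (q p : P) (c b : B) :
    L.op m q c * L.op k p b - L.op k p b * L.op m q c =
      L.op (m + k) (pg k q • p - pg m p • q) (c * b) := by
  ext v
  simp [L.op_op m k q p c b v]

lemma IsIrredHC.op_eq_zero_of_bracketStable (hL : L.IsIrredHC χ) {C : Set (P × B)}
    (hC : BracketStable pg C) {z : V} (hz0 : z ≠ 0)
    (hz : ∀ m, ∀ c ∈ C, L.op m c.1 c.2 z = 0) (m : G) {c : P × B} (hc : c ∈ C) :
    L.op m c.1 c.2 = 0 := by
  let U : Submodule ℂ V := ⨅ m : G, ⨅ c : C, LinearMap.ker (L.op m c.1.1 c.1.2)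
  have mem_U : ∀ v, v ∈ U ↔ ∀ m, ∀ c ∈ C, L.op m c.1 c.2 v = 0 := fun v => by
    simp [U, Submodule.mem_iInf]
  have hU : L.Invariant U := by
    intro r q b v hv
    rw [mem_U] at hv ⊢
    rintro m ⟨p, b'⟩ hc
    have hbr := LinearMap.congr_fun (L.op_commutator r m q p b b') v
    rw [LinearMap.sub_apply, Module.End.mul_apply, Module.End.mul_apply, hv m _ hc, map_zero,
      zero_sub, hv _ _ (hC hc m r q b)] at hbr
    exact neg_eq_zero.1 hbr
  ext v
  exact (mem_U v).1 (hL.eq_top_of_mem hU ((mem_U z).2 hz) hz0 ▸ Submodule.mem_top) m c hc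

end BracketStable

section Highest

variable {deg : G →+ ℤ} {u₀ : P}

/-- Submodules stable under the operators of nonpositive degree. -/
def NonposStable (L : LoopRep pg B V) (deg : G →+ ℤ) (W : Submodule ℂ V) : Prop :=
  ∀ r, deg r ≤ 0 → ∀ p b, ∀ v ∈ W, L.op r p b v ∈ W

-- The elementary substitute for PBW: `U(𝔤) U = U(𝔤_{≤ 0}) U` if `𝔤_{> 0}` kills `U`.
lemma invariant_sInf_nonposStable {U : Submodule ℂ V} (hU : ∀ v ∈ U, ∀ r, 0 < deg r → L.Kills r v) :
    L.Invariant (sInf {W | U ≤ W ∧ L.NonposStable deg W}) := by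
  set M := sInf {W | U ≤ W ∧ L.NonposStable deg W}
  have hUM : U ≤ M := le_sInf fun W hW => hW.1
  have hM : L.NonposStable deg M := fun r hr p b v hv =>
    Submodule.mem_sInf.2 fun W hW => hW.2 r hr p b v (Submodule.mem_sInf.1 hv W hW)
  let M' : Submodule ℂ V :=
    M ⊓ ⨅ r : {r : G // 0 < deg r}, ⨅ p : P, ⨅ b : B, M.comap (L.op r.1 p b)
  have mem_M' : ∀ v, v ∈ M' ↔ v ∈ M ∧ ∀ r, 0 < deg r → ∀ p b, L.op r p b v ∈ M := fun v => by
    simp [M', Submodule.mem_iInf]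
  have hMM' : M ≤ M' := by
    refine sInf_le ⟨fun v hv => (mem_M' v).2 ⟨hUM hv, fun r hr p b => ?_⟩,
      fun s hs q b' v hv => ?_⟩
    · exact (hU v hv r hr p b).symm ▸ M.zero_mem
    · rw [mem_M'] at hv ⊢
      refine ⟨hM s hs q b' v hv.1, fun r hr p b => ?_⟩
      rw [L.op_op]
      refine M.add_mem (hM s hs q b' _ (hv.2 r hr p b)) ?_
      rcases le_or_gt (deg (r + s)) 0 with h | h
      · exact hM _ h _ _ v hv.1
      · exact hv.2 _ h _ _
  intro r p b v hv
  rcases le_or_gt (deg r) 0 with h | h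
  · exact hM r h p b v hv
  · exact ((mem_M' v).1 (hMM' hv)).2 r h p b

lemma IsIrredHC.eq_top_of_nonposStable (hL : L.IsIrredHC χ) {U W : Submodule ℂ V}
    (hU : ∀ v ∈ U, ∀ r, 0 < deg r → L.Kills r v) (h0 : U ≠ ⊥) (hUW : U ≤ W)
    (hW : L.NonposStable deg W) : W = ⊤ := by
  obtain ⟨v, hv, hv0⟩ := Submodule.exists_mem_ne_zero_of_ne_bot h0
  have htop := hL.eq_top_of_mem (invariant_sInf_nonposStable hU)
    (Submodule.mem_sInf.2 fun W hW => hW.1 hv) hv0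
  exact top_unique (htop ▸ sInf_le ⟨hUW, hW⟩)

/-- An irreducible Harish-Chandra module whose weights lie in the half space `deg ≤ 0` and include
`χ`. The parameter `u₀ ∈ P` is the Cartan element on which the weights read off the degree. -/
structure IsHighest (L : LoopRep pg B V) (χ : P →ₗ[ℂ] ℂ) (deg : G →+ ℤ) (u₀ : P) : Prop
    extends L.IsIrredHC χ where
  pairing_apply : ∀ m, pg m u₀ = deg m
  deg_nonpos : ∀ x, L.weightSpace (χ + pg x) ≠ ⊥ → deg x ≤ 0
  weightSpace_ne_bot : L.weightSpace χ ≠ ⊥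

/-- The sum of the weight spaces of degree `d`, as an eigenspace of the Cartan element `u₀`. -/
def level (L : LoopRep pg B V) (χ : P →ₗ[ℂ] ℂ) (u₀ : P) (d : ℤ) : Submodule ℂ V :=
  (L.op 0 u₀ 1).eigenspace (χ u₀ + d)

/-- The sum of the levels below the top level. -/
def lowerLevels (L : LoopRep pg B V) (χ : P →ₗ[ℂ] ℂ) (u₀ : P) : Submodule ℂ V :=
  ⨆ d : Set.Iio (0 : ℤ), L.level χ u₀ d

lemma mem_level {d : ℤ} {v : V} : v ∈ L.level χ u₀ d ↔ L.op 0 u₀ 1 v = (χ u₀ + d) • v :=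
  Module.End.mem_eigenspace_iff

lemma iSupIndep_level : iSupIndep (L.level χ u₀) :=
  (L.op 0 u₀ 1).eigenspaces_iSupIndep.comp (f := fun d : ℤ => χ u₀ + d)
    fun x y h => by simpa using h

lemma level_le_lowerLevels {d : ℤ} (hd : d < 0) : L.level χ u₀ d ≤ L.lowerLevels χ u₀ :=
  le_iSup (fun d : Set.Iio (0 : ℤ) => L.level χ u₀ d) ⟨d, hd⟩

lemma disjoint_level_zero_lowerLevels : Disjoint (L.level χ u₀ 0) (L.lowerLevels χ u₀) :=
  (iSupIndep_level 0).mono_right (iSup_le fun d =>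
    le_iSup₂ (f := fun j (_ : j ≠ 0) => L.level χ u₀ j) (d : ℤ) (ne_of_lt d.2))

lemma eq_level_zero_of_sup_lowerLevels_eq_top {U : Submodule ℂ V} (hU : U ≤ L.level χ u₀ 0)
    (h : U ⊔ L.lowerLevels χ u₀ = ⊤) : U = L.level χ u₀ 0 := by
  have hmod := sup_inf_assoc_of_le (L.lowerLevels χ u₀) hU
  rw [h, top_inf_eq, inf_comm, disjoint_level_zero_lowerLevels.eq_bot, sup_bot_eq] at hmod
  exact hmod.symm

namespace IsHighest

lemma op_mem_level (hH : L.IsHighest χ deg u₀) {d e : ℤ} {v : V} (hv : v ∈ L.level χ u₀ d) {r : G}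
    (p : P) (b : B) (he : e = d + deg r) : L.op r p b v ∈ L.level χ u₀ e := by
  rw [mem_level] at hv ⊢
  rw [L.op_op, hv, hH.pairing_apply]
  simp [he, ← add_smul, add_assoc]

lemma weightSpace_le_level (hH : L.IsHighest χ deg u₀) (x : G) :
    L.weightSpace (χ + pg x) ≤ L.level χ u₀ (deg x) := fun v hv => by
  rw [mem_level, mem_weightSpace.1 hv u₀, LinearMap.add_apply, hH.pairing_apply]

lemma level_eq_bot (hH : L.IsHighest χ deg u₀) {d : ℤ} (hd : 0 < d) : L.level χ u₀ d = ⊥ := by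
  refine disjoint_top.1 (hH.eq_top_of_forall_weightSpace_le (fun x => ?_) ▸ iSupIndep_level d)
  by_cases hx : L.weightSpace (χ + pg x) = ⊥
  · exact hx ▸ bot_le
  · have := hH.deg_nonpos x hx
    exact (hH.weightSpace_le_level x).trans (le_iSup₂_of_le (deg x) (by omega) le_rfl)

lemma kills_of_pos (hH : L.IsHighest χ deg u₀) {d : ℤ} {v : V} (hv : v ∈ L.level χ u₀ d) {r : G}
    (h : 0 < d + deg r) : L.Kills r v := fun p b => by
  have hmem := hH.op_mem_level (r := r) hv p b rfl
  rwa [hH.level_eq_bot h, Submodule.mem_bot] at hmem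

lemma level_zero_ne_bot (hH : L.IsHighest χ deg u₀) : L.level χ u₀ 0 ≠ ⊥ :=
  ne_bot_of_le_ne_bot hH.weightSpace_ne_bot (by simpa using hH.weightSpace_le_level 0)

lemma nonposStable_lowerLevels (hH : L.IsHighest χ deg u₀) :
    L.NonposStable deg (L.lowerLevels χ u₀) := by
  intro r hr p b
  suffices L.lowerLevels χ u₀ ≤ (L.lowerLevels χ u₀).comap (L.op r p b) from fun v hv => this hv
  refine iSup_le fun d w hw => level_le_lowerLevels ?_ (hH.op_mem_level hw p b rfl)
  have := Set.mem_Iio.1 d.2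
  omega

lemma eq_zero_of_mem_lowerLevels (hH : L.IsHighest χ deg u₀) {w : V}
    (hw : w ∈ L.lowerLevels χ u₀) (h : ∀ r, 0 < deg r → L.Kills r w) : w = 0 := by
  by_contra h0
  have hspan : ∀ v ∈ ℂ ∙ w, ∀ r, 0 < deg r → L.Kills r v := fun v hv r hr p b => by
    obtain ⟨c, rfl⟩ := Submodule.mem_span_singleton.1 hv
    rw [map_smul, h r hr p b, smul_zero]
  have htop : L.lowerLevels χ u₀ = ⊤ := hH.eq_top_of_nonposStable hspan (by simpa using h0)
    (by simpa using hw) hH.nonposStable_lowerLevels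
  have hdisj := disjoint_level_zero_lowerLevels (L := L) (χ := χ) (u₀ := u₀)
  exact hH.level_zero_ne_bot (disjoint_top.1 (htop ▸ hdisj))

lemma eq_level_zero_of_stable (hH : L.IsHighest χ deg u₀) {U : Submodule ℂ V}
    (hU : U ≤ L.level χ u₀ 0) (hstable : ∀ r, deg r = 0 → ∀ p b, ∀ v ∈ U, L.op r p b v ∈ U)
    (h0 : U ≠ ⊥) : U = L.level χ u₀ 0 := by
  refine eq_level_zero_of_sup_lowerLevels_eq_top hU (hH.eq_top_of_nonposStable (U := U)
    (fun v hv r hr => hH.kills_of_pos (hU hv) (by rwa [zero_add])) h0 le_sup_left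
    fun r hr p b v hv => ?_)
  obtain ⟨u, hu, w, hw, rfl⟩ := Submodule.mem_sup.1 hv
  rw [map_add]
  refine Submodule.add_mem _ ?_
    (Submodule.mem_sup_right (hH.nonposStable_lowerLevels r hr p b w hw))
  rcases hr.lt_or_eq with h | h
  · exact Submodule.mem_sup_right (level_le_lowerLevels (d := 0 + deg r) (by omega)
      (hH.op_mem_level (hU hu) p b rfl))
  · exact Submodule.mem_sup_left (hstable r h p b u hu)

lemma weightSpace_le_level_zero (hH : L.IsHighest χ deg u₀) (x : deg.ker) :
    L.weightSpace (χ + pg x) ≤ L.level χ u₀ 0 := by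
  simpa [AddMonoidHom.mem_ker.1 x.2] using hH.weightSpace_le_level x

lemma iSup_weightSpace_ker (hH : L.IsHighest χ deg u₀) :
    ⨆ x : deg.ker, L.weightSpace (χ + pg x) = L.level χ u₀ 0 := by
  refine eq_level_zero_of_sup_lowerLevels_eq_top (iSup_le hH.weightSpace_le_level_zero)
    (hH.eq_top_of_forall_weightSpace_le fun x => ?_)
  by_cases hx : L.weightSpace (χ + pg x) = ⊥
  · exact hx ▸ bot_le
  rcases (hH.deg_nonpos x hx).lt_or_eq with h | h
  · exact le_sup_of_le_right ((hH.weightSpace_le_level x).trans (level_le_lowerLevels h))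
  · exact le_sup_of_le_left (le_iSup (fun x : deg.ker => L.weightSpace (χ + pg x)) ⟨x, h⟩)

lemma op_eq_zero_of_mem_level_zero (hH : L.IsHighest χ deg u₀) {C : Set (P × B)}
    (hC : BracketStable pg C)
    (h0 : ∀ s, deg s = 0 → ∀ c ∈ C, ∀ v ∈ L.level χ u₀ 0, L.op s c.1 c.2 v = 0)
    {v : V} (hv : v ∈ L.level χ u₀ 0) (s : G) {c : P × B} (hc : c ∈ C) :
    L.op s c.1 c.2 v = 0 := by
  obtain ⟨N, hN⟩ : ∃ N : ℕ, -(N : ℤ) ≤ deg s := ⟨(-deg s).toNat, by omega⟩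
  -- Below the top level, an operator of the ideal yields singular vectors, by descending induction.
  induction N generalizing s c with
  | zero =>
    rcases hN.lt_or_eq with h | h
    · exact hH.kills_of_pos hv (by omega) _ _
    · exact h0 s (by omega) c hc v hv
  | succ N ih =>
    rcases le_or_gt (-(N : ℤ)) (deg s) with h | h
    · exact ih s hc h
    refine hH.eq_zero_of_mem_lowerLevels (level_le_lowerLevels (d := 0 + deg s) (by omega)
      (hH.op_mem_level hv _ _ rfl)) fun r hr p b => ?_
    rw [L.op_op, hH.kills_of_pos hv (by omega), map_zero, zero_add]
    exact ih (r + s) (hC hc s r p b) (by rw [map_add]; push_cast at hN; omega)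

/-- The action of the degree zero part on the top level. -/
def topRep (hH : L.IsHighest χ deg u₀) :
    LoopRep (pg.comp deg.ker.subtype) B (L.level χ u₀ 0) where
  op k := LinearMap.mk₂ ℂ (fun p b => (L.op k.1 p b).restrict fun v hv =>
      hH.op_mem_level hv p b (by rw [k.2]; rfl))
    (fun _ _ _ => by ext; simp) (fun _ _ _ => by ext; simp) (fun _ _ _ => by ext; simp)
    (fun _ _ _ => by ext; simp)
  op_op r m p q b b' v := by
    ext
    simpa using L.op_op r.1 m.1 p q b b' v

@[simp]
lemma coe_topRep_op (hH : L.IsHighest χ deg u₀) (k : deg.ker) (p : P) (b : B)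
    (z : L.level χ u₀ 0) : (hH.topRep.op k p b z : V) = L.op k.1 p b z := rfl

lemma mem_weightSpace_topRep (hH : L.IsHighest χ deg u₀) {ψ : P →ₗ[ℂ] ℂ} {z : L.level χ u₀ 0} :
    z ∈ hH.topRep.weightSpace ψ ↔ (z : V) ∈ L.weightSpace ψ := by
  simp [mem_weightSpace, Subtype.ext_iff]

lemma weightSpace_topRep (hH : L.IsHighest χ deg u₀) (ψ : P →ₗ[ℂ] ℂ) :
    hH.topRep.weightSpace ψ = (L.weightSpace ψ).comap (L.level χ u₀ 0).subtype := by
  ext z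
  exact hH.mem_weightSpace_topRep

lemma op_eq_zero_of_topRep (hH : L.IsHighest χ deg u₀) {C : Set (P × B)}
    (hC : BracketStable pg C) (h0 : ∀ k, ∀ c ∈ C, hH.topRep.op k c.1 c.2 = 0) (r : G) {c : P × B}
    (hc : c ∈ C) : L.op r c.1 c.2 = 0 := by
  obtain ⟨v, hv, hv0⟩ := Submodule.exists_mem_ne_zero_of_ne_bot hH.level_zero_ne_bot
  refine hH.op_eq_zero_of_bracketStable hC hv0 (fun s c hc =>
    hH.op_eq_zero_of_mem_level_zero hC (fun s hs c hc v hv => ?_) hv s hc) r hc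
  simpa using congrArg Subtype.val (LinearMap.congr_fun (h0 ⟨s, hs⟩ c hc) ⟨v, hv⟩)

lemma topRep_eq_bot_or_eq_top (hH : L.IsHighest χ deg u₀) (U : Submodule ℂ (L.level χ u₀ 0))
    (hU : hH.topRep.Invariant U) : U = ⊥ ∨ U = ⊤ := by
  have hinj := Submodule.map_injective_of_injective (L.level χ u₀ 0).injective_subtype
  refine or_iff_not_imp_left.2 fun h => hinj ?_
  rw [Submodule.map_subtype_top]
  refine hH.eq_level_zero_of_stable (Submodule.map_subtype_le _ _) ?_
    (fun h0 => h (hinj (h0.trans (Submodule.map_bot _).symm)))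
  rintro r hr p b _ ⟨z, hz, rfl⟩
  exact ⟨_, hU ⟨r, hr⟩ p b z hz, rfl⟩

lemma iSup_weightSpace_topRep (hH : L.IsHighest χ deg u₀) :
    ⨆ x, hH.topRep.weightSpace (χ + (pg.comp deg.ker.subtype) x) = ⊤ := by
  refine Submodule.map_injective_of_injective (L.level χ u₀ 0).injective_subtype ?_
  rw [Submodule.map_subtype_top, Submodule.map_iSup]
  refine Eq.trans (iSup_congr fun x => ?_) hH.iSup_weightSpace_ker
  rw [weightSpace_topRep, Submodule.map_comap_subtype]
  exact inf_eq_right.2 (hH.weightSpace_le_level_zero x)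

lemma eq_zero_of_forall_topRep_op_eq_zero (hH : L.IsHighest χ deg u₀) (z : L.level χ u₀ 0)
    (hz : ∀ k p b, hH.topRep.op k p b z = 0) : z = 0 := by
  by_contra hz0
  let U : Submodule ℂ (L.level χ u₀ 0) :=
    ⨅ k : deg.ker, ⨅ p : P, ⨅ b : B, LinearMap.ker (hH.topRep.op k p b)
  have mem_U : ∀ v, v ∈ U ↔ ∀ k p b, hH.topRep.op k p b v = 0 := fun v => by
    simp [U, Submodule.mem_iInf]
  have hU : U = ⊤ := (hH.topRep_eq_bot_or_eq_top U fun r p b v hv =>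
    ((mem_U v).1 hv r p b).symm ▸ U.zero_mem).resolve_left
      fun h => hz0 (by simpa [h] using (mem_U z).2 hz)
  refine hz0 (Subtype.ext (hH.eq_zero_of_forall_op_eq_zero z fun r p b => ?_))
  rw [hH.op_eq_zero_of_topRep (C := Set.univ) (fun _ _ _ _ _ _ _ => trivial) (fun k c _ => ?_) r
    (c := (p, b)) trivial, LinearMap.zero_apply]
  ext w
  exact congrArg Subtype.val ((mem_U w).1 (hU ▸ Submodule.mem_top) k c.1 c.2)

lemma isIrredHC_topRep (hH : L.IsHighest χ deg u₀) : hH.topRep.IsIrredHC χ where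
  pairing_injective := hH.pairing_injective.comp Subtype.val_injective
  eq_bot_or_eq_top := hH.topRep_eq_bot_or_eq_top
  finiteDimensional_weightSpace ψ := by
    have := hH.finiteDimensional_weightSpace ψ
    have : FiniteDimensional ℂ (LinearMap.ker (L.level χ u₀ 0).subtype) := by
      rw [Submodule.ker_subtype]
      infer_instance
    rw [weightSpace_topRep]
    infer_instance
  iSup_weightSpace := hH.iSup_weightSpace_topRep
  eq_zero_of_forall_op_eq_zero := hH.eq_zero_of_forall_topRep_op_eq_zero
  nontrivial := Submodule.nontrivial_iff_ne_bot.2 hH.level_zero_ne_bot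

end IsHighest

end Highest

section Tested

variable {u₀ : P} {γ : P →ₗ[ℂ] ℂ}

/-- The parameter of the bracket of an operator of degree `-β - x` and parameter `p` with one of
degree `β + k` and parameter `q`, where `γ = pg β`. -/
def testParam (pg : G →+ (P →ₗ[ℂ] ℂ)) (γ : P →ₗ[ℂ] ℂ) (x k : G) (p q : P) : P :=
  (-pg x q - γ q) • p - (γ p + pg k p) • q

variable (L) in
/-- The properties of the top level of a highest weight module on which its analysis rests. The
vectors of weight `χ + pg x` killed by the products of an operator of degree `-β - x` with all
operators of degrees in `β + G` are determined by finitely many tests, where `γ = pg β`. -/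
structure IsTested (χ : P →ₗ[ℂ] ℂ) (u₀ : P) (γ : P →ₗ[ℂ] ℂ) : Prop extends L.IsIrredHC χ where
  pairing_apply : ∀ m, pg m u₀ = 0
  apply_eq_one : γ u₀ = 1
  nontrivial_degrees : Nontrivial G
  exists_finset : ∃ T : Finset (G × P × B), ∀ x b p, ∀ z ∈ L.weightSpace (χ + pg x),
    (∀ t ∈ T, L.op (t.1 - x) (testParam pg γ x t.1 p t.2.1) (b * t.2.2) z = 0) →
    ∀ k q b', L.op (k - x) (testParam pg γ x k p q) (b * b') z = 0

namespace IsHighest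

variable {deg : G →+ ℤ}

lemma op_op_topRep (hH : L.IsHighest χ deg u₀) {β : G} (hβ : deg β = 1) (x k : deg.ker) (p q : P)
    (b b' : B) (z : L.level χ u₀ 0) :
    L.op (β + k) q b' (L.op (-β - x) p b z) =
      hH.topRep.op (k - x) (testParam (pg.comp deg.ker.subtype) (pg β) x k p q) (b * b') z := by
  have hdeg : β + k.1 + (-β - x.1) = (k - x).1 := by
    rw [AddSubgroup.coe_sub]
    abel
  have hparam : pg (-β - x.1) q • p - pg (β + k.1) p • q =
      testParam (pg.comp deg.ker.subtype) (pg β) x k p q := by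
    simp only [testParam, map_add, map_sub, map_neg, LinearMap.add_apply, LinearMap.sub_apply,
      LinearMap.neg_apply, AddMonoidHom.comp_apply, AddSubgroup.subtype_apply]
    module
  rw [L.op_op, hH.kills_of_pos z.2 (by rw [map_add, hβ, k.2]; norm_num), map_zero, zero_add,
    coe_topRep_op, mul_comm, hdeg, hparam]

lemma exists_finset_separating_level (hH : L.IsHighest χ deg u₀) {β : G} (hβ : deg β = 1) :
    ∃ T : Finset (deg.ker × P × B), ∀ v ∈ L.weightSpace (χ + pg (-β)),
      (∀ t ∈ T, L.op (β + t.1) t.2.1 t.2.2 v = 0) → v = 0 := by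
  have := hH.finiteDimensional_weightSpace (χ + pg (-β))
  refine exists_finset_separating (L.weightSpace (χ + pg (-β)))
    (fun t : deg.ker × P × B => L.op (β + t.1) t.2.1 t.2.2) fun v hv h => ?_
  have hv' : v ∈ L.level χ u₀ (-1) := by
    have hmem := hH.weightSpace_le_level (-β) hv
    rwa [map_neg, hβ] at hmem
  refine hH.eq_zero_of_mem_lowerLevels (level_le_lowerLevels (by norm_num) hv') fun r hr => ?_
  by_cases hr1 : deg r = 1
  · intro p b
    simpa using h ⟨⟨r - β, by simp [AddMonoidHom.mem_ker, hr1, hβ]⟩, p, b⟩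
  · exact hH.kills_of_pos hv' (by omega)

lemma isTested_topRep (hH : L.IsHighest χ deg u₀) {β : G} (hβ : deg β = 1) [Nontrivial deg.ker] :
    hH.topRep.IsTested χ u₀ (pg β) where
  toIsIrredHC := hH.isIrredHC_topRep
  pairing_apply m := by
    have hm : deg m.1 = 0 := m.2
    simp [hH.pairing_apply, hm]
  apply_eq_one := by simp [hH.pairing_apply, hβ]
  nontrivial_degrees := inferInstance
  exists_finset := by
    obtain ⟨T, hT⟩ := hH.exists_finset_separating_level hβ
    refine ⟨T, fun x b p z hz hzT k q b' => Subtype.ext ?_⟩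
    have hlower : L.op (-β - x.1) p b z = 0 := by
      refine hT _ (op_mem_weightSpace_of_eq (hH.mem_weightSpace_topRep.1 hz) p b (by simp))
        fun t ht => ?_
      rw [hH.op_op_topRep hβ, hzT t ht, ZeroMemClass.coe_zero]
    rw [← hH.op_op_topRep hβ, hlower, map_zero, ZeroMemClass.coe_zero]

end IsHighest

namespace IsTested

-- The parameter `p = u₀` recovers the tests for all operators.
lemma exists_tests (hT : L.IsTested χ u₀ γ) : ∃ (T : Finset (G × P × B)) (φ : G → P → P),
    ∀ x b, ∀ z ∈ L.weightSpace (χ + pg x),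
      (∀ t ∈ T, L.op (t.1 - x) (φ x t.2.1) (b * t.2.2) z = 0) →
        ∀ m p b', L.op m p (b * b') z = 0 := by
  have hparam : ∀ x k q, testParam pg γ x k u₀ q = (-pg x q - γ q) • u₀ - q := fun x k q => by
    simp [testParam, hT.pairing_apply, hT.apply_eq_one]
  obtain ⟨T, h⟩ := hT.exists_finset
  refine ⟨T, fun x q => (-pg x q - γ q) • u₀ - q, fun x b z hz hzT m p b' => ?_⟩
  have hall : ∀ q, L.op m ((-pg x q - γ q) • u₀ - q) (b * b') z = 0 := fun q => by
    simpa [hparam] using h x b u₀ z hz (fun t ht => by rw [hparam]; exact hzT t ht) (m + x) q b'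
  have hu₀ : L.op m u₀ (b * b') z = 0 := by
    have hneg : (-pg x u₀ - γ u₀) • u₀ - u₀ = (-2 : ℂ) • u₀ := by
      rw [hT.pairing_apply, hT.apply_eq_one]
      module
    simpa [hneg] using hall u₀
  simpa [hu₀] using hall p

lemma exists_tests_of_central (hT : L.IsTested χ u₀ γ) {p : P} (hp : ∀ k, pg k p = 0)
    (hγ : γ p = 0) : ∃ (T : Finset (G × P × B)) (φ : G → P → ℂ),
    ∀ x, ∀ z ∈ L.weightSpace (χ + pg x),
      (∀ t ∈ T, L.op (t.1 - x) (φ x t.2.1 • p) t.2.2 z = 0) → ∀ m b, L.op m p b z = 0 := by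
  have hparam : ∀ x k q, testParam pg γ x k p q = (-pg x q - γ q) • p := fun x k q => by
    simp [testParam, hp, hγ]
  obtain ⟨T, h⟩ := hT.exists_finset
  refine ⟨T, fun x q => -pg x q - γ q, fun x z hz hzT m b => ?_⟩
  simpa [hparam, hT.pairing_apply, hT.apply_eq_one] using
    h x 1 p z hz (fun t ht => by rw [hparam, one_mul]; exact hzT t ht) (m + x) u₀ b

lemma exists_finrank_le (hT : L.IsTested χ u₀ γ) :
    ∃ N, ∀ x, finrank ℂ (L.weightSpace (χ + pg x)) ≤ N := by
  obtain ⟨T, φ, h⟩ := hT.exists_tests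
  have := hT.finiteDimensional_weightSpace
  refine ⟨∑ t : T, finrank ℂ (L.weightSpace (χ + pg t.1.1)), fun x => ?_⟩
  by_contra! hlt
  obtain ⟨z, hz, hz0, hzT⟩ := exists_ne_zero_forall_map_eq_zero (L.weightSpace (χ + pg x))
    (fun t : T => L.weightSpace (χ + pg t.1.1))
    (fun t : T => L.op (t.1.1 - x) (φ x t.1.2.1) (1 * t.1.2.2))
    (fun t z hz => op_mem_weightSpace_of_eq hz _ _ (by abel)) hlt
  refine hz0 (hT.eq_zero_of_forall_op_eq_zero z fun m p b => ?_)
  simpa using h x 1 z hz (fun t ht => hzT ⟨t, ht⟩) m p b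

end IsTested

end Tested

section AdStable

variable (L) in
/-- A commutative algebra of operators, stable under brackets with the loop algebra. -/
structure AdStable (R : Subalgebra ℂ (Module.End ℂ V)) : Prop where
  commute : ∀ a ∈ R, ∀ b ∈ R, Commute a b
  bracket_mem : ∀ m q b, ∀ a ∈ R, L.op m q b * a - a * L.op m q b ∈ R

lemma adStable_adjoin {F : Set (Module.End ℂ V)} (hcomm : ∀ f ∈ F, ∀ g ∈ F, f * g = g * f)
    (hbr : ∀ m q b, ∀ f ∈ F, L.op m q b * f - f * L.op m q b ∈ Algebra.adjoin ℂ F) :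
    L.AdStable (Algebra.adjoin ℂ F) where
  commute a ha b hb := by
    have := Algebra.isMulCommutative_adjoin ℂ hcomm
    exact congrArg Subtype.val (this.is_comm.comm ⟨a, ha⟩ ⟨b, hb⟩)
  bracket_mem m q b a ha := by
    induction ha using Algebra.adjoin_induction with
    | mem f hf => exact hbr m q b f hf
    | algebraMap c =>
      rw [Algebra.commutes, sub_self]
      exact zero_mem _
    | add x y _ _ hx hy =>
      rw [mul_add, add_mul, add_sub_add_comm]
      exact add_mem hx hy
    | mul x y hx hy hbx hby =>
      have hleibniz : L.op m q b * (x * y) - (x * y) * L.op m q b =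
          (L.op m q b * x - x * L.op m q b) * y + x * (L.op m q b * y - y * L.op m q b) := by
        noncomm_ring
      rw [hleibniz]
      exact add_mem (mul_mem hbx hy) (mul_mem hx hby)

variable {R : Subalgebra ℂ (Module.End ℂ V)}

namespace AdStable

lemma isNilpotent_bracket (hR : L.AdStable R) {r : Module.End ℂ V} (hr : r ∈ R)
    (hn : IsNilpotent r) (m : G) (q : P) (b : B) :
    IsNilpotent (L.op m q b * r - r * L.op m q b) := by
  have := IsAddTorsionFree.of_isTorsionFree ℂ (Module.End ℂ V)
  have hbr := hR.bracket_mem m q b r hr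
  exact isNilpotent_of_bracket (hR.commute _ hr _ hbr)
    (hR.commute _ hbr _ (hR.bracket_mem m q b _ hbr)) (add_sub_cancel _ _).symm
    (add_sub_cancel _ _).symm hn

lemma invariant_maxGenEigenspace (hR : L.AdStable R) {r : Module.End ℂ V} (hr : r ∈ R) (c : ℂ) :
    L.Invariant (r.maxGenEigenspace c) := by
  intro m q b v hv
  obtain ⟨k, hk⟩ := (Module.End.mem_maxGenEigenspace _ _ _).1 hv
  set s := r - c • (1 : Module.End ℂ V)
  have hs : s ∈ R := sub_mem hr (Subalgebra.smul_mem R (one_mem R) c)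
  have hbr := hR.bracket_mem m q b s hs
  have hpow := mul_pow_succ_of_bracket (hR.commute _ hs _ hbr)
    (add_sub_cancel _ _).symm (o := L.op m q b) k
  rw [((hR.commute _ hs _ hbr).pow_left k).eq] at hpow
  have hpow' := LinearMap.congr_fun hpow v
  simp only [Module.End.mul_apply, LinearMap.add_apply, LinearMap.smul_apply, hk, map_zero,
    smul_zero, add_zero, pow_succ' s k] at hpow'
  exact (Module.End.mem_maxGenEigenspace _ _ _).2
    ⟨k + 1, by rw [pow_succ', Module.End.mul_apply, hpow']⟩

lemma exists_maxGenEigenspace_eq_top (hR : L.AdStable R) (hL : L.IsIrredHC χ)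
    {r : Module.End ℂ V} (hr : r ∈ R)
    (hdeg : ∀ x, ∀ z ∈ L.weightSpace (χ + pg x), r z ∈ L.weightSpace (χ + pg x)) :
    ∃ c : ℂ, r.maxGenEigenspace c = ⊤ := by
  obtain ⟨x, hx⟩ := hL.exists_weightSpace_ne_bot
  have := hL.finiteDimensional_weightSpace (χ + pg x)
  have := Submodule.nontrivial_iff_ne_bot.2 hx
  obtain ⟨c, hc⟩ := Module.End.exists_eigenvalue (r.restrict (hdeg x))
  obtain ⟨w, hw, hw0⟩ := hc.exists_hasEigenvector
  have hrw : r w = c • (w : V) := congrArg Subtype.val (Module.End.mem_eigenspace_iff.1 hw)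
  refine ⟨c, hL.eq_top_of_mem (hR.invariant_maxGenEigenspace hr c) (v := (w : V)) ?_
    (by simpa using hw0)⟩
  exact (Module.End.mem_maxGenEigenspace _ _ _).2 ⟨1, by simp [hrw]⟩

lemma exists_isNilpotent_sub (hR : L.AdStable R) (hL : L.IsIrredHC χ) {N : ℕ}
    (hN : ∀ x, finrank ℂ (L.weightSpace (χ + pg x)) ≤ N) {r : Module.End ℂ V} (hr : r ∈ R)
    (hdeg : ∀ x, ∀ z ∈ L.weightSpace (χ + pg x), r z ∈ L.weightSpace (χ + pg x)) :
    ∃ c : ℂ, IsNilpotent (r - algebraMap ℂ _ c) := by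
  obtain ⟨c, hc⟩ := hR.exists_maxGenEigenspace_eq_top hL hr hdeg
  have := hL.finiteDimensional_weightSpace
  have htop : r.genEigenspace c N = ⊤ := hL.eq_top_of_forall_weightSpace_le fun x =>
    le_genEigenspace_of_finrank_le (hdeg x) (hc ▸ le_top) (hN x)
  rw [Module.End.genEigenspace_nat, LinearMap.ker_eq_top] at htop
  exact ⟨c, N, htop⟩

end AdStable

end AdStable

section CommIdeal

variable {C : Set (P × B)}

variable (L) in
/-- A bracket stable set of parameters on which the loop algebra acts by commuting operators. -/
structure IsCommIdeal (C : Set (P × B)) : Prop where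
  bracketStable : BracketStable pg C
  commute : ∀ m k, ∀ c ∈ C, ∀ d ∈ C, Commute (L.op m c.1 c.2) (L.op k d.1 d.2)

namespace IsCommIdeal

lemma adStable (hC : L.IsCommIdeal C) :
    L.AdStable (Algebra.adjoin ℂ {f | ∃ k, ∃ c ∈ C, f = L.op k c.1 c.2}) := by
  refine adStable_adjoin ?_ ?_
  · rintro _ ⟨k, c, hc, rfl⟩ _ ⟨m, d, hd, rfl⟩
    exact hC.commute k m c hc d hd
  · rintro m q b _ ⟨k, ⟨p, b'⟩, hc, rfl⟩
    rw [op_commutator]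
    exact Algebra.subset_adjoin ⟨m + k, _, hC.bracketStable hc k m q b, rfl⟩

end IsCommIdeal

/-- Vectors killed by finitely many operators with parameters in `C` are killed by all of them; the
finite set of operators is allowed to vary with the weight of the vector, but their degrees are such
that they map all weight spaces to finitely many ones. -/
def HasTests (L : LoopRep pg B V) (χ : P →ₗ[ℂ] ℂ) (C : Set (P × B)) : Prop :=
  ∃ (T : Finset (G × P × B)) (ψ : G → G × P × B → P × B), (∀ x t, ψ x t ∈ C) ∧
    ∀ x, ∀ z ∈ L.weightSpace (χ + pg x),
      (∀ t ∈ T, L.op (t.1 - x) (ψ x t).1 (ψ x t).2 z = 0) → ∀ m, ∀ c ∈ C, L.op m c.1 c.2 z = 0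

-- Otherwise the tests move any nonzero weight vector to a nonzero vector in one of finitely many
-- weight spaces, where only finitely many operators are relevant.
lemma IsIrredHC.op_eq_zero_of_isNilpotent (hL : L.IsIrredHC χ) (hC : L.IsCommIdeal C)
    (hnil : ∀ k, ∀ c ∈ C, IsNilpotent (L.op k c.1 c.2)) (hT : L.HasTests χ C) (m : G) {c : P × B}
    (hc : c ∈ C) : L.op m c.1 c.2 = 0 := by
  by_contra hne
  obtain ⟨T, ψ, hψ, h⟩ := hT
  have hstep : ∀ x, ∀ z ∈ L.weightSpace (χ + pg x), z ≠ 0 →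
      ∃ t ∈ T, L.op (t.1 - x) (ψ x t).1 (ψ x t).2 z ≠ 0 := by
    intro x z hz hz0
    by_contra! hkill
    exact hne (hL.op_eq_zero_of_bracketStable hC.bracketStable hz0 (h x z hz hkill) m hc)
  have hmem : ∀ x t, ∀ z ∈ L.weightSpace (χ + pg x),
      L.op (t.1 - x) (ψ x t).1 (ψ x t).2 z ∈ L.weightSpace (χ + pg t.1) := fun x t z hz =>
    op_mem_weightSpace_of_eq hz _ _ (by abel)
  obtain ⟨x, hx⟩ := hL.exists_weightSpace_ne_bot
  obtain ⟨z, hz, hz0⟩ := Submodule.exists_mem_ne_zero_of_ne_bot hx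
  obtain ⟨t, ht, htz⟩ := hstep x z hz hz0
  let F : Set (Module.End ℂ V) :=
    Set.image2 (fun s t : G × P × B => L.op (t.1 - s.1) (ψ s.1 t).1 (ψ s.1 t).2) T T
  suffices (0 : V) ∈ {z | z ≠ 0 ∧ ∃ t ∈ T, z ∈ L.weightSpace (χ + pg t.1)} from this.1 rfl
  refine zero_mem_of_forall_exists_nilpotent_apply_mem (F := F)
    (T.finite_toSet.image2 _ T.finite_toSet) ?_ ?_ ⟨_, htz, t, ht, hmem x t z hz⟩ ?_
  · rintro _ ⟨_, _, _, _, rfl⟩ _ ⟨_, _, _, _, rfl⟩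
    exact hC.commute _ _ _ (hψ _ _) _ (hψ _ _)
  · rintro _ ⟨_, _, _, _, rfl⟩
    exact hnil _ _ (hψ _ _)
  · rintro z ⟨hz0, s, hs, hz⟩
    obtain ⟨t, ht, htz⟩ := hstep s.1 z hz hz0
    exact ⟨_, Set.mem_image2_of_mem hs ht, htz, t, ht, hmem s.1 t z hz⟩

end CommIdeal

section Ann

variable (L) in
/-- The ideal of coefficients acting by zero. -/
def ann : Ideal B where
  carrier := {b | ∀ k p b', L.op k p (b * b') = 0}
  add_mem' := by
    intro a b ha hb k p b'
    rw [add_mul, map_add, ha, hb, add_zero]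
  zero_mem' := by simp
  smul_mem' := by
    intro c b hb k p b'
    rw [smul_eq_mul, mul_comm c, mul_assoc]
    exact hb k p _

lemma op_eq_zero_of_mem_ann {b : B} (hb : b ∈ L.ann) (k : G) (p : P) : L.op k p b = 0 := by
  simpa using hb k p 1

lemma op_congr_of_sub_mem_ann {b c : B} (h : b - c ∈ L.ann) (k : G) (p : P) :
    L.op k p b = L.op k p c := by
  rw [← sub_eq_zero, ← map_sub]
  exact op_eq_zero_of_mem_ann h k p

omit [Algebra ℂ B] in
lemma bracketStable_dvd (b : B) : BracketStable pg {c : P × B | b ∣ c.2} :=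
  fun _ _ hc _ _ _ _ => Dvd.dvd.mul_left hc _

namespace IsIrredHC

lemma mem_ann_of_forall_apply_eq_zero (hL : L.IsIrredHC χ) {b : B} {z : V} (hz0 : z ≠ 0)
    (hz : ∀ m p b', L.op m p (b * b') z = 0) : b ∈ L.ann := fun k p b' =>
  hL.op_eq_zero_of_bracketStable (bracketStable_dvd b) hz0
    (by rintro m ⟨q, _⟩ ⟨c, rfl⟩; exact hz m q c) k (c := (p, b * b')) (dvd_mul_right b b')

lemma one_notMem_ann (hL : L.IsIrredHC χ) : (1 : B) ∉ L.ann := by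
  intro h
  have := hL.nontrivial
  obtain ⟨v, hv⟩ := exists_ne (0 : V)
  refine hv (hL.eq_zero_of_forall_op_eq_zero v fun r p b => ?_)
  rw [op_eq_zero_of_mem_ann (by simpa using L.ann.mul_mem_left b h), LinearMap.zero_apply]

end IsIrredHC

namespace IsCommIdeal

variable {C : Set (P × B)} {b : B}

-- Bracketing the degree zero operators, which are nilpotent up to a scalar, removes the scalar.
lemma isNilpotent_op_of_ne_zero (hC : L.IsCommIdeal C) (hL : L.IsIrredHC χ) {N : ℕ}
    (hN : ∀ x, finrank ℂ (L.weightSpace (χ + pg x)) ≤ N) (hb : ∀ p, (p, b) ∈ C) {l : G}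
    (hl : l ≠ 0) (q : P) : IsNilpotent (L.op l q b) := by
  obtain ⟨p, hp⟩ := DFunLike.ne_iff.1 ((map_ne_zero_iff pg hL.pairing_injective).2 hl)
  have hmem := Algebra.subset_adjoin (R := ℂ)
    (show L.op 0 p b ∈ {f | ∃ k, ∃ c ∈ C, f = L.op k c.1 c.2} from ⟨0, _, hb p, rfl⟩)
  obtain ⟨c, hc⟩ := hC.adStable.exists_isNilpotent_sub hL hN hmem
    (fun x z hz => op_mem_weightSpace_of_eq hz _ _ (by simp))
  have hnil := hC.adStable.isNilpotent_bracket
    (sub_mem hmem (Subalgebra.algebraMap_mem _ c)) hc l q 1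
  have hbr : L.op l q 1 * (L.op 0 p b - algebraMap ℂ _ c) -
      (L.op 0 p b - algebraMap ℂ _ c) * L.op l q 1 = (-pg l p) • L.op l q b := by
    rw [mul_sub, sub_mul, Algebra.commutes, sub_sub_sub_cancel_right, op_commutator]
    simp
  rwa [hbr, isNilpotent_smul_iff (neg_ne_zero.2 hp)] at hnil

lemma isNilpotent_op [Nontrivial G] (hC : L.IsCommIdeal C) (hL : L.IsIrredHC χ) {N : ℕ}
    (hN : ∀ x, finrank ℂ (L.weightSpace (χ + pg x)) ≤ N) (hb : ∀ p, (p, b) ∈ C) (k : G) (q : P) :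
    IsNilpotent (L.op k q b) := by
  rcases ne_or_eq k 0 with hk | rfl
  · exact hC.isNilpotent_op_of_ne_zero hL hN hb hk q
  obtain ⟨l, hl⟩ := exists_ne (0 : G)
  have hzero : ∀ p, pg l p ≠ 0 → IsNilpotent (L.op 0 p b) := by
    intro p hp
    have hnil := hC.adStable.isNilpotent_bracket
      (Algebra.subset_adjoin ⟨l, _, hb p, rfl⟩)
      (hC.isNilpotent_op_of_ne_zero hL hN hb hl p) (-l) p 1
    have hbr : L.op (-l) p 1 * L.op l p b - L.op l p b * L.op (-l) p 1 =
        (2 * pg l p) • L.op 0 p b := by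
      rw [op_commutator, ← sub_smul, one_mul, neg_add_cancel, map_neg, LinearMap.neg_apply,
        sub_neg_eq_add, ← two_mul, map_smul, LinearMap.smul_apply]
    rwa [hbr, isNilpotent_smul_iff (mul_ne_zero two_ne_zero hp)] at hnil
  by_cases hq : pg l q = 0
  · obtain ⟨p, hp⟩ := DFunLike.ne_iff.1 ((map_ne_zero_iff pg hL.pairing_injective).2 hl)
    have hsub : L.op 0 q b = L.op 0 (q + p) b - L.op 0 p b := by simp
    rw [hsub]
    exact Commute.isNilpotent_sub (hC.commute _ _ _ (hb _) _ (hb _))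
      (hzero _ (by simpa [hq] using hp)) (hzero _ hp)
  · exact hzero q hq

end IsCommIdeal

lemma isCommIdeal_dvd {a : B} (ha : a ^ 2 ∈ L.ann) : L.IsCommIdeal {c : P × B | a ∣ c.2} where
  bracketStable := bracketStable_dvd a
  commute := by
    rintro m k ⟨p, _⟩ ⟨b, rfl⟩ ⟨q, _⟩ ⟨b', rfl⟩
    rw [commute_iff_eq, ← sub_eq_zero, op_commutator,
      show a * b * (a * b') = a ^ 2 * (b * b') by ring]
    exact ha _ _ _

end Ann

section Evaluation

variable {u₀ : P} {γ : P →ₗ[ℂ] ℂ}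

namespace IsTested

lemma hasTests_dvd (hT : L.IsTested χ u₀ γ) (a : B) : L.HasTests χ {c : P × B | a ∣ c.2} := by
  obtain ⟨T, φ, h⟩ := hT.exists_tests
  refine ⟨T, fun x t => (φ x t.2.1, a * t.2.2), fun _ t => dvd_mul_right _ _,
    fun x z hz hzT m => ?_⟩
  rintro ⟨p, _⟩ ⟨b, rfl⟩
  exact h x a z hz hzT m p b

lemma mem_ann_of_sq_mem (hT : L.IsTested χ u₀ γ) {a : B} (ha : a ^ 2 ∈ L.ann) : a ∈ L.ann := by
  obtain ⟨N, hN⟩ := hT.exists_finrank_le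
  have := hT.nontrivial_degrees
  have hC := isCommIdeal_dvd ha
  intro k p b
  refine hT.op_eq_zero_of_isNilpotent hC ?_ (hT.hasTests_dvd a) k (c := (p, a * b))
    (dvd_mul_right a b)
  exact fun k c hc => hC.isNilpotent_op hT.toIsIrredHC hN (fun _ => hc) k c.1

lemma finiteDimensional_quotient_ann (hT : L.IsTested χ u₀ γ) :
    FiniteDimensional ℂ (B ⧸ L.ann) := by
  obtain ⟨T, φ, h⟩ := hT.exists_tests
  obtain ⟨x, hx⟩ := hT.exists_weightSpace_ne_bot
  obtain ⟨z, hz, hz0⟩ := Submodule.exists_mem_ne_zero_of_ne_bot hx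
  have := hT.finiteDimensional_weightSpace
  let f : B →ₗ[ℂ] (∀ t : T, L.weightSpace (χ + pg t.1.1)) := LinearMap.pi fun t =>
    ((LinearMap.applyₗ z).comp ((L.op (t.1.1 - x) (φ x t.1.2.1)).comp
      (LinearMap.mulRight ℂ t.1.2.2))).codRestrict _
      (fun b => op_mem_weightSpace_of_eq hz _ _ (by abel))
  have hf : LinearMap.ker f ≤ LinearMap.ker (Ideal.Quotient.mkₐ ℂ L.ann).toLinearMap := by
    intro b hb
    refine Ideal.Quotient.eq_zero_iff_mem.2
      (hT.mem_ann_of_forall_apply_eq_zero hz0 (h x b z hz fun t ht => ?_))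
    exact congrArg Subtype.val (congrFun (LinearMap.mem_ker.1 hb) ⟨t, ht⟩)
  have := Module.Finite.equiv f.quotKerEquivRange.symm
  refine Module.Finite.of_surjective ((LinearMap.ker f).liftQ _ hf) fun a => ?_
  obtain ⟨b, rfl⟩ := Ideal.Quotient.mk_surjective a
  exact ⟨Submodule.Quotient.mk b, by simp⟩

-- The characteristic polynomial of `h` on the finitely many weight spaces hit by the tests
-- annihilates `h` everywhere.
lemma isAlgebraic_of_commute (hT : L.IsTested χ u₀ γ) {e : B} (he : e ∉ L.ann)
    {h : Module.End ℂ V}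
    (hdeg : ∀ x, ∀ z ∈ L.weightSpace (χ + pg x), h z ∈ L.weightSpace (χ + pg x))
    (hcomm : ∀ m p b, Commute h (L.op m p (e * b))) : IsAlgebraic ℂ h := by
  obtain ⟨T, φ, ht⟩ := hT.exists_tests
  have := hT.finiteDimensional_weightSpace
  let M : Submodule ℂ V := ⨆ t : T, L.weightSpace (χ + pg t.1.1)
  have hM : ∀ v ∈ M, h v ∈ M := by
    suffices M ≤ M.comap h from this
    exact iSup_le fun t v hv =>
      le_iSup (fun t : T => L.weightSpace (χ + pg t.1.1)) t (hdeg _ v hv)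
  have : FiniteDimensional ℂ M := Submodule.finiteDimensional_iSup _
  let p := (h.restrict hM).charpoly
  have hp : ∀ v ∈ M, Polynomial.aeval h p v = 0 := fun v hv => by
    have hint := aeval_comp_eq_comp_aeval (h := h) (h' := h.restrict hM) (D := M.subtype) rfl p
    rw [LinearMap.aeval_self_charpoly, LinearMap.comp_zero] at hint
    exact LinearMap.congr_fun hint ⟨v, hv⟩
  refine ⟨p, (LinearMap.charpoly_monic _).ne_zero, LinearMap.ker_eq_top.1 ?_⟩
  refine hT.eq_top_of_forall_weightSpace_le fun x z hz => ?_
  rw [LinearMap.mem_ker]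
  by_contra hne
  refine he (hT.mem_ann_of_forall_apply_eq_zero hne (ht x e _
    (Polynomial.aeval_apply_smul_mem_of_le_comap hz p h (hdeg x)) fun t htT => ?_))
  have hint := aeval_comp_eq_comp_aeval (hcomm (t.1 - x) (φ x t.2.1) t.2.2) p
  rw [← LinearMap.comp_apply, ← hint, LinearMap.comp_apply]
  exact hp _ (le_iSup (fun t : T => L.weightSpace (χ + pg t.1.1)) ⟨t, htT⟩
    (op_mem_weightSpace_of_eq hz _ _ (by abel)))

lemma exists_finset_op_eq_zero (hT : L.IsTested χ u₀ γ) {e : B} (hidem : e ^ 2 - e ∈ L.ann)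
    (he : e ∉ L.ann) (u : P) :
    ∃ Z : Finset ℂ, ∀ l, pg l u ∉ Z → ∀ p b, L.op l p ((1 - e) * b) = 0 := by
  have halg : IsAlgebraic ℂ (L.op 0 u (1 - e)) := by
    refine hT.isAlgebraic_of_commute he (fun x z hz => op_mem_weightSpace_of_eq hz _ _ (by simp))
      fun m p b => ?_
    rw [commute_iff_eq, ← sub_eq_zero, op_commutator,
      show (1 - e) * (e * b) = -b * (e ^ 2 - e) by ring]
    exact op_eq_zero_of_mem_ann (L.ann.mul_mem_left _ hidem) _ _
  obtain ⟨Z, hZ⟩ := exists_finset_eq_zero_of_shift halg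
  refine ⟨Z, fun l hl p b => hZ _ hl _ ?_⟩
  have hcongr : (1 - e) * ((1 - e) * b) - (1 - e) * b ∈ L.ann := by
    rw [show (1 - e) * ((1 - e) * b) - (1 - e) * b = b * (e ^ 2 - e) by ring]
    exact L.ann.mul_mem_left _ hidem
  have hbr := L.op_commutator 0 l u p (1 - e) ((1 - e) * b)
  rw [op_congr_of_sub_mem_ann hcongr] at hbr
  rw [sub_eq_iff_eq_add.1 hbr]
  simp [mul_add, add_comm]

lemma one_sub_mem_ann (hT : L.IsTested χ u₀ γ) {e : B} (hidem : e ^ 2 - e ∈ L.ann)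
    (he : e ∉ L.ann) : 1 - e ∈ L.ann := by
  have := hT.nontrivial_degrees
  obtain ⟨l, hl⟩ := exists_ne (0 : G)
  obtain ⟨u, hu⟩ := DFunLike.ne_iff.1 ((map_ne_zero_iff pg hT.pairing_injective).2 hl)
  obtain ⟨Z, hZ⟩ := hT.exists_finset_op_eq_zero hidem he u
  intro k p b
  obtain ⟨m, hm⟩ : ∃ m : ℕ, (m : ℂ) * pg l u ∉
      insert (pg k u / 2) (Z ∪ Z.image fun c => pg k u - c) := by
    have hinj : Function.Injective fun m : ℕ => (m : ℂ) * pg l u := fun a b hab =>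
      Nat.cast_injective (mul_right_cancel₀ hu hab)
    obtain ⟨_, ⟨m, rfl⟩, hm⟩ := (Set.infinite_range_of_injective hinj).exists_notMem_finset
      (insert (pg k u / 2) (Z ∪ Z.image fun c => pg k u - c))
    exact ⟨m, hm⟩
  simp only [Finset.mem_insert, Finset.mem_union, Finset.mem_image, not_or, not_exists,
    not_and] at hm
  have hml : pg (m • l) u = m * pg l u := by simp
  have hne : m • l ≠ k - m • l := fun h => hm.1 (by
    have := congrArg (fun r => pg r u) h
    simp only [map_sub, LinearMap.sub_apply, hml] at this
    linear_combination this / 2)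
  have hcongr : (1 - e) * b - (1 - e) * b * ((1 - e) * 1) ∈ L.ann := by
    rw [show (1 - e) * b - (1 - e) * b * ((1 - e) * 1) = -b * (e ^ 2 - e) by ring]
    exact L.ann.mul_mem_left _ hidem
  rw [op_congr_of_sub_mem_ann hcongr]
  ext v
  have := op_add_mul_eq_zero_of_ne (L := L) hT.pairing_injective hne (v := v)
    (b := (1 - e) * b) (b' := (1 - e) * 1)
    (fun p => by rw [hZ _ (hml ▸ hm.2.1)]; rfl)
    (fun p => by
      rw [hZ _ (fun h => hm.2.2 _ h (by rw [map_sub, LinearMap.sub_apply, hml]; ring))]; rfl) p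
  simpa using this

lemma exists_algHom (hT : L.IsTested χ u₀ γ) :
    ∃ η : B →ₐ[ℂ] ℂ, ∀ b, η b = 0 → b ∈ L.ann := by
  have := hT.finiteDimensional_quotient_ann
  have : Nontrivial (B ⧸ L.ann) := Ideal.Quotient.nontrivial_iff.2
    ((Ideal.ne_top_iff_one _).2 hT.one_notMem_ann)
  have : IsReduced (B ⧸ L.ann) := by
    refine (isReduced_iff_pow_one_lt 2 one_lt_two).2 fun a ha => ?_
    obtain ⟨b, rfl⟩ := Ideal.Quotient.mk_surjective a
    rw [← map_pow, Ideal.Quotient.eq_zero_iff_mem] at ha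
    exact Ideal.Quotient.eq_zero_iff_mem.2 (hT.mem_ann_of_sq_mem ha)
  have hidem : ∀ a : B ⧸ L.ann, IsIdempotentElem a → a = 0 ∨ a = 1 := by
    intro a ha
    obtain ⟨b, rfl⟩ := Ideal.Quotient.mk_surjective a
    rw [IsIdempotentElem, ← map_mul, ← pow_two, Ideal.Quotient.eq] at ha
    refine or_iff_not_imp_left.2 fun hb => Eq.symm (Ideal.Quotient.eq.2 ?_)
    exact hT.one_sub_mem_ann ha fun h => hb (Ideal.Quotient.eq_zero_iff_mem.2 h)
  obtain ⟨η, hη⟩ := exists_algHom_injective_of_isReduced ℂ hidem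
  refine ⟨η.comp (Ideal.Quotient.mkₐ ℂ L.ann), fun b hb => ?_⟩
  exact Ideal.Quotient.eq_zero_iff_mem.1 ((map_eq_zero_iff η hη).1 hb)

end IsTested

end Evaluation

section Central

variable {p : P}

lemma op_commutator_of_central (hp : ∀ k, pg k p = 0) (m k : G) (q : P) (b : B) :
    L.op m q 1 * L.op k p b - L.op k p b * L.op m q 1 = pg k q • L.op (m + k) p b := by
  simp [op_commutator, hp]

lemma op_commutator_mul_of_central (hp : ∀ k, pg k p = 0) (m k k' : G) (q : P) (b : B) :
    L.op m q 1 * (L.op k p b * L.op k' p b) - L.op k p b * L.op k' p b * L.op m q 1 =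
      pg k q • (L.op (m + k) p b * L.op k' p b) + pg k' q • (L.op k p b * L.op (m + k') p b) := by
  rw [← smul_mul_assoc, ← mul_smul_comm, ← op_commutator_of_central hp,
    ← op_commutator_of_central hp]
  noncomm_ring

lemma isCommIdeal_central (hp : ∀ k, pg k p = 0) :
    L.IsCommIdeal {c : P × B | ∃ s : ℂ, c.1 = s • p} where
  bracketStable := by
    rintro _ b' ⟨s, rfl⟩ m m' q b
    exact ⟨pg m q * s, by simp [hp, mul_smul]⟩
  commute := by
    rintro m k ⟨_, b⟩ ⟨s, rfl⟩ ⟨_, b'⟩ ⟨s', rfl⟩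
    rw [commute_iff_eq, ← sub_eq_zero, op_commutator]
    simp [hp]

lemma op_commutator_mul_sub_of_central (hp : ∀ k, pg k p = 0) {k : G} {v : P} (hv : pg k v = 1)
    (m : G) (b : B) (c : ℂ) :
    L.op m v 1 * (L.op k p b * L.op (-k) p b - algebraMap ℂ _ c) -
        (L.op k p b * L.op (-k) p b - algebraMap ℂ _ c) * L.op m v 1 =
      L.op (m + k) p b * L.op (-k) p b - L.op k p b * L.op (m - k) p b := by
  rw [mul_sub, sub_mul, Algebra.commutes, sub_sub_sub_cancel_right,
    op_commutator_mul_of_central hp]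
  simp [hv, sub_eq_add_neg]

-- Up to a scalar `op k p b * op (-k) p b` is nilpotent; two iterated brackets with operators of
-- degree `k`, and one of degree `2k`, move this to `op (3k) p b * op (-k) p b` and to its
-- difference with `op k p b ^ 2`.
lemma isNilpotent_op_of_central (hL : L.IsIrredHC χ) {N : ℕ}
    (hN : ∀ x, finrank ℂ (L.weightSpace (χ + pg x)) ≤ N) (hp : ∀ k, pg k p = 0) {b : B}
    (h0 : L.op 0 p b = 0) (k : G) : IsNilpotent (L.op k p b) := by
  rcases eq_or_ne k 0 with rfl | hk
  · rw [h0]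
    exact IsNilpotent.zero
  obtain ⟨w, hw⟩ := DFunLike.ne_iff.1 ((map_ne_zero_iff pg hL.pairing_injective).2 hk)
  obtain ⟨v, hv⟩ : ∃ v, pg k v = 1 := ⟨(pg k w)⁻¹ • w, by simpa using inv_mul_cancel₀ hw⟩
  have hR := (isCommIdeal_central (L := L) hp).adStable
  set R := Algebra.adjoin ℂ {f | ∃ k, ∃ c ∈ {c : P × B | ∃ s : ℂ, c.1 = s • p}, f = L.op k c.1 c.2}
  have hmem : ∀ k k', L.op k p b * L.op k' p b ∈ R := fun k k' =>
    mul_mem (Algebra.subset_adjoin ⟨k, (p, b), ⟨1, (one_smul _ _).symm⟩, rfl⟩)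
      (Algebra.subset_adjoin ⟨k', (p, b), ⟨1, (one_smul _ _).symm⟩, rfl⟩)
  obtain ⟨c, hc⟩ := hR.exists_isNilpotent_sub hL hN (hmem k (-k)) fun x z hz =>
    op_mem_weightSpace_of_eq (op_mem_weightSpace_of_eq hz p b rfl) p b (by abel)
  have hcm := sub_mem (hmem k (-k)) (Subalgebra.algebraMap_mem R c)
  have hbr := fun m => op_commutator_mul_sub_of_central (L := L) hp hv m b c
  have h2 : IsNilpotent (L.op (k + k) p b * L.op (-k) p b) := by
    simpa [hbr, h0] using hR.isNilpotent_bracket hcm hc k v 1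
  have h3 : IsNilpotent (L.op (k + k + k) p b * L.op (-k) p b) := by
    have hnil := hR.isNilpotent_bracket (hmem _ _) h2 k v 1
    rw [op_commutator_mul_of_central hp, add_neg_cancel, h0, mul_zero, smul_zero, add_zero,
      isNilpotent_smul_iff (by simp [hv])] at hnil
    rwa [add_assoc]
  have hsub : IsNilpotent
      (L.op (k + k + k) p b * L.op (-k) p b - L.op k p b * L.op k p b) := by
    simpa [hbr] using hR.isNilpotent_bracket hcm hc (k + k) v 1
  have hsq := Commute.isNilpotent_sub
    (hR.commute _ (hmem _ _) _ (sub_mem (hmem _ _) (hmem _ _))) h3 hsub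
  rw [sub_sub_cancel, ← pow_two] at hsq
  exact (IsNilpotent.pow_iff_pos two_ne_zero).1 hsq

lemma IsIrredHC.op_zero_one_eq_zero (hL : L.IsIrredHC χ) (hp : ∀ k, pg k p = 0) (hχ : χ p = 0) :
    L.op 0 p 1 = 0 := by
  refine LinearMap.ker_eq_top.1 (hL.eq_top_of_forall_weightSpace_le fun x z hz => ?_)
  rw [LinearMap.mem_ker, mem_weightSpace.1 hz p]
  simp [hp, hχ]

lemma IsTested.op_eq_zero_of_central {u₀ : P} {γ : P →ₗ[ℂ] ℂ} (hT : L.IsTested χ u₀ γ)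
    (hp : ∀ k, pg k p = 0) (hγ : γ p = 0) (h0 : ∀ b, L.op 0 p b = 0) (k : G) (b : B) :
    L.op k p b = 0 := by
  obtain ⟨N, hN⟩ := hT.exists_finrank_le
  obtain ⟨T, φ, h⟩ := hT.exists_tests_of_central hp hγ
  refine hT.op_eq_zero_of_isNilpotent (isCommIdeal_central hp) ?_
    ⟨T, fun x t => (φ x t.2.1 • p, t.2.2), fun _ _ => ⟨_, rfl⟩, fun x z hz hzT m => ?_⟩ k
    (c := (p, b)) ⟨1, (one_smul _ _).symm⟩
  · rintro k ⟨_, b⟩ ⟨s, rfl⟩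
    rw [map_smul, LinearMap.smul_apply]
    exact (isNilpotent_op_of_central hT.toIsIrredHC hN hp (h0 b) k).smul s
  · rintro ⟨_, b⟩ ⟨s, rfl⟩
    rw [map_smul, LinearMap.smul_apply, LinearMap.smul_apply, h x z hz hzT m b, smul_zero]

end Central

section HighestEvaluation

lemma IsHighest.exists_eval {deg : G →+ ℤ} {u₀ : P} (hH : L.IsHighest χ deg u₀)
    [Nontrivial deg.ker] {β : G} (hβ : deg β = 1) :
    ∃ η : B →ₐ[ℂ] ℂ, (∀ r p b, L.op r p b = η b • L.op r p 1) ∧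
      ∀ p, (∀ k, pg k p = 0) → χ p = 0 → ∀ r b, L.op r p b = 0 := by
  have hT := hH.isTested_topRep hβ
  obtain ⟨η, hη⟩ := hT.exists_algHom
  have heval : ∀ r p b, L.op r p b = η b • L.op r p 1 := by
    intro r p b
    rw [← sub_eq_zero, ← map_smul, ← map_sub]
    refine hH.op_eq_zero_of_topRep (C := {c | η c.2 = 0}) ?_ ?_ r (c := (p, b - η b • 1)) (by simp)
    · intro q b' hb _ _ _ b
      exact (map_mul η b b').trans (mul_eq_zero_of_right _ hb)
    · exact fun k c hc => op_eq_zero_of_mem_ann (hη _ hc) _ _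
  refine ⟨η, heval, fun p hp hχ r b => ?_⟩
  refine hH.op_eq_zero_of_topRep (C := {c | (∀ k, pg k c.1 = 0) ∧ χ c.1 = 0}) ?_ ?_ r
    (c := (p, b)) ⟨hp, hχ⟩
  · rintro q b' ⟨hq, hχq⟩ m m' p b
    replace hq : ∀ k, pg k q = 0 := hq
    replace hχq : χ q = 0 := hχq
    exact ⟨fun k => by simp [hq], by simp [hq, hχq]⟩
  · rintro k ⟨q, b⟩ ⟨hq, hχq⟩
    refine hT.op_eq_zero_of_central (fun k => hq k) (hq β) (fun b => ?_) k b
    ext v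
    rw [coe_topRep_op]
    have h1 := hH.op_zero_one_eq_zero hq hχq
    simp [heval _ _ b, h1]

lemma IsIrredHC.exists_isHighest {ι : Type*} [Finite ι] {pg : (ι → ℤ) →+ (P →ₗ[ℂ] ℂ)}
    {L : LoopRep pg B V} [FiniteDimensional ℂ P] [Algebra.FiniteType ℂ B]
    (hR : RankCondition pg) (hu : ∀ deg : (ι → ℤ) →+ ℤ, ∃ u₀, ∀ m, pg m u₀ = deg m)
    (hL : L.IsIrredHC χ)
    (hub : ∀ M : ℕ, ∃ x, M < finrank ℂ (L.weightSpace (χ + pg x))) :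
    ∃ χ deg u₀ β, L.IsHighest χ deg u₀ ∧ deg β = 1 := by
  obtain ⟨k, hk⟩ := hL.exists_eventuallyKills hub
  obtain ⟨deg, β, x₀, hβ, hx₀, hle⟩ := exists_degree_le hL hR hk
  obtain ⟨u₀, hu₀⟩ := hu deg
  refine ⟨χ + pg x₀, deg, u₀, β, { hL with
    iSup_weightSpace := ?_
    pairing_apply := hu₀
    deg_nonpos := fun x hx => ?_
    weightSpace_ne_bot := hx₀ }, hβ⟩
  · rw [← hL.iSup_weightSpace]
    simp only [add_assoc, ← map_add]
    exact (Equiv.addLeft x₀).iSup_comp (g := fun x => L.weightSpace (χ + pg x))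
  · rw [add_assoc, ← map_add] at hx
    have := hle _ hx
    rw [map_add] at this
    omega

end HighestEvaluation

section Irreducible

lemma iSup_weightSpace_eq_top (hirr : ∀ U, L.Invariant U → U = ⊥ ∨ U = ⊤)
    (hχ : L.weightSpace χ ≠ ⊥) : ⨆ x, L.weightSpace (χ + pg x) = ⊤ := by
  refine (hirr _ fun r p b => ?_).resolve_left fun h => hχ ?_
  · suffices (⨆ x, L.weightSpace (χ + pg x)) ≤
      (⨆ x, L.weightSpace (χ + pg x)).comap (L.op r p b) from fun v hv => this hv
    exact iSup_le fun x v hv =>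
      Submodule.mem_iSup_of_mem (x + r) (op_mem_weightSpace_of_eq hv p b rfl)
  · simpa using iSup_eq_bot.1 h 0

lemma weightSpace_eq_bot_of_ne (hspan : ⨆ x, L.weightSpace (χ + pg x) = ⊤) {ψ : P →ₗ[ℂ] ℂ}
    (hψ : ∀ x, χ + pg x ≠ ψ) : L.weightSpace ψ = ⊥ := by
  have htop : ⨆ φ, ⨆ (_ : φ ≠ ψ), L.weightSpace φ = ⊤ :=
    top_le_iff.1 (hspan ▸ iSup_le fun x => le_iSup₂_of_le (χ + pg x) (hψ x) le_rfl)
  exact disjoint_top.1 (htop ▸ L.iSupIndep_weightSpace ψ)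

lemma op_eq_zero_of_forall_apply_eq_zero (hirr : ∀ U, L.Invariant U → U = ⊥ ∨ U = ⊤) {v : V}
    (hv0 : v ≠ 0) (hv : ∀ r p b, L.op r p b v = 0) (r : G) (p : P) (b : B) : L.op r p b = 0 := by
  let U : Submodule ℂ V := ⨅ r, ⨅ p, ⨅ b, LinearMap.ker (L.op r p b)
  have mem_U : ∀ v, v ∈ U ↔ ∀ r p b, L.op r p b v = 0 := fun v => by
    simp only [U, Submodule.mem_iInf, LinearMap.mem_ker]
  have hU : L.Invariant U := fun r p b v hv => by
    rw [mem_U] at hv ⊢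
    simp [hv]
  rcases hirr U hU with h | h
  · exact absurd ((Submodule.mem_bot ℂ).1 (h ▸ (mem_U v).2 hv)) hv0
  · ext w
    exact (mem_U w).1 (h ▸ Submodule.mem_top) r p b

lemma RankCondition.nontrivial_ker (hR : RankCondition pg) (deg : G →+ ℤ) : Nontrivial deg.ker := by
  by_contra h
  have hbot := (AddSubgroup.eq_bot_iff_forall _).2 fun x (hx : x ∈ deg.ker) =>
    congrArg Subtype.val (@Subsingleton.elim _ (not_nontrivial_iff_subsingleton.1 h) ⟨x, hx⟩ 0)
  exact hR.not_isAddCyclic (isAddCyclic_of_injective deg ((AddMonoidHom.ker_eq_bot_iff _).1 hbot))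

end Irreducible

end LoopRep

end LoopAlgebra

namespace ExtWittRep

variable {n : ℕ} {S : Type*} [AddCommGroup S] [Module ℂ S]

section Pairing

variable (n S) in
/-- The pairing of degrees in `ℤⁿ` with the parameters `(u, s)` of `D(u, r) + s ⊗ tʳ`. -/
def degPairing : (Fin n → ℤ) →+ ((Fin n → ℂ) × S →ₗ[ℂ] ℂ) where
  toFun m :=
    { toFun := fun p => pairC p.1 m
      map_add' := fun p q => by simp [pairC, add_mul, Finset.sum_add_distrib]
      map_smul' := fun c p => by simp [pairC, mul_assoc, Finset.mul_sum] }
  map_zero' := by ext <;> simp [pairC]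
  map_add' m m' := by
    refine LinearMap.ext fun p => ?_
    simp [pairC, mul_add, Finset.sum_add_distrib]

@[simp] lemma degPairing_apply (m : Fin n → ℤ) (p : (Fin n → ℂ) × S) :
    degPairing n S m p = pairC p.1 m := rfl

lemma pairC_single (i : Fin n) (m : Fin n → ℤ) : pairC (Pi.single i 1) m = m i := by
  simp [pairC, Pi.single_apply]

lemma degPairing_injective : Function.Injective (degPairing n S) := fun m m' h => funext fun i => by
  have := LinearMap.congr_fun h (Pi.single i 1, 0)
  simpa only [degPairing_apply, pairC_single, Int.cast_inj] using this

lemma mul_eq_mul_of_ker_le {r s : Fin n → ℤ}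
    (h : ∀ p, degPairing n S r p = 0 → degPairing n S s p = 0) (i j : Fin n) :
    r i * s j = r j * s i := by
  have hpair : ∀ m : Fin n → ℤ, degPairing n S m
      ((r i : ℂ) • Pi.single j 1 - (r j : ℂ) • Pi.single i 1, 0) = r i * m j - r j * m i := by
    intro m
    simp [pairC, sub_mul, Finset.sum_sub_distrib, Pi.single_apply]
  have hs := h _ (by rw [hpair, mul_comm, sub_self])
  rw [hpair, sub_eq_zero] at hs
  exact_mod_cast hs

lemma rankCondition_degPairing (hn : 2 ≤ n) : LoopRep.RankCondition (degPairing n S) where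
  exists_not_isRatMultiple k := by
    let i₀ : Fin n := ⟨0, by omega⟩
    let i₁ : Fin n := ⟨1, by omega⟩
    have h01 : i₀ ≠ i₁ := by simp [i₀, i₁]
    by_cases hk : k i₀ = 0
    · refine ⟨Pi.single i₀ 1, fun ⟨a, b, ha, hab⟩ => ha ?_⟩
      simpa [hk] using congrFun hab i₀
    · refine ⟨Pi.single i₁ 1, fun ⟨a, b, ha, hab⟩ => ha ?_⟩
      have hb : b = 0 := by simpa [h01, hk] using congrFun hab i₀
      simpa [hb] using congrFun hab i₁
  isRatMultiple_of_ker_le r s h := by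
    by_cases hr : r = 0
    · have hs : s = 0 := degPairing_injective (S := S) (by ext p <;> simp [h, hr])
      exact ⟨1, 0, one_ne_zero, by simp [hs]⟩
    · obtain ⟨i, hi⟩ := Function.ne_iff.1 hr
      exact ⟨r i, s i, hi, funext fun j => by simp [mul_eq_mul_of_ker_le h i j, mul_comm]⟩

variable (S) in
lemma exists_degPairing_eq (deg : (Fin n → ℤ) →+ ℤ) : ∃ u₀, ∀ m, degPairing n S m u₀ = deg m := by
  refine ⟨(fun i => deg (Pi.single i 1), 0), fun m => ?_⟩
  have hm : m = ∑ i, m i • Pi.single i (1 : ℤ) := by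
    ext j
    simp [Finset.sum_apply, Pi.single_apply]
  conv_rhs => rw [hm]
  simp only [map_sum, map_zsmul]
  simp [pairC, mul_comm]

end Pairing

variable {B V : Type*} [CommRing B] [Algebra ℂ B] [AddCommGroup V] [Module ℂ V]
  {ρ : ExtWittRep n S B V}

section ToLoopRep

variable (ρ)

/-- A representation of `𝔏_{S,n}(B)` as a representation of a loop algebra in the sense of
`LoopRep`: the parameter `(u, s)` of degree `r` acts by `D(u, r) + s ⊗ tʳ`. -/
def toLoopRep : LoopRep (degPairing n S) B V where
  op r := LinearMap.mk₂ ℂ (fun p b => ρ.D p.1 r b + ρ.E p.2 r b)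
    (fun p q b => by simp only [Prod.fst_add, Prod.snd_add, ρ.D_add_u, ρ.E_add_s]; abel)
    (fun c p b => by simp only [Prod.smul_fst, Prod.smul_snd, ρ.D_smul_u, ρ.E_smul_s, smul_add])
    (fun p b b' => by simp only [ρ.D_add_b, ρ.E_add_b]; abel)
    (fun c p b => by simp only [ρ.D_smul_b, ρ.E_smul_b, smul_add])
  op_op r m p q b b' v := by
    have hDD := LinearMap.congr_fun (ρ.comm_DD p.1 r b q.1 m b') v
    have hDE := LinearMap.congr_fun (ρ.comm_DE p.1 r b q.2 m b') v
    have hED := LinearMap.congr_fun (ρ.comm_DE q.1 m b' p.2 r b) v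
    have hEE := LinearMap.congr_fun (ρ.comm_EE p.2 r b q.2 m b') v
    have hE_sub : ∀ s s' : S, ∀ k c, ρ.E (s - s') k c = ρ.E s k c - ρ.E s' k c := by
      intro s s' k c
      rw [eq_sub_iff_add_eq, ← ρ.E_add_s, sub_add_cancel]
    rw [add_comm m r] at hDE
    rw [mul_comm b' b] at hED
    simp only [Ring.lie_def, LinearMap.sub_apply, Module.End.mul_apply, LinearMap.smul_apply,
      LinearMap.zero_apply] at hDD hDE hED hEE
    simp only [LinearMap.mk₂_apply, degPairing_apply, Prod.fst_sub, Prod.snd_sub, Prod.smul_fst,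
      Prod.smul_snd, LinearMap.add_apply, map_add, hE_sub, ρ.E_smul_s, LinearMap.sub_apply,
      LinearMap.smul_apply, ← hDD, ← hDE, ← hED, sub_eq_zero.1 hEE]
    abel

lemma toLoopRep_op (r : Fin n → ℤ) (p : (Fin n → ℂ) × S) (b : B) :
    ρ.toLoopRep.op r p b = ρ.D p.1 r b + ρ.E p.2 r b := rfl

lemma toLoopRep_op_left (r : Fin n → ℤ) (u : Fin n → ℂ) (b : B) :
    ρ.toLoopRep.op r (u, 0) b = ρ.D u r b := by
  have h : ρ.E 0 r b = 0 := by simpa using ρ.E_smul_s 0 0 r b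
  simp [toLoopRep_op, h]

lemma toLoopRep_op_right (r : Fin n → ℤ) (s : S) (b : B) :
    ρ.toLoopRep.op r (0, s) b = ρ.E s r b := by
  have h : ρ.D 0 r b = 0 := by simpa using ρ.D_smul_u 0 0 r b
  simp [toLoopRep_op, h]

lemma invariant_toLoopRep_iff {U : Submodule ℂ V} : ρ.toLoopRep.Invariant U ↔ ρ.Invariant U := by
  refine ⟨fun hU => ⟨fun u r b => ?_, fun s m b => ?_⟩,
    fun hU r p b v hv => add_mem (hU.1 _ _ _ _ hv) (hU.2 _ _ _ _ hv)⟩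
  · exact ρ.toLoopRep_op_left r u b ▸ hU r (u, 0) b
  · exact ρ.toLoopRep_op_right m s b ▸ hU m (0, s) b

/-- The character of the parameter space corresponding to the weight `(lam, c)`. -/
def weightChar (lam : Fin n → ℂ) (c : S →ₗ[ℂ] ℂ) : (Fin n → ℂ) × S →ₗ[ℂ] ℂ :=
  (Fintype.linearCombination ℂ lam).coprod c

lemma weightSpace_eq (lam : Fin n → ℂ) (c : S →ₗ[ℂ] ℂ) :
    ρ.weightSpace lam c = ρ.toLoopRep.weightSpace (weightChar lam c) := by
  have hleft : ∀ u, weightChar lam c (u, 0) = pairCC u lam := by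
    simp [pairCC, weightChar, Fintype.linearCombination_apply]
  have hright : ∀ s, weightChar lam c (0, s) = c s := by
    simp [weightChar]
  ext v
  rw [LoopRep.mem_weightSpace]
  constructor
  · rintro ⟨hD, hE⟩ ⟨u, s⟩
    have hsplit : ((u, s) : (Fin n → ℂ) × S) = (u, 0) + (0, s) := by simp
    rw [toLoopRep_op, LinearMap.add_apply, hD, hE, ← hleft u, ← hright s, ← add_smul, ← map_add,
      ← hsplit]
  · intro h
    exact ⟨fun u => by rw [← toLoopRep_op_left, h, hleft],
      fun s => by rw [← toLoopRep_op_right, h, hright]⟩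

lemma exists_eq_weightChar (ψ : (Fin n → ℂ) × S →ₗ[ℂ] ℂ) : ∃ lam c, ψ = weightChar lam c := by
  refine ⟨fun i => ψ (Pi.single i 1, 0), ψ.comp (LinearMap.inr ℂ _ _), ?_⟩
  ext <;> simp [weightChar, Fintype.linearCombination_apply, Pi.single_apply]

end ToLoopRep

section HarishChandra

lemma HarishChandra.finiteDimensional_weightSpace (hhc : ρ.HarishChandra)
    (ψ : (Fin n → ℂ) × S →ₗ[ℂ] ℂ) : FiniteDimensional ℂ (ρ.toLoopRep.weightSpace ψ) := by
  obtain ⟨lam, c, rfl⟩ := exists_eq_weightChar ψ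
  rw [← weightSpace_eq]
  exact hhc.2 lam c

lemma IsWeightModule.exists_weightSpace_ne_bot [Nontrivial V] (hρ : ρ.IsWeightModule) :
    ∃ χ, ρ.toLoopRep.weightSpace χ ≠ ⊥ := by
  by_contra! h
  simp only [IsWeightModule, weightSpace_eq, h, iSup_bot] at hρ
  exact bot_ne_top hρ

lemma HarishChandra.exists_op_ne_zero (hhc : ρ.HarishChandra) (hnub : ¬ ρ.UniformlyBounded) :
    ∃ r p b, ρ.toLoopRep.op r p b ≠ 0 := by
  by_contra! h
  have htop : ρ.toLoopRep.weightSpace 0 = ⊤ :=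
    top_le_iff.1 fun v _ => LoopRep.mem_weightSpace.2 fun p => by simp [h]
  have := hhc.finiteDimensional_weightSpace 0
  have : FiniteDimensional ℂ V := Module.Finite.equiv ((LinearEquiv.ofEq _ _ htop).trans
    Submodule.topEquiv)
  exact hnub ⟨finrank ℂ V, fun lam c => (Submodule.rank_le _).trans_eq (finrank_eq_rank ℂ V).symm⟩

lemma HarishChandra.exists_lt_finrank_weightSpace (hhc : ρ.HarishChandra)
    (hnub : ¬ ρ.UniformlyBounded) {χ : (Fin n → ℂ) × S →ₗ[ℂ] ℂ}
    (hspan : ⨆ x, ρ.toLoopRep.weightSpace (χ + degPairing n S x) = ⊤) (M : ℕ) :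
    ∃ x, M < finrank ℂ (ρ.toLoopRep.weightSpace (χ + degPairing n S x)) := by
  by_contra! h
  refine hnub ⟨M, fun lam c => ?_⟩
  have := hhc.finiteDimensional_weightSpace (weightChar lam c)
  rw [weightSpace_eq, ← finrank_eq_rank, Nat.cast_le]
  by_cases hx : ∃ x, χ + degPairing n S x = weightChar lam c
  · obtain ⟨x, hx⟩ := hx
    exact hx ▸ h x
  · rw [LoopRep.weightSpace_eq_bot_of_ne hspan (not_exists.1 hx), finrank_bot]
    exact Nat.zero_le _

lemma exists_isIrredHC (hhc : ρ.HarishChandra) (hirr : ρ.IsIrreducible)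
    (hnub : ¬ ρ.UniformlyBounded) :
    ∃ χ, ρ.toLoopRep.IsIrredHC χ ∧
      ∀ M : ℕ, ∃ x, M < finrank ℂ (ρ.toLoopRep.weightSpace (χ + degPairing n S x)) := by
  obtain ⟨w, hw⟩ := hirr.1
  have : Nontrivial V := ⟨w, 0, hw⟩
  obtain ⟨χ, hχ⟩ := hhc.1.exists_weightSpace_ne_bot
  have hirr' : ∀ U, ρ.toLoopRep.Invariant U → U = ⊥ ∨ U = ⊤ := fun U hU =>
    hirr.2 U (ρ.invariant_toLoopRep_iff.1 hU)
  have hspan := LoopRep.iSup_weightSpace_eq_top hirr' hχ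
  refine ⟨χ, ⟨degPairing_injective, hirr', hhc.finiteDimensional_weightSpace, hspan,
    fun v hv => ?_, this⟩, hhc.exists_lt_finrank_weightSpace hnub hspan⟩
  by_contra hv0
  obtain ⟨r, p, b, hne⟩ := hhc.exists_op_ne_zero hnub
  exact hne (LoopRep.op_eq_zero_of_forall_apply_eq_zero hirr' hv0 hv r p b)

lemma exists_isHighest [FiniteDimensional ℂ S] [Algebra.FiniteType ℂ B] (hn : 2 ≤ n)
    (hhc : ρ.HarishChandra) (hirr : ρ.IsIrreducible) (hnub : ¬ ρ.UniformlyBounded) :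
    ∃ χ deg u₀ β, ρ.toLoopRep.IsHighest χ deg u₀ ∧ deg β = 1 := by
  obtain ⟨χ, hχ, hub⟩ := exists_isIrredHC hhc hirr hnub
  exact hχ.exists_isHighest (rankCondition_degPairing hn) (exists_degPairing_eq S) hub

end HarishChandra

section Decomposition

variable {deg : (Fin n → ℤ) →+ ℤ} {β : Fin n → ℤ}

lemma deg_zsmul (hβ : deg β = 1) (d : ℤ) : deg (d • β) = d := by
  rw [map_zsmul, hβ, smul_eq_mul, mul_one]

lemma isDirectSumDecomp_ker (hβ : deg β = 1) : IsDirectSumDecomp deg.ker β := by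
  refine ⟨fun m => ⟨m - deg m • β, ?_, deg m, (sub_add_cancel _ _).symm⟩, fun d hd => ?_⟩
  · rw [AddMonoidHom.mem_ker, map_sub, deg_zsmul hβ, sub_self]
  · rwa [AddMonoidHom.mem_ker, deg_zsmul hβ] at hd

lemma deg_pos_of_posDeg (hβ : deg β = 1) {r : Fin n → ℤ} (hr : posDeg deg.ker β r) : 0 < deg r := by
  obtain ⟨a, ha, d, hd, rfl⟩ := hr
  rw [map_add, AddMonoidHom.mem_ker.1 ha, deg_zsmul hβ, zero_add]
  exact hd

end Decomposition

section HighestWeight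

variable {χ : (Fin n → ℂ) × S →ₗ[ℂ] ℂ} {deg : (Fin n → ℤ) →+ ℤ} {u₀ : (Fin n → ℂ) × S}
  {z : V}

lemma isHWVector_of_isHighest (hH : ρ.toLoopRep.IsHighest χ deg u₀) {β : Fin n → ℤ}
    (hβ : deg β = 1) (hz : z ∈ ρ.toLoopRep.weightSpace χ) (hz0 : z ≠ 0) :
    ρ.IsHWVector deg.ker β z := by
  have hkill : ∀ r, posDeg deg.ker β r → ρ.toLoopRep.Kills r z := fun r hr =>
    hH.kills_of_pos (hH.weightSpace_le_level_zero 0 (by simpa using hz))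
      (by simpa using deg_pos_of_posDeg hβ hr)
  obtain ⟨lam, c, rfl⟩ := exists_eq_weightChar χ
  refine ⟨hz0, ⟨lam, c, by rwa [ρ.weightSpace_eq]⟩, fun u r b hr => ?_, fun s r b hr => ?_,
    fun U hU hzU => hH.eq_top_of_mem (ρ.invariant_toLoopRep_iff.2 hU) hzU hz0⟩
  · rw [← ρ.toLoopRep_op_left, hkill r hr]
  · rw [← ρ.toLoopRep_op_right, hkill r hr]

lemma hwSpace_le_level (hH : ρ.toLoopRep.IsHighest χ deg u₀)
    (hz : z ∈ ρ.toLoopRep.weightSpace χ) :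
    ρ.hwSpace deg.ker z ≤ ρ.toLoopRep.level χ u₀ 0 := by
  refine sInf_le ⟨hH.weightSpace_le_level_zero 0 (by simpa using hz), fun u r hr b x hx => ?_,
    fun s r hr b x hx => ?_⟩
  · rw [← ρ.toLoopRep_op_left]
    exact hH.op_mem_level hx _ _ (by simp [AddMonoidHom.mem_ker.1 hr])
  · rw [← ρ.toLoopRep_op_right]
    exact hH.op_mem_level hx _ _ (by simp [AddMonoidHom.mem_ker.1 hr])

lemma mem_hwSpace (K : AddSubgroup (Fin n → ℤ)) : z ∈ ρ.hwSpace K z :=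
  Submodule.mem_sInf.2 fun _ hU => hU.1

lemma eq_bot_or_eq_hwSpace (hH : ρ.toLoopRep.IsHighest χ deg u₀)
    (hz : z ∈ ρ.toLoopRep.weightSpace χ) {U : Submodule ℂ V} (hU : U ≤ ρ.hwSpace deg.ker z)
    (hUK : ρ.InvariantK deg.ker U) : U = ⊥ ∨ U = ρ.hwSpace deg.ker z := by
  refine or_iff_not_imp_left.2 fun h0 => le_antisymm hU ?_
  have hle := hwSpace_le_level hH hz
  rw [hH.eq_level_zero_of_stable (hU.trans hle) (fun r hr p b v hv =>
    add_mem (hUK.1 _ r hr b v hv) (hUK.2 _ r hr b v hv)) h0]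
  exact hle

end HighestWeight

section Reduction

lemma isSinglePointEval_of_toLoopRep {η : B →ₐ[ℂ] ℂ}
    (hη : ∀ r p b, ρ.toLoopRep.op r p b = η b • ρ.toLoopRep.op r p 1) : ρ.IsSinglePointEval := by
  refine ⟨η, fun u r b => ?_, fun s m b => ?_⟩
  · rw [← ρ.toLoopRep_op_left, hη, ρ.toLoopRep_op_left]
  · rw [← ρ.toLoopRep_op_right, hη, ρ.toLoopRep_op_right]

variable {f : S →ₗ[ℂ] ℂ}

lemma E_eq_smul (hf : ∀ s, f s = 0 → ∀ m b, ρ.E s m b = 0) {s₀ : S} (hs₀ : f s₀ ≠ 0) (s : S)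
    (m : Fin n → ℤ) (b : B) : ρ.E s m b = (f s / f s₀) • ρ.E s₀ m b := by
  have h := ρ.E_add_s (s - (f s / f s₀) • s₀) ((f s / f s₀) • s₀) m b
  have hdiff := hf (s - (f s / f s₀) • s₀) (by simp [hs₀]) m b
  rwa [sub_add_cancel, hdiff, zero_add, ρ.E_smul_s] at h

lemma IsIrreducible.exists_reduction (hirr : ρ.IsIrreducible)
    (hf : ∀ s, f s = 0 → ∀ m b, ρ.E s m b = 0) :
    ∃ S0 : Submodule ℂ S,
      (∀ s ∈ S0, ∀ (m : Fin n → ℤ) (b : B), ρ.E s m b = 0) ∧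
      Module.finrank ℂ (S ⧸ S0) ≤ 1 ∧
      ((S0 = ⊤ →
        (∃ x : V, x ≠ 0) ∧
        ∀ U : Submodule ℂ V,
          (∀ u r b, ∀ x ∈ U, ρ.D u r b x ∈ U) → U = ⊥ ∨ U = ⊤) ∧
       (∀ s₀ : S, s₀ ∉ S0 →
        (∃ x : V, x ≠ 0) ∧
        ∀ U : Submodule ℂ V,
          ((∀ u r b, ∀ x ∈ U, ρ.D u r b x ∈ U) ∧
            (∀ (m : Fin n → ℤ) (b : B), ∀ x ∈ U, ρ.E s₀ m b x ∈ U)) →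
          U = ⊥ ∨ U = ⊤)) := by
  refine ⟨LinearMap.ker f, hf, ?_, fun htop => ⟨hirr.1, fun U hU => hirr.2 U ⟨hU, ?_⟩⟩,
    fun s₀ hs₀ => ⟨hirr.1, fun U hU => hirr.2 U ⟨hU.1, ?_⟩⟩⟩
  · rw [f.quotKerEquivRange.finrank_eq]
    exact (Submodule.finrank_le _).trans (finrank_self ℂ).le
  · intro s m b x _
    have hs : s ∈ LinearMap.ker f := htop ▸ Submodule.mem_top
    rw [hf s hs]
    exact U.zero_mem
  · intro s m b x hx
    rw [E_eq_smul hf hs₀]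
    exact U.smul_mem _ (hU.2 m b x hx)

end Reduction

end ExtWittRep

end LoopWitt

/-- For `n ≥ 2`, an irreducible Harish-Chandra `𝔏_{S,n}(B)`-module
with non-uniformly bounded weight spaces reduces to an irreducible module for `𝔏(B)` or
`Wₙ ⊗ B` (a subspace of `S` of codimension at most one acts trivially); as such it is a
single point evaluation module, and (up to a change of variables) it is an irreducible
highest weight module `L(K, β, Z)` for some triangular decomposition `ℤⁿ = K ⊕ ℤβ`. -/
theorem stmt14 {n : ℕ} (hn : 2 ≤ n) {S B V : Type*}
    [AddCommGroup S] [Module ℂ S] [FiniteDimensional ℂ S]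
    [CommRing B] [Algebra ℂ B] [Algebra.FiniteType ℂ B]
    [AddCommGroup V] [Module ℂ V]
    (ρ : ExtWittRep n S B V)
    (hhc : ρ.HarishChandra) (hirr : ρ.IsIrreducible) (hnub : ¬ ρ.UniformlyBounded) :
    -- reduction to `𝔏(B)` or `Wₙ ⊗ B`:
    (∃ S0 : Submodule ℂ S,
      (∀ s ∈ S0, ∀ (m : Fin n → ℤ) (b : B), ρ.E s m b = 0) ∧
      Module.finrank ℂ (S ⧸ S0) ≤ 1 ∧
      ((S0 = ⊤ →
        (∃ x : V, x ≠ 0) ∧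
        ∀ U : Submodule ℂ V,
          (∀ u r b, ∀ x ∈ U, ρ.D u r b x ∈ U) → U = ⊥ ∨ U = ⊤) ∧
       (∀ s₀ : S, s₀ ∉ S0 →
        (∃ x : V, x ≠ 0) ∧
        ∀ U : Submodule ℂ V,
          ((∀ u r b, ∀ x ∈ U, ρ.D u r b x ∈ U) ∧
            (∀ (m : Fin n → ℤ) (b : B), ∀ x ∈ U, ρ.E s₀ m b x ∈ U)) →
          U = ⊥ ∨ U = ⊤))) ∧
    -- single point evaluation:
    ρ.IsSinglePointEval ∧
    -- `V ≅ L(K, β, Z)`: a highest weight module with irreducible highest weight space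
    (∃ (K : AddSubgroup (Fin n → ℤ)) (β : Fin n → ℤ),
      IsDirectSumDecomp K β ∧
      ∃ z : V, ρ.IsHWVector K β z ∧
        ρ.hwSpace K z ≠ ⊥ ∧
        ∀ U : Submodule ℂ V, U ≤ ρ.hwSpace K z → ρ.InvariantK K U →
          U = ⊥ ∨ U = ρ.hwSpace K z) := by
  obtain ⟨χ, deg, u₀, β, hH, hβ⟩ := ExtWittRep.exists_isHighest hn hhc hirr hnub
  have := (ExtWittRep.rankCondition_degPairing (S := S) hn).nontrivial_ker deg
  obtain ⟨η, hη, hcentral⟩ := hH.exists_eval hβ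
  obtain ⟨z, hz, hz0⟩ := Submodule.exists_mem_ne_zero_of_ne_bot hH.weightSpace_ne_bot
  have hE : ∀ s, χ.comp (LinearMap.inr ℂ _ S) s = 0 → ∀ m b, ρ.E s m b = 0 := fun s hs m b => by
    rw [← ρ.toLoopRep_op_right]
    exact hcentral (0, s) (fun k => by simp [pairC]) hs m b
  exact ⟨hirr.exists_reduction hE, ExtWittRep.isSinglePointEval_of_toLoopRep hη, deg.ker, β,
    ExtWittRep.isDirectSumDecomp_ker hβ, z, ExtWittRep.isHWVector_of_isHighest hH hβ hz hz0,
    fun h => hz0 ((Submodule.mem_bot ℂ).1 (h ▸ ExtWittRep.mem_hwSpace deg.ker)),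
    fun U hU hUK => ExtWittRep.eq_bot_or_eq_hwSpace hH hz hU hUK⟩
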